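/- Fix n ≥ 2 and 1 ≤ k ≤ n−1, and let L_k be the modular non-distributive lattice obtained from the distributive lattice D = I(P) (where P is the sum of a chain with an isolated element, with elements of D labeled x_1, …, x_n, y_1, …, y_n so that x_{i+1} ∧ y_{i+1} = x_i ∨ y_i covers x_i and y_i) by inserting one extra element z with x_k ∨ y_k = x_{k+1} ∧ y_{k+1} < z being a new atom of the interval, i.e., z lies strictly between x_k ∨ y_k and x_{k+1} ∧ y_{k+1} making a diamond. Then for the join-meet ideal I = I_{L_k} ⊂ S = K[x_1, …, x_n, y_1, …, y_n, z], the Castelnuovo–Mumford regularity satisfies reg(S/I) = reg(S/in_<(I)) = 3, where in_<(I) is the initial ideal with respect to the lexicographic order induced by x_1 > ⋯ > x_n > y_1 > ⋯ > y_n > z. -/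

import Mathlib

open MvPolynomial

/-- The join-meet ideal `I_L` of a finite lattice `L`, generated by
`x_a x_b − x_{a∧b} x_{a∨b}` for incomparable `a, b ∈ L`. -/
noncomputable def joinMeetIdeal (K : Type*) [Field K] (L : Type*) [Lattice L] :
    Ideal (MvPolynomial L K) :=
  Ideal.span {f | ∃ a b : L, ¬ a ≤ b ∧ ¬ b ≤ a ∧ f = X a * X b - X (a ⊓ b) * X (a ⊔ b)}

def mdeg {σ : Type*} (m : σ →₀ ℕ) : ℕ := m.sum fun _ e => e

/-- A minimal graded free resolution
`⋯ → F_{i+1} → F_i → ⋯ → F_0 → S/I → 0` of `S/I` over `S = K[x_s : s ∈ σ]`.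
`F_i` is free with finite homogeneous basis `B i`, the basis element `b : B i` having
degree `deg i b`; the differentials are graded and have entries in the graded maximal
ideal (minimality); `ε` is a lift of the augmentation `F_0 → S/I`. -/
structure MinGradedFreeRes (K : Type*) [Field K] (σ : Type*) (I : Ideal (MvPolynomial σ K)) where
  B : ℕ → Type
  finB : ∀ i, Finite (B i)
  deg : ∀ i, B i → ℕ
  d : ∀ i, ((B (i + 1)) →₀ MvPolynomial σ K) →ₗ[MvPolynomial σ K] ((B i) →₀ MvPolynomial σ K)
  ε : ((B 0) →₀ MvPolynomial σ K) →ₗ[MvPolynomial σ K] MvPolynomial σ K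
  ε_homog : ∀ b : B 0, (ε (Finsupp.single b 1)).IsHomogeneous (deg 0 b)
  surj : ∀ s : MvPolynomial σ K, ∃ t, ε t - s ∈ I
  exact0 : LinearMap.range (d 0) = Submodule.comap ε (I : Submodule _ _)
  exact : ∀ i, LinearMap.range (d (i + 1)) = LinearMap.ker (d i)
  homog : ∀ i (b : B (i + 1)) (c : B i),
    ∀ m ∈ ((d i (Finsupp.single b 1)) c).support, mdeg m + deg i c = deg (i + 1) b
  minimal : ∀ i (b : B (i + 1)) (c : B i), coeff 0 ((d i (Finsupp.single b 1)) c) = 0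

/-- The graded Betti number `β_{i,j}(S/I)` read off from a minimal graded free resolution:
the number of basis elements of `F_i` of degree `j`. -/
noncomputable def MinGradedFreeRes.betti {K : Type*} [Field K] {σ : Type*}
    {I : Ideal (MvPolynomial σ K)} (F : MinGradedFreeRes K σ I) (i j : ℕ) : ℕ :=
  Nat.card {b : F.B i // F.deg i b = j}

/-- `reg(S/I) = r`: in any minimal graded free resolution all shifts satisfy `j - i ≤ r`,
with equality attained, i.e. `max { j - i : β_{i,j}(S/I) ≠ 0 } = r`. -/
def RegEq {K : Type*} [Field K] {σ : Type*} (I : Ideal (MvPolynomial σ K)) (r : ℕ) : Prop :=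
  Nonempty (MinGradedFreeRes K σ I) ∧
    ∀ F : MinGradedFreeRes K σ I,
      (∀ i (b : F.B i), F.deg i b ≤ i + r) ∧ (∃ i, ∃ b : F.B i, F.deg i b = i + r)

set_option linter.unusedSectionVars false
set_option linter.unusedVariables false
namespace RegLk
section framework
universe u

variable {S : Type u} [CommRing S] {G : ℤ → AddSubgroup S}

/-- degree `j` part of the graded free module with basis degrees `deg`. -/
def frGr (G : ℤ → AddSubgroup S) {ι : Type} (deg : ι → ℤ) (j : ℤ) : AddSubgroup (ι →₀ S) where
  carrier := {f | ∀ b, f b ∈ G (j - deg b)}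
  add_mem' := fun ha hb b => add_mem (ha b) (hb b)
  zero_mem' := fun _ => zero_mem _
  neg_mem' := fun ha b => neg_mem (ha b)

theorem mem_frGr {ι : Type} {deg : ι → ℤ} {j : ℤ} {f : ι →₀ S} :
    f ∈ frGr G deg j ↔ ∀ b, f b ∈ G (j - deg b) := Iff.rfl

/-- compatibility of a family of subgroups with the grading of the ring -/
def GS (G : ℤ → AddSubgroup S) {M : Type u} [AddCommGroup M] [Module S M]
    (gr : ℤ → AddSubgroup M) : Prop :=
  ∀ (d j : ℤ) (p : S) (m : M), p ∈ G d → m ∈ gr j → p • m ∈ gr (d + j)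

theorem frGr_GS [SetLike.GradedMonoid G] {ι : Type} (deg : ι → ℤ) : GS G (frGr G deg) := by
  intro d j p f hp hf b
  have := SetLike.mul_mem_graded hp (hf b)
  rw [show d + j - deg b = d + (j - deg b) by ring]
  simpa using this

theorem single_mem_frGr {ι : Type} {deg : ι → ℤ} {j : ℤ} (b : ι) {p : S}
    (hp : p ∈ G (j - deg b)) : Finsupp.single b p ∈ frGr G deg j := by
  classical
  intro c
  by_cases h : b = c
  · subst h; simpa using hp
  · rw [Finsupp.single_apply, if_neg h]; exact zero_mem _

/-- kernel of a linear map out of a graded module -/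
def kerGr {M N : Type u} [AddCommGroup M] [Module S M] [AddCommGroup N] [Module S N]
    (gr : ℤ → AddSubgroup M) (f : M →ₗ[S] N) : ℤ → AddSubgroup M :=
  fun j => gr j ⊓ (LinearMap.ker f).toAddSubgroup

theorem mem_kerGr {M N : Type u} [AddCommGroup M] [Module S M] [AddCommGroup N] [Module S N]
    {gr : ℤ → AddSubgroup M} {f : M →ₗ[S] N} {j : ℤ} {m : M} :
    m ∈ kerGr gr f j ↔ m ∈ gr j ∧ f m = 0 := Iff.rfl

theorem kerGr_GS {M N : Type u} [AddCommGroup M] [Module S M] [AddCommGroup N] [Module S N]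
    {gr : ℤ → AddSubgroup M} (h : GS G gr) (f : M →ₗ[S] N) : GS G (kerGr gr f) := by
  intro d j p m hp hm
  rw [mem_kerGr] at hm ⊢
  exact ⟨h d j p m hp hm.1, by rw [map_smul, hm.2, smul_zero]⟩

/-- homogeneous generating family -/
def IsCover (G : ℤ → AddSubgroup S) {M : Type u} [AddCommGroup M] [Module S M]
    (gr : ℤ → AddSubgroup M) {ι : Type} (deg : ι → ℤ) (e : ι → M) : Prop :=
  (∀ b, e b ∈ gr (deg b)) ∧
    ∀ j, ∀ m ∈ gr j, ∃ f ∈ frGr G deg j, Finsupp.linearCombination S e f = m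

/-- `P i A r`: the first `i + 1` steps of a graded free resolution of `A` can be chosen with
generators of the `l`-th step in degrees at most `l + r`. -/
def P (G : ℤ → AddSubgroup S) :
    ℕ → {M : Type u} → [AddCommGroup M] → [Module S M] → (ℤ → AddSubgroup M) → ℤ → Prop
  | 0, M, _, _, A, r => ∃ (ι : Type) (deg : ι → ℤ) (e : ι → M),
      (∀ b, deg b ≤ r) ∧ IsCover G A deg e
  | i + 1, M, _, _, A, r => ∃ (ι : Type) (deg : ι → ℤ) (e : ι → M),
      (∀ b, deg b ≤ r) ∧ IsCover G A deg e ∧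
      P G i (kerGr (frGr G deg) (Finsupp.linearCombination S e)) (r + 1)

section
variable {M : Type u} [AddCommGroup M] [Module S M] {N : Type u} [AddCommGroup N] [Module S N]
  {Q : Type u} [AddCommGroup Q] [Module S Q]
  {A : ℤ → AddSubgroup M} {B : ℤ → AddSubgroup N} {C : ℤ → AddSubgroup Q}

theorem lc_mem (hG : GS G A) {ι : Type} {deg : ι → ℤ} {e : ι → M}
    (he : ∀ b, e b ∈ A (deg b)) {j : ℤ} {f : ι →₀ S} (hf : f ∈ frGr G deg j) :
    Finsupp.linearCombination S e f ∈ A j := by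
  rw [Finsupp.linearCombination_apply, Finsupp.sum]
  refine sum_mem fun b _ => ?_
  have := hG _ _ _ _ (hf b) (he b)
  simpa using this

theorem lc_map (g : M →ₗ[S] N) {ι : Type} (e : ι → M) (f : ι →₀ S) :
    g (Finsupp.linearCombination S e f) = Finsupp.linearCombination S (fun b => g (e b)) f := by
  rw [Finsupp.apply_linearCombination]; rfl

end

theorem P_mono : ∀ (i : ℕ) {M : Type u} [AddCommGroup M] [Module S M] (A : ℤ → AddSubgroup M)
    (r r' : ℤ), r ≤ r' → P G i A r → P G i A r'
  | 0, M, _, _, A, r, r', h, ⟨ι, deg, e, h1, h2⟩ => ⟨ι, deg, e, fun b => (h1 b).trans h, h2⟩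
  | i + 1, M, _, _, A, r, r', h, ⟨ι, deg, e, h1, h2, h3⟩ =>
    ⟨ι, deg, e, fun b => (h1 b).trans h, h2, P_mono i _ _ _ (by omega) h3⟩

theorem P_zero_mod : ∀ (i : ℕ) {M : Type u} [AddCommGroup M] [Module S M] (A : ℤ → AddSubgroup M)
    (r : ℤ), (∀ j, ∀ a ∈ A j, a = 0) → P G i A r := by
  intro i
  induction i with
  | zero =>
    intro M _ _ A r h
    exact ⟨Empty, Empty.elim, fun x => x.elim, fun x => x.elim, fun x => x.elim,
      fun j m hm => ⟨0, zero_mem _, by simp [h j m hm]⟩⟩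
  | succ i ih =>
    intro M _ _ A r h
    refine ⟨Empty, Empty.elim, fun x => x.elim, fun x => x.elim, ⟨fun x => x.elim,
      fun j m hm => ⟨0, zero_mem _, by simp [h j m hm]⟩⟩, ih _ _ ?_⟩
    intro j a _
    exact Finsupp.ext (fun x => x.elim)

section
variable {M : Type u} [AddCommGroup M] [Module S M] {N : Type u} [AddCommGroup N] [Module S N]
  {Q : Type u} [AddCommGroup Q] [Module S Q]
  {A : ℤ → AddSubgroup M} {B : ℤ → AddSubgroup N} {C : ℤ → AddSubgroup Q}

/-- short exact sequence, degreewise -/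
structure Ex (A : ℤ → AddSubgroup M) (B : ℤ → AddSubgroup N) (C : ℤ → AddSubgroup Q)
    (f : M →ₗ[S] N) (g : N →ₗ[S] Q) : Prop where
  f_mem : ∀ j, ∀ a ∈ A j, f a ∈ B j
  g_mem : ∀ j, ∀ b ∈ B j, g b ∈ C j
  inj : ∀ j, ∀ a ∈ A j, f a = 0 → a = 0
  zero : ∀ j, ∀ a ∈ A j, g (f a) = 0
  exact : ∀ j, ∀ b ∈ B j, g b = 0 → ∃ a ∈ A j, f a = b
  surj : ∀ j, ∀ c ∈ C j, ∃ b ∈ B j, g b = c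

theorem lc_sum {α β : Type} (e : α → M) (e' : β → M)
    (f : α ⊕ β →₀ S) : Finsupp.linearCombination S (Sum.elim e e') f =
      Finsupp.linearCombination S e (Finsupp.sumFinsuppLEquivProdFinsupp S f).1 +
      Finsupp.linearCombination S e' (Finsupp.sumFinsuppLEquivProdFinsupp S f).2 := by
  have : Finsupp.linearCombination S (Sum.elim e e') =
      ((Finsupp.linearCombination S e).coprod (Finsupp.linearCombination S e')) ∘ₗ
      (Finsupp.sumFinsuppLEquivProdFinsupp (M := S) S).toLinearMap := by
    ext (_ | _) <;> simp
  rw [this]; simp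

/-- degreewise isomorphism -/
theorem iso_ker (f : M →ₗ[S] N) (hA : GS G A) (hinj : ∀ j, ∀ a ∈ A j, f a = 0 → a = 0)
    {ι : Type} {deg : ι → ℤ} {e : ι → M} (he : ∀ b, e b ∈ A (deg b)) :
    kerGr (frGr G deg) (Finsupp.linearCombination S (fun b => f (e b))) =
      kerGr (frGr G deg) (Finsupp.linearCombination S e) := by
  funext j
  ext x
  rw [mem_kerGr, mem_kerGr, ← lc_map]
  refine and_congr_right fun hx => ⟨fun h => hinj j _ (lc_mem hA he hx) h, fun h => by rw [h, map_zero]⟩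

theorem P_iso (i : ℕ) (r : ℤ) (f : M →ₗ[S] N) (hA : GS G A)
    (hf : ∀ j, ∀ a ∈ A j, f a ∈ B j)
    (hinj : ∀ j, ∀ a ∈ A j, f a = 0 → a = 0) (hs : ∀ j, ∀ b ∈ B j, ∃ a ∈ A j, f a = b) :
    P G i A r ↔ P G i B r := by
  have c1 : ∀ {ι : Type} {deg : ι → ℤ} {e : ι → M}, IsCover G A deg e →
      IsCover G B deg (fun b => f (e b)) := by
    intro ι deg e h
    refine ⟨fun b => hf _ _ (h.1 b), fun j m hm => ?_⟩
    obtain ⟨a, ha, rfl⟩ := hs j m hm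
    obtain ⟨x, hx, rfl⟩ := h.2 j a ha
    exact ⟨x, hx, by rw [lc_map]⟩
  have c2 : ∀ {ι : Type} {deg : ι → ℤ} {e : ι → M}, (∀ b, e b ∈ A (deg b)) →
      IsCover G B deg (fun b => f (e b)) → IsCover G A deg e := by
    intro ι deg e he h
    refine ⟨he, fun j m hm => ?_⟩
    obtain ⟨x, hx, hx'⟩ := h.2 j (f m) (hf _ _ hm)
    refine ⟨x, hx, ?_⟩
    rw [← lc_map] at hx'
    have := hinj j _ (sub_mem (lc_mem hA he hx) hm) (by rw [map_sub, hx', sub_self])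
    exact sub_eq_zero.1 this
  have c3 : ∀ {ι : Type} {deg : ι → ℤ} {e : ι → N}, (∀ b, e b ∈ B (deg b)) →
      ∃ e' : ι → M, (∀ b, e' b ∈ A (deg b)) ∧ e = fun b => f (e' b) := by
    intro ι deg e he
    choose e' h1 h2 using fun b => hs _ _ (he b)
    exact ⟨e', h1, funext fun b => (h2 b).symm⟩
  cases i with
  | zero =>
    constructor
    · rintro ⟨ι, deg, e, h1, h2⟩
      exact ⟨ι, deg, _, h1, c1 h2⟩
    · rintro ⟨ι, deg, e, h1, h2⟩
      obtain ⟨e', h3, rfl⟩ := c3 h2.1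
      exact ⟨ι, deg, e', h1, c2 h3 h2⟩
  | succ i =>
    constructor
    · rintro ⟨ι, deg, e, h1, h2, h3⟩
      refine ⟨ι, deg, _, h1, c1 h2, ?_⟩
      rw [iso_ker f hA hinj h2.1]; exact h3
    · rintro ⟨ι, deg, e, h1, h2, h4⟩
      obtain ⟨e', h3, rfl⟩ := c3 h2.1
      refine ⟨ι, deg, e', h1, c2 h3 h2, ?_⟩
      rw [iso_ker f hA hinj h3] at h4; exact h4

theorem ext_key {f : M →ₗ[S] N} {g : N →ₗ[S] Q} (hGA : GS G A) (hGB : GS G B)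
    (E : Ex A B C f g) {α β : Type} {dα : α → ℤ} {dβ : β → ℤ}
    {e : α → M} {e' : β → Q} (hA : IsCover G A dα e) (hC : IsCover G C dβ e') :
    ∃ q : α ⊕ β → N, IsCover G B (Sum.elim dα dβ) q ∧
      ∃ (f' : (α →₀ S) →ₗ[S] (α ⊕ β →₀ S)) (g' : (α ⊕ β →₀ S) →ₗ[S] (β →₀ S)),
      Ex (kerGr (frGr G dα) (Finsupp.linearCombination S e))
        (kerGr (frGr G (Sum.elim dα dβ)) (Finsupp.linearCombination S q))
        (kerGr (frGr G dβ) (Finsupp.linearCombination S e')) f' g' := by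
  choose l hl hl' using fun b => E.surj _ _ (hC.1 b)
  have hg : ∀ x, g (Finsupp.linearCombination S l x) = Finsupp.linearCombination S e' x := by
    intro x; rw [lc_map]
    congr 2; funext b; exact hl' b
  have hgf : ∀ x j, x ∈ frGr G dα j →
      g (Finsupp.linearCombination S (fun a => f (e a)) x) = 0 := by
    intro x j hx
    rw [← lc_map]; exact E.zero j _ (lc_mem hGA hA.1 hx)
  refine ⟨Sum.elim (fun a => f (e a)) l, ⟨?_, ?_⟩,
    (Finsupp.sumFinsuppLEquivProdFinsupp (M := S) S).symm.toLinearMap ∘ₗ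
      LinearMap.inl S (α →₀ S) (β →₀ S),
    LinearMap.snd S (α →₀ S) (β →₀ S) ∘ₗ
      (Finsupp.sumFinsuppLEquivProdFinsupp (M := S) S).toLinearMap, ?_⟩
  · rintro (a | b)
    · exact E.f_mem _ _ (hA.1 a)
    · exact hl b
  · intro j m hm
    obtain ⟨fc, hfc, hfc'⟩ := hC.2 j _ (E.g_mem j m hm)
    have h1 : m - Finsupp.linearCombination S l fc ∈ B j := sub_mem hm (lc_mem hGB hl hfc)
    obtain ⟨a, ha, ha'⟩ := E.exact j _ h1 (by rw [map_sub, hg, hfc', sub_self])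
    obtain ⟨fa, hfa, hfa'⟩ := hA.2 j a ha
    refine ⟨(Finsupp.sumFinsuppLEquivProdFinsupp S).symm (fa, fc), ?_, ?_⟩
    · rintro (x | x)
      · rw [Finsupp.sumFinsuppLEquivProdFinsupp_symm_inl]; exact hfa x
      · rw [Finsupp.sumFinsuppLEquivProdFinsupp_symm_inr]; exact hfc x
    · rw [lc_sum, LinearEquiv.apply_symm_apply]
      show Finsupp.linearCombination S _ fa + Finsupp.linearCombination S l fc = m
      rw [← lc_map, hfa', ha']; abel
  · refine ⟨?_, ?_, ?_, ?_, ?_, ?_⟩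
    · intro j a ha
      rw [mem_kerGr] at ha ⊢
      obtain ⟨ha, ha'⟩ := ha
      refine ⟨?_, ?_⟩
      · rintro (x | x)
        · rw [LinearMap.comp_apply, LinearEquiv.coe_coe,
            Finsupp.sumFinsuppLEquivProdFinsupp_symm_inl]; exact ha x
        · rw [LinearMap.comp_apply, LinearEquiv.coe_coe,
            Finsupp.sumFinsuppLEquivProdFinsupp_symm_inr]; exact zero_mem _
      · rw [lc_sum]
        simp only [LinearMap.comp_apply, LinearEquiv.coe_coe, LinearEquiv.apply_symm_apply]
        simp only [LinearMap.inl_apply, map_zero, add_zero]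
        rw [← lc_map, ha', map_zero]
    · intro j b hb
      rw [mem_kerGr] at hb ⊢
      obtain ⟨hb, hb1⟩ := hb
      rw [lc_sum] at hb1
      refine ⟨fun x => hb (Sum.inr x), ?_⟩
      have := congrArg g hb1
      rw [map_add, hgf _ j (fun x => hb (Sum.inl x)), zero_add, hg, map_zero] at this
      exact this
    · intro j a _ h
      rw [LinearMap.comp_apply, LinearEquiv.coe_coe, LinearEquiv.map_eq_zero_iff] at h
      simpa using h
    · intro j a _
      simp
    · intro j b hb hz
      rw [mem_kerGr] at hb
      obtain ⟨hb, hb1⟩ := hb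
      have hz' : (Finsupp.sumFinsuppLEquivProdFinsupp S b).2 = 0 := hz
      refine ⟨(Finsupp.sumFinsuppLEquivProdFinsupp S b).1, mem_kerGr.2 ⟨fun x => 
        hb (Sum.inl x), ?_⟩, ?_⟩
      · rw [lc_sum, hz', map_zero, add_zero, ← lc_map] at hb1
        exact E.inj j _ (lc_mem hGA hA.1 fun x => hb (Sum.inl x)) hb1
      · show (Finsupp.sumFinsuppLEquivProdFinsupp S).symm
          ((Finsupp.sumFinsuppLEquivProdFinsupp S b).1, (0 : β →₀ S)) = b
        rw [← hz', Prod.mk.eta, LinearEquiv.symm_apply_apply]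
    · intro j c hc
      rw [mem_kerGr] at hc
      obtain ⟨hc, hc1⟩ := hc
      obtain ⟨a, ha, ha'⟩ := E.exact j _ (lc_mem hGB hl hc) (by rw [hg, hc1])
      obtain ⟨fa, hfa, hfa'⟩ := hA.2 j a ha
      refine ⟨(Finsupp.sumFinsuppLEquivProdFinsupp S).symm (-fa, c), mem_kerGr.2 ⟨?_, ?_⟩, ?_⟩
      · rintro (x | x)
        · rw [Finsupp.sumFinsuppLEquivProdFinsupp_symm_inl]; exact neg_mem (hfa x)
        · rw [Finsupp.sumFinsuppLEquivProdFinsupp_symm_inr]; exact hc x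
      · rw [lc_sum, LinearEquiv.apply_symm_apply]
        show Finsupp.linearCombination S _ (-fa) + Finsupp.linearCombination S l c = 0
        rw [← lc_map, map_neg, hfa', map_neg, ha']; abel
      · rw [LinearMap.comp_apply, LinearEquiv.coe_coe, LinearEquiv.apply_symm_apply]; rfl
end

theorem ext_P [SetLike.GradedMonoid G] : ∀ (i : ℕ) {M : Type u} [AddCommGroup M] [Module S M]
    {N : Type u} [AddCommGroup N] [Module S N] {Q : Type u} [AddCommGroup Q] [Module S Q]
    {A : ℤ → AddSubgroup M} {B : ℤ → AddSubgroup N} {C : ℤ → AddSubgroup Q} (r : ℤ)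
    {f : M →ₗ[S] N} {g : N →ₗ[S] Q}, GS G A → GS G B →
    Ex A B C f g → P G i A r → P G i C r → P G i B r := by
  intro i
  induction i with
  | zero =>
    rintro M _ _ N _ _ Q _ _ A B C r f g hGA hGB E ⟨α, dα, e, h1, h2⟩ ⟨β, dβ, e', h1', h2'⟩
    obtain ⟨q, hq, _⟩ := ext_key hGA hGB E h2 h2'
    exact ⟨_, _, q, by rintro (x | x); exacts [h1 x, h1' x], hq⟩
  | succ i ih =>
    rintro M _ _ N _ _ Q _ _ A B C r f g hGA hGB E ⟨α, dα, e, h1, h2, h3⟩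
      ⟨β, dβ, e', h1', h2', h3'⟩
    obtain ⟨q, hq, f', g', E'⟩ := ext_key hGA hGB E h2 h2'
    exact ⟨_, _, q, by rintro (x | x); exacts [h1 x, h1' x], hq,
      ih _ (kerGr_GS (frGr_GS _) _) (kerGr_GS (frGr_GS _) _) E' h3 h3'⟩

section
variable {M : Type u} [AddCommGroup M] [Module S M] {N : Type u} [AddCommGroup N] [Module S N]
  {Q : Type u} [AddCommGroup Q] [Module S Q]
  {A : ℤ → AddSubgroup M} {B : ℤ → AddSubgroup N} {C : ℤ → AddSubgroup Q}

theorem quot_P [SetLike.GradedMonoid G] (i : ℕ) (r : ℤ) {f : M →ₗ[S] N} {g : N →ₗ[S] Q}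
    (hGA : GS G A) (hGB : GS G B) (E : Ex A B C f g) (hB : P G i B r)
    (hA : ∀ l, l + 1 = i → P G l A (r + 1)) : P G i C r := by
  have cov : ∀ {β : Type} {d : β → ℤ} {e : β → N}, IsCover G B d e →
      IsCover G C d (fun b => g (e b)) := by
    intro β d e h
    refine ⟨fun b => E.g_mem _ _ (h.1 b), fun j m hm => ?_⟩
    obtain ⟨b, hb, rfl⟩ := E.surj j m hm
    obtain ⟨f, hf, rfl⟩ := h.2 j b hb
    exact ⟨f, hf, by rw [lc_map]⟩
  cases i with
  | zero =>
    obtain ⟨β, d, e, h1, h2⟩ := hB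
    exact ⟨β, d, _, h1, cov h2⟩
  | succ i =>
    obtain ⟨β, d, e, h1, h2, h3⟩ := hB
    refine ⟨β, d, _, h1, cov h2, ?_⟩
    have hA' : P G i (kerGr B g) (r + 1) :=
      (P_iso i (r + 1) f hGA (fun j a ha => mem_kerGr.2 ⟨E.f_mem j a ha, E.zero j a ha⟩) E.inj
        (fun j b hb => E.exact j b (mem_kerGr.1 hb).1 (mem_kerGr.1 hb).2)).1 (hA i rfl)
    refine ext_P (f := LinearMap.id) (g := Finsupp.linearCombination S e) i (r + 1)
      (kerGr_GS (frGr_GS _) _) (kerGr_GS (frGr_GS _) _) ?_ h3 hA'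
    refine ⟨?_, ?_, ?_, ?_, ?_, ?_⟩
    · intro j a ha
      rw [mem_kerGr] at ha ⊢
      exact ⟨ha.1, by rw [LinearMap.id_apply, ← lc_map, ha.2, map_zero]⟩
    · intro j b hb
      rw [mem_kerGr] at hb ⊢
      exact ⟨lc_mem hGB h2.1 hb.1, by rw [lc_map]; exact hb.2⟩
    · intro j a _ h; exact h
    · intro j a ha; exact (mem_kerGr.1 ha).2
    · intro j b hb h
      exact ⟨b, mem_kerGr.2 ⟨(mem_kerGr.1 hb).1, h⟩, rfl⟩
    · intro j c hc
      rw [mem_kerGr] at hc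
      obtain ⟨x, hx, rfl⟩ := h2.2 j c hc.1
      exact ⟨x, mem_kerGr.2 ⟨hx, by rw [← lc_map]; exact hc.2⟩, rfl⟩

theorem P_free [SetLike.GradedMonoid G] (i : ℕ) (r : ℤ) {ι : Type} (deg : ι → ℤ)
    (h : ∀ b, deg b ≤ r) : P G i (frGr G deg) r := by
  have hc : IsCover G (frGr G deg) deg (fun b => Finsupp.single b (1 : S)) := by
    refine ⟨fun b => single_mem_frGr b (by rw [sub_self]; exact SetLike.one_mem_graded G), fun j m hm => ⟨m, hm, ?_⟩⟩
    rw [Finsupp.linearCombination_apply]; simp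
  cases i with
  | zero => exact ⟨ι, deg, _, h, hc⟩
  | succ i =>
    refine ⟨ι, deg, _, h, hc, P_zero_mod _ _ _ ?_⟩
    intro j a ha
    have := (mem_kerGr.1 ha).2
    rw [Finsupp.linearCombination_apply] at this; simpa using this

theorem sub_P [SetLike.GradedMonoid G] (i : ℕ) (r : ℤ) {f : M →ₗ[S] N} {g : N →ₗ[S] Q}
    (hGA : GS G A) (hGB : GS G B) (hGC : GS G C) (E : Ex A B C f g) (hB : P G i B r)
    (hC : P G (i + 1) C (r - 1)) : P G i A r := by
  obtain ⟨β, d, e, h1, h2, h3⟩ := hC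
  rw [show r - 1 + 1 = r by ring] at h3
  choose l hl hl' using fun b => E.surj _ _ (h2.1 b)
  have hg : ∀ x, g (Finsupp.linearCombination S l x) = Finsupp.linearCombination S e x := by
    intro x; rw [lc_map]
    congr 2; funext b; exact hl' b
  -- the pullback
  let D : ℤ → AddSubgroup (N × (β →₀ S)) := kerGr (fun j => (B j).prod (frGr G d j))
    (g ∘ₗ LinearMap.fst S N (β →₀ S) - Finsupp.linearCombination S e ∘ₗ LinearMap.snd S N (β →₀ S))
  have memD : ∀ j b x, (b, x) ∈ D j ↔ (b ∈ B j ∧ x ∈ frGr G d j) ∧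
      g b = Finsupp.linearCombination S e x := by
    intro j b x
    show (b, x) ∈ kerGr _ _ j ↔ _
    rw [mem_kerGr]
    simp [AddSubgroup.mem_prod, sub_eq_zero]
  have hGD : GS G D := by
    refine kerGr_GS ?_ _
    rintro a j p ⟨b, x⟩ hp hm
    rw [AddSubgroup.mem_prod] at hm ⊢
    exact ⟨hGB _ _ _ _ hp hm.1, frGr_GS d _ _ _ _ hp hm.2⟩
  have hD : P G i D r := by
    refine ext_P (f := LinearMap.inr S N (β →₀ S)) (g := LinearMap.fst S N (β →₀ S)) i r
      (kerGr_GS (frGr_GS _) _) hGD ?_ h3 hB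
    refine ⟨?_, ?_, ?_, ?_, ?_, ?_⟩
    · intro j a ha
      rw [mem_kerGr] at ha
      exact (memD j 0 a).2 ⟨⟨zero_mem _, ha.1⟩, by rw [map_zero, ha.2]⟩
    · rintro j ⟨b, x⟩ hb
      exact ((memD _ _ _).1 hb).1.1
    · intro j a _ h; simpa using h
    · intro j a ha; simp
    · rintro j ⟨b, x⟩ hb h
      have h' : b = 0 := h
      subst h'
      obtain ⟨hb1, hb2⟩ := (memD _ _ _).1 hb
      exact ⟨x, mem_kerGr.2 ⟨hb1.2, by rw [← hb2, map_zero]⟩, rfl⟩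
    · intro j c hc
      obtain ⟨x, hx, hx'⟩ := h2.2 j _ (E.g_mem j c hc)
      exact ⟨(c, x), (memD _ _ _).2 ⟨⟨hc, hx⟩, hx'.symm⟩, rfl⟩
  refine (P_iso i r f hGA (fun j a ha => mem_kerGr.2 ⟨E.f_mem j a ha, E.zero j a ha⟩) E.inj
        (fun j b hb => E.exact j b (mem_kerGr.1 hb).1 (mem_kerGr.1 hb).2)).2 ?_
  refine quot_P (A := frGr G d) (B := D) (f := (Finsupp.linearCombination S l).prod LinearMap.id)
    (g := LinearMap.fst S N (β →₀ S) - Finsupp.linearCombination S l ∘ₗ LinearMap.snd S N (β →₀ S))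
    i r (frGr_GS _) hGD ?_ hD
    (fun l' _ => P_free _ _ _ fun b => (h1 b).trans (by omega))
  refine ⟨?_, ?_, ?_, ?_, ?_, ?_⟩
  · intro j a ha
    exact (memD _ _ _).2 ⟨⟨lc_mem hGB hl ha, ha⟩, hg _⟩
  · rintro j ⟨b, x⟩ hb
    obtain ⟨hb1, hb2⟩ := (memD _ _ _).1 hb
    exact mem_kerGr.2 ⟨sub_mem hb1.1 (lc_mem hGB hl hb1.2), by
      rw [LinearMap.sub_apply, map_sub]
      show g b - g (Finsupp.linearCombination S l x) = 0
      rw [hg, hb2, sub_self]⟩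
  · intro j a _ h
    exact congrArg Prod.snd h
  · intro j a ha; simp
  · rintro j ⟨b, x⟩ hb h
    obtain ⟨hb1, hb2⟩ := (memD _ _ _).1 hb
    refine ⟨x, hb1.2, ?_⟩
    have : b - Finsupp.linearCombination S l x = 0 := h
    rw [sub_eq_zero] at this
    rw [this]; rfl
  · intro j c hc
    rw [mem_kerGr] at hc
    exact ⟨(c, 0), (memD _ _ _).2 ⟨⟨hc.1, zero_mem _⟩, by rw [hc.2, map_zero]⟩, by simp⟩
end

/-- shift of a grading -/
def shiftGr {M : Type u} [AddCommGroup M] (A : ℤ → AddSubgroup M) (d : ℤ) : ℤ → AddSubgroup M :=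
  fun j => A (j - d)

theorem shiftGr_GS {M : Type u} [AddCommGroup M] [Module S M] {A : ℤ → AddSubgroup M}
    (h : GS G A) (d : ℤ) : GS G (shiftGr A d) := by
  intro a j p m hp hm
  have := h _ _ _ _ hp hm
  show _ ∈ A _
  rwa [show a + j - d = a + (j - d) by ring]

theorem frGr_shift {ι : Type} (deg : ι → ℤ) (d : ℤ) :
    frGr G (fun b => deg b + d) = shiftGr (frGr G deg) d := by
  funext j; ext x
  show (∀ b, _) ↔ (∀ b, _)
  refine forall_congr' fun b => ?_
  rw [show j - (deg b + d) = j - d - deg b by ring]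

theorem P_shift (d : ℤ) : ∀ (i : ℕ) {M : Type u} [AddCommGroup M] [Module S M]
    {A : ℤ → AddSubgroup M} (r : ℤ), P G i A r → P G i (shiftGr A d) (r + d) := by
  have cov : ∀ {M : Type u} [AddCommGroup M] [Module S M]
    {A : ℤ → AddSubgroup M} {ι : Type} {deg : ι → ℤ} {e : ι → M}, IsCover G A deg e →
      IsCover G (shiftGr A d) (fun b => deg b + d) e := by
    intro M _ _ A ι deg e h
    refine ⟨fun b => ?_, fun j m hm => ?_⟩
    · show _ ∈ A _
      rw [add_sub_cancel_right]; exact h.1 b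
    · rw [frGr_shift]
      exact h.2 _ m hm
  intro i
  induction i with
  | zero =>
    rintro M _ _ A r ⟨ι, deg, e, h1, h2⟩
    exact ⟨ι, _, e, fun b => add_le_add_left (h1 b) d, cov h2⟩
  | succ i ih =>
    rintro M _ _ A r ⟨ι, deg, e, h1, h2, h3⟩
    refine ⟨ι, _, e, fun b => add_le_add_left (h1 b) d, cov h2, ?_⟩
    have := ih _ h3
    rw [frGr_shift, show r + d + 1 = r + 1 + d by ring]
    exact this

theorem cover_restrict {M : Type u} [AddCommGroup M] [Module S M] {A : ℤ → AddSubgroup M}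
    {ι : Type} {deg : ι → ℤ} {e : ι → M} (h : IsCover G A deg e) (j0 : ℤ)
    (h0 : ∀ j < j0, ∀ a ∈ A j, a = 0) :
    IsCover G A (fun b : {b // j0 ≤ deg b} => deg b) (fun b => e b) := by
  classical
  refine ⟨fun b => h.1 b, fun j m hm => ?_⟩
  obtain ⟨f, hf, rfl⟩ := h.2 j m hm
  refine ⟨f.subtypeDomain (fun b => j0 ≤ deg b), fun b => hf b, ?_⟩
  rw [Finsupp.linearCombination_apply, Finsupp.linearCombination_apply]
  rw [Finsupp.sum, Finsupp.sum, Finsupp.support_subtypeDomain]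
  have h2 := Finset.sum_subtype_eq_sum_filter (s := f.support) (p := fun b => j0 ≤ deg b)
    (fun i => f i • e i)
  refine Eq.trans h2 (Finset.sum_filter_of_ne fun b _ hb => ?_)
  by_contra hlt
  exact hb (by rw [h0 _ (not_le.1 hlt) _ (h.1 b), smul_zero])

theorem nzd_P [SetLike.GradedMonoid G] (h : S) (h1 : h ∈ G 1) (hz : ∀ p, h * p = 0 → p = 0)
    (hd : ∀ d p, h * p ∈ G d → p ∈ G (d - 1)) (hneg : ∀ d < 0, ∀ p ∈ G d, p = 0) :
    ∀ (i : ℕ) {M : Type u} [AddCommGroup M] [Module S M] {Q : Type u} [AddCommGroup Q] [Module S Q]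
    {A : ℤ → AddSubgroup M} {C : ℤ → AddSubgroup Q} (r : ℤ) {g : M →ₗ[S] Q} (j0 : ℤ),
    GS G A → GS G C → (∀ j < j0, ∀ a ∈ A j, a = 0) →
    Ex (shiftGr A 1) A C (LinearMap.lsmul S M h) g → (∀ i, P G i C r) → P G i A r := by
  have key : ∀ {M : Type u} [AddCommGroup M] [Module S M] {Q : Type u} [AddCommGroup Q] [Module S Q]
    {A : ℤ → AddSubgroup M} {C : ℤ → AddSubgroup Q} (r : ℤ) {g : M →ₗ[S] Q} (j0 : ℤ),
    GS G A → GS G C → (∀ j < j0, ∀ a ∈ A j, a = 0) →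
    Ex (shiftGr A 1) A C (LinearMap.lsmul S M h) g → (∀ i, P G i C r) →
    ∃ (ι : Type) (deg : ι → ℤ) (e : ι → M), (∀ b, deg b ≤ r) ∧ (∀ b, j0 ≤ deg b) ∧
      IsCover G A deg e := by
    intro M _ _ Q _ _ A C r g j0 hA hC h0 E hP
    obtain ⟨ι, deg, e, hr, hc⟩ := hP 0
    have hC0 : ∀ j < j0, ∀ a ∈ C j, a = 0 := by
      intro j hj c hc
      obtain ⟨b, hb, rfl⟩ := E.surj j c hc
      rw [h0 j hj b hb, map_zero]
    have hc' := cover_restrict hc j0 hC0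
    choose l hl hl' using fun b => E.surj _ _ (hc'.1 b)
    refine ⟨_, _, l, fun b => hr b, fun b => b.2, hl, ?_⟩
    have : ∀ (t : ℕ) (j : ℤ), j < j0 + t → ∀ m ∈ A j,
        ∃ f ∈ frGr G (fun b : {b // j0 ≤ deg b} => deg b) j,
          Finsupp.linearCombination S l f = m := by
      intro t
      induction t with
      | zero =>
        intro j hj m hm
        exact ⟨0, zero_mem _, by rw [h0 j (by simpa using hj) m hm, map_zero]⟩
      | succ t ih =>
        intro j hj m hm
        obtain ⟨f, hf, hf'⟩ := hc'.2 j _ (E.g_mem j m hm)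
        obtain ⟨a, ha, ha'⟩ := E.exact j (m - Finsupp.linearCombination S l f)
          (sub_mem hm (lc_mem hA hl hf)) (by
            rw [map_sub, lc_map, ← hf']
            simp only [hl', sub_self])
        obtain ⟨f2, hf2, hf2'⟩ := ih (j - 1) (by push_cast at hj; omega) a ha
        refine ⟨f + h • f2, add_mem hf ?_, ?_⟩
        · have := frGr_GS (fun b : {b // j0 ≤ deg b} => deg b) 1 (j - 1) h f2 h1 hf2
          rwa [add_sub_cancel] at this
        · rw [map_add, map_smul, hf2']
          have : h • a = m - Finsupp.linearCombination S l f := ha'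
          rw [this]; abel
    intro j
    exact this (j - j0 + 1).toNat j (by omega)
  intro i
  induction i with
  | zero =>
    intro M _ _ Q _ _ A C r g j0 hA hC h0 E hP
    obtain ⟨ι, deg, e, hr, _, hc⟩ := key r j0 hA hC h0 E hP
    exact ⟨ι, deg, e, hr, hc⟩
  | succ i ih =>
    intro M _ _ Q _ _ A C r g j0 hA hC h0 E hP
    obtain ⟨ι, deg, e, hr, hj0, hc⟩ := key r j0 hA hC h0 E hP
    refine ⟨ι, deg, e, hr, hc, ?_⟩
    let R : Submodule S (ι →₀ S) := LinearMap.range (LinearMap.lsmul S (ι →₀ S) h)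
    let FH : ℤ → AddSubgroup ((ι →₀ S) ⧸ R) := fun j => (frGr G deg j).map R.mkQ.toAddMonoidHom
    have memFH : ∀ j x, x ∈ FH j ↔ ∃ f ∈ frGr G deg j, R.mkQ f = x := fun j x => Iff.rfl
    have hle : R ≤ LinearMap.ker (g ∘ₗ Finsupp.linearCombination S e) := by
      rintro _ ⟨x, rfl⟩
      have : (g ∘ₗ Finsupp.linearCombination S e) ∘ₗ LinearMap.lsmul S (ι →₀ S) h = 0 := by
        refine Finsupp.lhom_ext' fun b => LinearMap.ext_ring ?_
        have := E.zero (deg b + 1) (e b) (by show _ ∈ A _; rw [add_sub_cancel_right]; exact hc.1 b)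
        simpa using this
      exact LinearMap.congr_fun this x
    let w : ((ι →₀ S) ⧸ R) →ₗ[S] Q := R.liftQ _ hle
    have hw : ∀ x, w (R.mkQ x) = g (Finsupp.linearCombination S e x) := fun x => rfl
    have hF1 : ∀ j f, f ∈ frGr G deg (j - 1) → h • f ∈ frGr G deg j := by
      intro j f hf
      have := frGr_GS deg 1 (j - 1) h f h1 hf
      rwa [add_sub_cancel] at this
    have hF2 : ∀ j f, h • f ∈ frGr G deg j → f ∈ frGr G deg (j - 1) := by
      intro j f hf b
      have := hd _ _ (hf b)
      rwa [show j - deg b - 1 = j - 1 - deg b by ring] at this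
    have hFz : ∀ f : ι →₀ S, h • f = 0 → f = 0 := by
      intro f hf; ext b; exact hz _ (DFunLike.congr_fun hf b)
    have hR0 : ∀ x : ι →₀ S, R.mkQ (h • x) = 0 := by
      intro x
      rw [Submodule.mkQ_apply, Submodule.Quotient.mk_eq_zero]; exact ⟨x, rfl⟩
    have hR1 : ∀ x : ι →₀ S, R.mkQ x = 0 → ∃ y, h • y = x := by
      intro x hx
      rw [Submodule.mkQ_apply, Submodule.Quotient.mk_eq_zero] at hx; exact hx
    have hGFH : GS G FH := by
      intro d j p m hp hm
      obtain ⟨f, hf, rfl⟩ := (memFH _ _).1 hm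
      exact (memFH _ _).2 ⟨p • f, frGr_GS _ _ _ _ _ hp hf, map_smul _ _ _⟩
    have E1 : Ex (shiftGr (frGr G deg) 1) (frGr G deg) FH (LinearMap.lsmul S (ι →₀ S) h) R.mkQ := by
      refine ⟨fun j a ha => hF1 j a ha, fun j b hb => (memFH _ _).2 ⟨b, hb, rfl⟩,
        fun j a _ h => hFz a h, fun j a _ => hR0 a, fun j b hb hb' => ?_, fun j c hc => hc⟩
      obtain ⟨y, rfl⟩ := hR1 b hb'
      exact ⟨y, hF2 _ _ hb, rfl⟩
    have PFH : ∀ i, P G i FH r := by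
      intro i
      refine quot_P i r (shiftGr_GS (frGr_GS _) _) (frGr_GS _) E1 (P_free _ _ _ hr) ?_
      intro l _
      exact P_shift 1 _ _ (P_free _ _ _ hr)
    have E2 : Ex (kerGr FH w) FH C LinearMap.id w := by
      refine ⟨fun j a ha => ha.1, fun j b hb => ?_, fun j a _ h => h, fun j a ha => ha.2,
        fun j b hb h => ⟨b, ⟨hb, h⟩, rfl⟩, fun j c hcc => ?_⟩
      · obtain ⟨f, hf, rfl⟩ := (memFH _ _).1 hb
        rw [hw]
        exact E.g_mem _ _ (lc_mem hA hc.1 hf)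
      · obtain ⟨b, hb, rfl⟩ := E.surj j c hcc
        obtain ⟨f, hf, rfl⟩ := hc.2 j b hb
        exact ⟨R.mkQ f, (memFH _ _).2 ⟨f, hf, rfl⟩, hw _⟩
    have PQ : ∀ i, P G i (kerGr FH w) (r + 1) := by
      intro i
      refine sub_P i (r + 1) (kerGr_GS hGFH _) hGFH hC E2 (P_mono _ _ _ _ (by omega) (PFH i)) ?_
      rw [add_sub_cancel_right]; exact hP _
    refine ih (C := kerGr FH w) (g := R.mkQ) (r + 1) j0 (kerGr_GS (frGr_GS _) _) (kerGr_GS hGFH _) ?_ ?_ PQ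
    · intro j hj a ha
      ext b
      exact hneg (j - deg b) (by have := hj0 b; omega) _ (ha.1 b)
    · refine ⟨fun j a ha => ?_, fun j b hb => ?_, fun j a _ h => hFz a h, fun j a _ => hR0 a,
        fun j b hb hb' => ?_, fun j c hcc => ?_⟩
      · exact mem_kerGr.2 ⟨hF1 j a ha.1, by
          show Finsupp.linearCombination S e (h • a) = 0
          rw [map_smul, (mem_kerGr.1 ha).2, smul_zero]⟩
      · refine mem_kerGr.2 ⟨(memFH _ _).2 ⟨b, hb.1, rfl⟩, ?_⟩
        rw [hw, (mem_kerGr.1 hb).2, map_zero]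
      · obtain ⟨y, rfl⟩ := hR1 b hb'
        have hy := hF2 _ _ hb.1
        refine ⟨y, mem_kerGr.2 ⟨hy, ?_⟩, rfl⟩
        refine E.inj j _ (lc_mem hA hc.1 hy) ?_
        have := (mem_kerGr.1 hb).2
        rw [map_smul] at this; exact this
      · obtain ⟨hc1, hc2⟩ := mem_kerGr.1 hcc
        obtain ⟨f, hf, rfl⟩ := (memFH _ _).1 hc1
        rw [hw] at hc2
        obtain ⟨a, ha, ha'⟩ := E.exact j _ (lc_mem hA hc.1 hf) hc2
        obtain ⟨y, hy, rfl⟩ := hc.2 (j - 1) a ha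
        refine ⟨f - h • y, mem_kerGr.2 ⟨sub_mem hf (hF1 _ _ hy), ?_⟩, ?_⟩
        · rw [map_sub, map_smul, sub_eq_zero]; exact ha'.symm
        · rw [map_sub, hR0, sub_zero]

end framework
end RegLk

set_option linter.unusedSectionVars false
set_option linter.unusedVariables false
namespace RegLk
open MvPolynomial
section polygr
universe u v
variable {σ : Type u} {K : Type v} [Field K]

/-- integer-indexed standard grading of the polynomial ring -/
def Gp (σ : Type u) (K : Type v) [Field K] (d : ℤ) : AddSubgroup (MvPolynomial σ K) where
  carrier := {p | ∀ m, coeff m p ≠ 0 → (m.degree : ℤ) = d}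
  add_mem' := by
    intro a b ha hb m hm
    by_cases h : coeff m a = 0
    · exact hb m (by rw [coeff_add, h, zero_add] at hm; exact hm)
    · exact ha m h
  zero_mem' := by intro m hm; simp at hm
  neg_mem' := by intro a ha m hm; exact ha m (by simpa using hm)

theorem mem_Gp {d : ℤ} {p : MvPolynomial σ K} :
    p ∈ Gp σ K d ↔ ∀ m, coeff m p ≠ 0 → (m.degree : ℤ) = d := Iff.rfl

theorem mem_Gp_nat {n : ℕ} {p : MvPolynomial σ K} :
    p ∈ Gp σ K n ↔ p.IsHomogeneous n := by
  rw [mem_Gp]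
  constructor
  · intro h m hm
    have := h m hm
    rw [Pi.one_def, ← Finsupp.degree_eq_weight_one]
    exact_mod_cast this
  · intro h m hm
    by_contra h2
    exact hm (h.coeff_eq_zero (by exact_mod_cast h2))

theorem Gp_neg : ∀ d < 0, ∀ p ∈ Gp σ K d, p = 0 := by
  intro d hd p hp
  ext m
  by_contra h
  have := hp m h
  omega

instance Gp_graded : SetLike.GradedMonoid (Gp σ K) where
  one_mem := mem_Gp_nat.2 (isHomogeneous_one σ K)
  mul_mem := by
    intro i j a b ha hb
    rcases lt_or_ge i 0 with hi | hi
    · rw [Gp_neg i hi a ha, zero_mul]; exact zero_mem _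
    rcases lt_or_ge j 0 with hj | hj
    · rw [Gp_neg j hj b hb, mul_zero]; exact zero_mem _
    lift i to ℕ using hi
    lift j to ℕ using hj
    rw [← Nat.cast_add]
    exact mem_Gp_nat.2 ((mem_Gp_nat.1 ha).mul (mem_Gp_nat.1 hb))

/-- homogeneous component with integer index -/
noncomputable def cmp (j : ℤ) : MvPolynomial σ K →ₗ[K] MvPolynomial σ K :=
  if 0 ≤ j then homogeneousComponent j.toNat else 0

theorem coeff_cmp (j : ℤ) (p : MvPolynomial σ K) (m : σ →₀ ℕ) :
    coeff m (cmp j p) = if (m.degree : ℤ) = j then coeff m p else 0 := by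
  unfold cmp
  split_ifs with h1 h2 h2
  · rw [coeff_homogeneousComponent, if_pos (by omega)]
  · rw [coeff_homogeneousComponent, if_neg (by omega)]
  · omega
  · simp

theorem cmp_mem (j : ℤ) (p : MvPolynomial σ K) : cmp j p ∈ Gp σ K j := by
  intro m hm
  rw [coeff_cmp] at hm
  by_contra h
  rw [if_neg h] at hm; exact hm rfl

theorem cmp_of_mem {e : ℤ} {p : MvPolynomial σ K} (hp : p ∈ Gp σ K e) (j : ℤ) :
    cmp j p = if e = j then p else 0 := by
  ext m
  rw [coeff_cmp]
  by_cases h0 : coeff m p = 0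
  · rw [h0, ite_self]; split_ifs <;> simp [h0]
  · have := hp m h0
    rw [this]
    split_ifs <;> simp

theorem cmp_self {e : ℤ} {p : MvPolynomial σ K} (hp : p ∈ Gp σ K e) : cmp e p = p := by
  rw [cmp_of_mem hp, if_pos rfl]

theorem monomial_mem_Gp (m : σ →₀ ℕ) (c : K) : monomial m c ∈ Gp σ K m.degree :=
  mem_Gp_nat.2 (isHomogeneous_monomial _ rfl)

theorem X_mem_Gp (v : σ) : (X v : MvPolynomial σ K) ∈ Gp σ K 1 :=
  mem_Gp_nat.2 (isHomogeneous_X K v)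

theorem cmp_mul {d : ℤ} {f : MvPolynomial σ K} (hf : f ∈ Gp σ K d) (j : ℤ) (t : MvPolynomial σ K) :
    cmp j (f * t) = f * cmp (j - d) t := by
  induction t using MvPolynomial.induction_on' with
  | monomial m c =>
    have h1 := monomial_mem_Gp (σ := σ) m c
    rw [cmp_of_mem (SetLike.mul_mem_graded hf h1), cmp_of_mem h1]
    split_ifs <;> first | rfl | omega | simp
  | add p q hp hq => rw [mul_add, map_add, map_add, hp, hq, mul_add]

theorem eq_zero_of_cmp {p : MvPolynomial σ K} (h : ∀ j, cmp j p = 0) : p = 0 := by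
  ext m
  have := congrArg (coeff m) (h m.degree)
  rwa [coeff_cmp, if_pos rfl] at this

theorem mem_Gp_of_cmp {p : MvPolynomial σ K} {d : ℤ} (h : ∀ j, j ≠ d → cmp j p = 0) :
    p ∈ Gp σ K d := by
  intro m hm
  by_contra hd
  have := congrArg (coeff m) (h m.degree hd)
  rw [coeff_cmp, if_pos rfl] at this
  exact hm this

theorem mul_mem_Gp_cancel {h : MvPolynomial σ K} (h1 : h ∈ Gp σ K 1) (h0 : h ≠ 0) (d : ℤ)
    (p : MvPolynomial σ K) (hp : h * p ∈ Gp σ K d) : p ∈ Gp σ K (d - 1) := by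
  refine mem_Gp_of_cmp fun j hj => ?_
  have := cmp_mul h1 (j + 1) p
  rw [cmp_of_mem hp, if_neg (by omega), add_sub_cancel_right] at this
  exact (mul_eq_zero.1 this.symm).resolve_left h0

/-- homogeneous ideals -/
def HI (I : Ideal (MvPolynomial σ K)) : Prop := ∀ p ∈ I, ∀ j, cmp j p ∈ I

theorem HI_span {s : Set (MvPolynomial σ K)} (h : ∀ p ∈ s, ∃ d, p ∈ Gp σ K d) :
    HI (Ideal.span s) := by
  intro p hp j
  induction hp using Submodule.span_induction generalizing j with
  | mem x hx =>
    obtain ⟨d, hd⟩ := h x hx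
    rw [cmp_of_mem hd]
    split_ifs
    · exact Ideal.subset_span hx
    · exact zero_mem _
  | zero => rw [map_zero]; exact zero_mem _
  | add x y _ _ hx hy => rw [map_add]; exact add_mem (hx j) (hy j)
  | smul a x _ hx =>
    induction a using MvPolynomial.induction_on' with
    | monomial m c =>
      rw [smul_eq_mul, cmp_mul (monomial_mem_Gp m c)]
      exact Ideal.mul_mem_left _ _ (hx _)
    | add p q hp hq => rw [add_smul, map_add]; exact add_mem hp hq

theorem HI_sup {I J : Ideal (MvPolynomial σ K)} (hI : HI I) (hJ : HI J) : HI (I ⊔ J) := by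
  intro p hp j
  obtain ⟨a, ha, b, hb, rfl⟩ := Submodule.mem_sup.1 hp
  rw [map_add]
  exact Submodule.add_mem_sup (hI a ha j) (hJ b hb j)

theorem HI_single {f : MvPolynomial σ K} {d : ℤ} (hf : f ∈ Gp σ K d) : HI (Ideal.span {f}) :=
  HI_span (by rintro p rfl; exact ⟨d, hf⟩)

/-- grading on a cyclic module -/
noncomputable def cyGr (I : Ideal (MvPolynomial σ K)) (j : ℤ) : AddSubgroup (MvPolynomial σ K ⧸ I) :=
  (Gp σ K j).map (Submodule.mkQ I).toAddMonoidHom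

theorem mem_cyGr {I : Ideal (MvPolynomial σ K)} {j : ℤ} {x : MvPolynomial σ K ⧸ I} :
    x ∈ cyGr I j ↔ ∃ p ∈ Gp σ K j, Submodule.mkQ I p = x := Iff.rfl

theorem cyGr_GS (I : Ideal (MvPolynomial σ K)) : GS (Gp σ K) (cyGr I) := by
  intro d j p m hp hm
  obtain ⟨f, hf, rfl⟩ := mem_cyGr.1 hm
  exact mem_cyGr.2 ⟨p * f, SetLike.mul_mem_graded hp hf, map_smul (Submodule.mkQ I) p f⟩

theorem mkQ_zero {I : Ideal (MvPolynomial σ K)} {p : MvPolynomial σ K} :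
    Submodule.mkQ I p = 0 ↔ p ∈ I := by
  rw [Submodule.mkQ_apply, Submodule.Quotient.mk_eq_zero]

theorem cyclic_Ex {I J H : Ideal (MvPolynomial σ K)} {f : MvPolynomial σ K} {d : ℤ}
    (hf : f ∈ Gp σ K d) (hI : HI I) (hJ : ∀ s, s ∈ J ↔ f * s ∈ I) (hH : H = I ⊔ Ideal.span {f})
    (φ : (MvPolynomial σ K ⧸ J) →ₗ[MvPolynomial σ K] (MvPolynomial σ K ⧸ I))
    (hφ : ∀ s, φ (Submodule.mkQ J s) = Submodule.mkQ I (f * s)) :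
    ∃ g, Ex (shiftGr (cyGr J) d) (cyGr I) (cyGr H) φ g := by
  have hle : I ≤ H := hH ▸ le_sup_left
  have hfH : f ∈ H := hH ▸ (Ideal.mem_sup_right (Ideal.mem_span_singleton_self f))
  refine ⟨Submodule.mapQ I H LinearMap.id hle, ?_, ?_, ?_, ?_, ?_, ?_⟩
  · rintro j a ha
    obtain ⟨s, hs, rfl⟩ := mem_cyGr.1 ha
    rw [hφ]
    refine mem_cyGr.2 ⟨_, ?_, rfl⟩
    have := SetLike.mul_mem_graded hf hs
    rwa [add_sub_cancel] at this
  · rintro j b hb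
    obtain ⟨s, hs, rfl⟩ := mem_cyGr.1 hb
    exact mem_cyGr.2 ⟨s, hs, rfl⟩
  · rintro j a ha h
    obtain ⟨s, hs, rfl⟩ := mem_cyGr.1 ha
    rw [hφ, mkQ_zero] at h
    exact mkQ_zero.2 ((hJ s).2 h)
  · rintro j a ha
    obtain ⟨s, hs, rfl⟩ := mem_cyGr.1 ha
    rw [hφ]
    exact mkQ_zero.2 (Ideal.mul_mem_right _ _ hfH)
  · rintro j b hb h
    obtain ⟨s, hs, rfl⟩ := mem_cyGr.1 hb
    have h' : s ∈ H := mkQ_zero.1 h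
    rw [hH] at h'
    obtain ⟨i, hi, y, hy, hiy⟩ := Submodule.mem_sup.1 h'
    obtain ⟨t, rfl⟩ := Ideal.mem_span_singleton'.1 hy
    refine ⟨Submodule.mkQ J (cmp (j - d) t), mem_cyGr.2 ⟨_, cmp_mem _ _, rfl⟩, ?_⟩
    rw [hφ, ← cmp_mul hf, ← sub_eq_zero, ← map_sub, mkQ_zero]
    have : cmp j (f * t) - s = - cmp j i := by
      have := cmp_self hs
      rw [← hiy, map_add] at this
      rw [← hiy, ← this, mul_comm f t]; ring
    rw [this]
    exact neg_mem (hI _ hi _)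
  · rintro j c hc
    obtain ⟨s, hs, rfl⟩ := mem_cyGr.1 hc
    exact ⟨Submodule.mkQ I s, mem_cyGr.2 ⟨s, hs, rfl⟩, rfl⟩

/-- regularity of the cyclic module is at most `r` -/
def Rc (I : Ideal (MvPolynomial σ K)) (r : ℤ) : Prop := ∀ i, P (Gp σ K) i (cyGr I) r

theorem Rc_mono {I : Ideal (MvPolynomial σ K)} {r r' : ℤ} (h : r ≤ r') (hI : Rc I r) : Rc I r' :=
  fun i => P_mono i _ _ _ h (hI i)

noncomputable def mulMap {I J : Ideal (MvPolynomial σ K)} (f : MvPolynomial σ K)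
    (h : ∀ s ∈ J, f * s ∈ I) :
    (MvPolynomial σ K ⧸ J) →ₗ[MvPolynomial σ K] (MvPolynomial σ K ⧸ I) :=
  Submodule.mapQ J I (LinearMap.lsmul _ _ f) (fun s hs => h s hs)

theorem R1 {I J H : Ideal (MvPolynomial σ K)} (f : MvPolynomial σ K) (d : ℤ) {r : ℤ}
    (hf : f ∈ Gp σ K d) (hI : HI I) (hJ : ∀ s, s ∈ J ↔ f * s ∈ I) (hH : H = I ⊔ Ideal.span {f})
    (h1 : Rc J (r - d)) (h2 : Rc H r) : Rc I r := by
  obtain ⟨g, E⟩ := cyclic_Ex hf hI hJ hH (mulMap f fun s hs => (hJ s).1 hs) (fun s => rfl)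
  intro i
  refine ext_P i r (shiftGr_GS (cyGr_GS _) _) (cyGr_GS _) E ?_ (h2 i)
  have := P_shift d i _ (h1 i)
  rwa [sub_add_cancel] at this

theorem R2 {I J H : Ideal (MvPolynomial σ K)} (f : MvPolynomial σ K) (d : ℤ) {r : ℤ}
    (hf : f ∈ Gp σ K d) (hI : HI I) (hJ : ∀ s, s ∈ J ↔ f * s ∈ I) (hH : H = I ⊔ Ideal.span {f})
    (h1 : Rc I r) (h2 : Rc J (r - d + 1)) : Rc H r := by
  obtain ⟨g, E⟩ := cyclic_Ex hf hI hJ hH (mulMap f fun s hs => (hJ s).1 hs) (fun s => rfl)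
  intro i
  refine quot_P i r (shiftGr_GS (cyGr_GS _) _) (cyGr_GS _) E (h1 i) (fun l _ => ?_)
  have := P_shift d l _ (h2 l)
  rwa [show r - d + 1 + d = r + 1 by ring] at this

theorem R3 {I H : Ideal (MvPolynomial σ K)} (h : MvPolynomial σ K) {r : ℤ} (h0 : h ≠ 0)
    (hf : h ∈ Gp σ K 1) (hI : HI I) (hJ : ∀ s, h * s ∈ I → s ∈ I) (hH : H = I ⊔ Ideal.span {h})
    (h1 : Rc H r) : Rc I r := by
  obtain ⟨g, E⟩ := cyclic_Ex hf hI (fun s => ⟨fun hs => Ideal.mul_mem_left _ _ hs, hJ s⟩) hH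
    (LinearMap.lsmul _ _ h) (fun s => rfl)
  intro i
  refine nzd_P h hf (fun p hp => (mul_eq_zero.1 hp).resolve_left h0) (mul_mem_Gp_cancel hf h0)
    Gp_neg i r 0 (cyGr_GS _) (cyGr_GS _) ?_ E h1
  intro j hj a ha
  obtain ⟨s, hs, rfl⟩ := mem_cyGr.1 ha
  rw [Gp_neg j hj s hs, map_zero]

theorem Rc_top (r : ℤ) : Rc (⊤ : Ideal (MvPolynomial σ K)) r := by
  intro i
  refine P_zero_mod _ _ _ fun j a ha => ?_
  obtain ⟨s, hs, rfl⟩ := mem_cyGr.1 ha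
  exact mkQ_zero.2 trivial

theorem Rc_bot : Rc (⊥ : Ideal (MvPolynomial σ K)) 0 := by
  intro i
  have := P_free (G := Gp σ K) i 0 (fun _ : Unit => (0 : ℤ)) (fun _ => le_rfl)
  refine (P_iso i 0 ((Submodule.mkQ ⊥) ∘ₗ (Finsupp.lapply ())) (frGr_GS _) ?_ ?_ ?_).1 this
  · intro j a ha
    exact mem_cyGr.2 ⟨a (), by simpa using ha (), rfl⟩
  · intro j a ha h
    have : a () = 0 := by simpa using mkQ_zero.1 h
    ext ⟨⟩; rw [this]; rfl
  · intro j b hb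
    obtain ⟨s, hs, rfl⟩ := mem_cyGr.1 hb
    exact ⟨Finsupp.single () s, single_mem_frGr _ (by simpa using hs), by simp⟩

end polygr
end RegLk

set_option linter.unusedSectionVars false
set_option linter.unusedVariables false
namespace RegLk
open MvPolynomial
section link
universe u v
variable {σ : Type u} {K : Type v} [Field K]

theorem cmp_zero_eq (p : MvPolynomial σ K) : cmp 0 p = C (coeff 0 p) := by
  unfold cmp
  rw [if_pos le_rfl]
  exact homogeneousComponent_zero _

theorem mdeg_eq (m : σ →₀ ℕ) : mdeg m = m.degree := rfl

/-- homogeneous component in a graded free module -/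
noncomputable def cmpF {ι : Type} (deg : ι → ℤ) (j : ℤ) (t : ι →₀ MvPolynomial σ K) :
    ι →₀ MvPolynomial σ K :=
  Finsupp.onFinset t.support (fun b => cmp (j - deg b) (t b)) (by
    intro b hb
    rw [Finsupp.mem_support_iff]
    intro h
    rw [h, map_zero] at hb
    exact hb rfl)

theorem cmpF_apply {ι : Type} (deg : ι → ℤ) (j : ℤ) (t : ι →₀ MvPolynomial σ K) (b : ι) :
    cmpF deg j t b = cmp (j - deg b) (t b) := rfl

theorem cmpF_add {ι : Type} (deg : ι → ℤ) (j : ℤ) (s t : ι →₀ MvPolynomial σ K) :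
    cmpF deg j (s + t) = cmpF deg j s + cmpF deg j t := by
  ext1 b
  rw [Finsupp.add_apply, cmpF_apply, cmpF_apply, cmpF_apply, Finsupp.add_apply, map_add]

theorem cmpF_zero {ι : Type} (deg : ι → ℤ) (j : ℤ) :
    cmpF deg j (0 : ι →₀ MvPolynomial σ K) = 0 := by
  ext1 b
  rw [cmpF_apply, Finsupp.zero_apply, map_zero]

theorem cmpF_mem {ι : Type} (deg : ι → ℤ) (j : ℤ) (t : ι →₀ MvPolynomial σ K) :
    cmpF deg j t ∈ frGr (Gp σ K) deg j := fun b => cmp_mem _ _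

theorem cmpF_self {ι : Type} {deg : ι → ℤ} {j : ℤ} {t : ι →₀ MvPolynomial σ K}
    (h : t ∈ frGr (Gp σ K) deg j) : cmpF deg j t = t := by
  ext1 b; exact cmp_self (h b)

theorem cmpF_single {ι : Type} (deg : ι → ℤ) (j : ℤ) (b : ι) (p : MvPolynomial σ K) :
    cmpF deg j (Finsupp.single b p) = Finsupp.single b (cmp (j - deg b) p) := by
  classical
  ext1 c
  rw [cmpF_apply, Finsupp.single_apply, Finsupp.single_apply]
  split_ifs with h
  · rw [h]
  · rw [map_zero]

theorem cmpF_smul {ι : Type} {deg : ι → ℤ} {e : ℤ} (j : ℤ) {w : ι →₀ MvPolynomial σ K}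
    (hw : w ∈ frGr (Gp σ K) deg e) (p : MvPolynomial σ K) :
    cmpF deg j (p • w) = cmp (j - e) p • w := by
  ext1 b
  rw [cmpF_apply, Finsupp.smul_apply, Finsupp.smul_apply, smul_eq_mul, smul_eq_mul, mul_comm,
    cmp_mul (hw b), mul_comm, show j - deg b - (e - deg b) = j - e by ring]

theorem cmpF_map {ι κ : Type} {deg : ι → ℤ} {deg' : κ → ℤ}
    (φ : (ι →₀ MvPolynomial σ K) →ₗ[MvPolynomial σ K] (κ →₀ MvPolynomial σ K))
    (hφ : ∀ b, φ (Finsupp.single b 1) ∈ frGr (Gp σ K) deg' (deg b)) (j : ℤ)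
    (t : ι →₀ MvPolynomial σ K) : cmpF deg' j (φ t) = φ (cmpF deg j t) := by
  induction t using Finsupp.induction_linear with
  | zero => rw [cmpF_zero, map_zero, cmpF_zero]
  | add f g hf hg => rw [map_add, cmpF_add, cmpF_add, map_add, hf, hg]
  | single b p =>
    have : ∀ q : MvPolynomial σ K, φ (Finsupp.single b q) = q • φ (Finsupp.single b 1) := by
      intro q; rw [← map_smul]; simp
    rw [cmpF_single, this p, this (cmp _ p), cmpF_smul j (hφ b)]

theorem cmp_map {ι : Type} {deg : ι → ℤ}
    (φ : (ι →₀ MvPolynomial σ K) →ₗ[MvPolynomial σ K] MvPolynomial σ K)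
    (hφ : ∀ b, φ (Finsupp.single b 1) ∈ Gp σ K (deg b)) (j : ℤ)
    (t : ι →₀ MvPolynomial σ K) : cmp j (φ t) = φ (cmpF deg j t) := by
  induction t using Finsupp.induction_linear with
  | zero => rw [cmpF_zero, map_zero, map_zero]
  | add f g hf hg => rw [map_add, map_add, cmpF_add, map_add, hf, hg]
  | single b p =>
    have : ∀ q : MvPolynomial σ K, φ (Finsupp.single b q) = q * φ (Finsupp.single b 1) := by
      intro q; rw [← smul_eq_mul, ← map_smul]; simp
    rw [cmpF_single, this p, this (cmp _ p), mul_comm, cmp_mul (hφ b), mul_comm]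

theorem map_mem {ι κ : Type} {deg : ι → ℤ} {deg' : κ → ℤ}
    (φ : (ι →₀ MvPolynomial σ K) →ₗ[MvPolynomial σ K] (κ →₀ MvPolynomial σ K))
    (hφ : ∀ b, φ (Finsupp.single b 1) ∈ frGr (Gp σ K) deg' (deg b)) {j : ℤ}
    {t : ι →₀ MvPolynomial σ K} (ht : t ∈ frGr (Gp σ K) deg j) :
    φ t ∈ frGr (Gp σ K) deg' j := by
  rw [← cmpF_self ht, ← cmpF_map φ hφ]; exact cmpF_mem _ _ _

theorem coeff_zero_of_mem {p : MvPolynomial σ K} {d : ℤ} (hp : p ∈ Gp σ K d) (hd : d ≠ 0) :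
    coeff 0 p = 0 := by
  by_contra h
  have := hp 0 h
  simp at this
  exact hd this.symm

theorem min_step {ι : Type} (deg : ι → ℤ) {Q : Type (max u v)} [AddCommGroup Q]
    [Module (MvPolynomial σ K) Q] {Z : ℤ → AddSubgroup Q} (hZ : GS (Gp σ K) Z)
    (φ : (ι →₀ MvPolynomial σ K) →ₗ[MvPolynomial σ K] Q) (r : ℤ)
    (hm : ∀ x, φ x = 0 → ∀ b, coeff 0 (x b) = 0)
    (h1 : ∀ j, ∀ t ∈ frGr (Gp σ K) deg j, φ t ∈ Z j)
    (h2 : ∀ j, ∀ c ∈ Z j, ∃ t ∈ frGr (Gp σ K) deg j, φ t = c)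
    (hP : ∀ l, P (Gp σ K) l Z r) :
    (∀ b, deg b ≤ r) ∧ ∀ l, P (Gp σ K) l (kerGr (frGr (Gp σ K) deg) φ) (r + 1) := by
  have hdeg : ∀ b, deg b ≤ r := by
    intro b
    by_contra hlt
    obtain ⟨κ, d, e, hr, hc⟩ := hP 0
    have h3 : φ (Finsupp.single b 1) ∈ Z (deg b) :=
      h1 _ _ (single_mem_frGr b (by rw [sub_self]; exact SetLike.one_mem_graded _))
    obtain ⟨p, hp, hpe⟩ := hc.2 _ _ h3
    choose y hy hy' using fun c => h2 _ _ (hc.1 c)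
    have h4 : φ (Finsupp.single b 1 - Finsupp.linearCombination _ y p) = 0 := by
      rw [map_sub, lc_map, sub_eq_zero, ← hpe]
      simp only [hy']
    have h5 := hm _ h4 b
    rw [Finsupp.sub_apply, coeff_sub, Finsupp.single_eq_same, coeff_zero_one] at h5
    have h6 : coeff 0 ((Finsupp.linearCombination (MvPolynomial σ K) y p) b) = 0 := by
      rw [Finsupp.linearCombination_apply, Finsupp.sum, Finsupp.finsetSum_apply, coeff_sum]
      refine Finset.sum_eq_zero fun c _ => ?_
      have h7 : coeff 0 (p c) = 0 := coeff_zero_of_mem (hp c) (by have := hr c; omega)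
      rw [Finsupp.smul_apply, smul_eq_mul, ← constantCoeff_eq, map_mul, constantCoeff_eq, h7,
        zero_mul]
    rw [h6, sub_zero] at h5
    exact one_ne_zero h5
  refine ⟨hdeg, fun l => ?_⟩
  refine sub_P (f := LinearMap.id) (g := φ) l (r + 1) (kerGr_GS (frGr_GS _) _) (frGr_GS _) hZ ?_
    (P_free _ _ _ fun b => (hdeg b).trans (by omega)) (by rw [add_sub_cancel_right]; exact hP _)
  exact ⟨fun j a ha => ha.1, h1, fun j a _ h => h, fun j a ha => ha.2,
    fun j b hb h => ⟨b, ⟨hb, h⟩, rfl⟩, h2⟩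

theorem d_homog {I : Ideal (MvPolynomial σ K)} (F : MinGradedFreeRes K σ I) (i : ℕ)
    (b : F.B (i + 1)) :
    F.d i (Finsupp.single b 1) ∈ frGr (Gp σ K) (fun c => (F.deg i c : ℤ)) (F.deg (i + 1) b) := by
  intro c m hm
  have := F.homog i b c m (mem_support_iff.2 hm)
  rw [mdeg_eq] at this
  show (m.degree : ℤ) = (F.deg (i + 1) b : ℤ) - (F.deg i c : ℤ)
  omega

theorem range_min {I : Ideal (MvPolynomial σ K)} (F : MinGradedFreeRes K σ I) (i : ℕ)
    (t : F.B (i + 1) →₀ MvPolynomial σ K) (c : F.B i) : coeff 0 (F.d i t c) = 0 := by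
  induction t using Finsupp.induction_linear with
  | zero => simp
  | add f g hf hg => rw [map_add, Finsupp.add_apply, coeff_add, hf, hg, add_zero]
  | single b p =>
    have : F.d i (Finsupp.single b p) = p • F.d i (Finsupp.single b 1) := by
      rw [← map_smul]; simp
    rw [this, Finsupp.smul_apply, smul_eq_mul, ← constantCoeff_eq, map_mul, constantCoeff_eq,
      F.minimal, mul_zero]

theorem upper {I : Ideal (MvPolynomial σ K)} (hI : HI I) {r : ℤ} (hr : Rc I r)
    (F : MinGradedFreeRes K σ I) (i : ℕ) (b : F.B i) : (F.deg i b : ℤ) ≤ r + i := by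
  have main : ∀ i : ℕ, (∀ b : F.B i, (F.deg i b : ℤ) ≤ r + i) ∧
      ∀ l, P (Gp σ K) l (fun j => frGr (Gp σ K) (fun c => (F.deg i c : ℤ)) j ⊓
        (LinearMap.range (F.d i)).toAddSubgroup) (r + i + 1) := by
    intro i
    induction i with
    | zero =>
      have hε : ∀ b : F.B 0, F.ε (Finsupp.single b 1) ∈ Gp σ K (F.deg 0 b) :=
        fun b => mem_Gp_nat.2 (F.ε_homog b)
      have hk : LinearMap.range (F.d 0) = LinearMap.ker (Submodule.mkQ I ∘ₗ F.ε) := by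
        rw [F.exact0, LinearMap.ker_comp, Submodule.ker_mkQ]
      have := min_step (fun c => (F.deg 0 c : ℤ)) (cyGr_GS I) (Submodule.mkQ I ∘ₗ F.ε) r
        (by
          intro x hx b
          have hx' : x ∈ LinearMap.range (F.d 0) := by rw [hk]; exact hx
          obtain ⟨t, rfl⟩ := hx'
          exact range_min F 0 t b)
        (by
          intro j t ht
          refine mem_cyGr.2 ⟨F.ε t, ?_, rfl⟩
          rw [← cmpF_self ht, ← cmp_map F.ε hε]; exact cmp_mem _ _)
        (by
          intro j c hc
          obtain ⟨s, hs, rfl⟩ := mem_cyGr.1 hc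
          obtain ⟨t, ht⟩ := F.surj s
          refine ⟨cmpF _ j t, cmpF_mem _ _ _, ?_⟩
          rw [LinearMap.comp_apply, ← sub_eq_zero, ← map_sub, mkQ_zero, ← cmp_map F.ε hε]
          have := hI _ ht j
          rwa [map_sub, cmp_self hs] at this) hr
      rw [hk]
      push_cast
      rw [add_zero]
      exact this
    | succ i ih =>
      have hk : LinearMap.range (F.d (i + 1)) = LinearMap.ker (F.d i) := F.exact i
      have := min_step (fun c => (F.deg (i + 1) c : ℤ)) (Z := fun j =>
          frGr (Gp σ K) (fun c => (F.deg i c : ℤ)) j ⊓ (LinearMap.range (F.d i)).toAddSubgroup) 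
        (by
          intro d j p m hp hm
          exact ⟨frGr_GS _ _ _ _ _ hp hm.1, Submodule.smul_mem _ p hm.2⟩) (F.d i) (r + i + 1)
        (by
          intro x hx b
          have hx' : x ∈ LinearMap.range (F.d (i + 1)) := by rw [hk]; exact hx
          obtain ⟨t, rfl⟩ := hx'
          exact range_min F (i + 1) t b)
        (by
          intro j t ht
          exact ⟨map_mem (F.d i) (d_homog F i) ht, ⟨t, rfl⟩⟩)
        (by
          rintro j c ⟨hc, t, rfl⟩
          refine ⟨cmpF _ j t, cmpF_mem _ _ _, ?_⟩
          rw [← cmpF_map (F.d i) (d_homog F i), cmpF_self hc]) ih.2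
      rw [hk]
      push_cast
      rw [← add_assoc]
      exact this
  exact (main i).1 b

/-! existence -/

theorem mem_span_homog {m : ℕ} (deg : Fin m → ℕ) (N : Submodule (MvPolynomial σ K) (Fin m →₀ MvPolynomial σ K))
    (hN : ∀ x ∈ N, ∀ j, cmpF (fun b => (deg b : ℤ)) j x ∈ N) :
    Submodule.span _ {x | x ∈ N ∧ ∃ j : ℕ, x ∈ frGr (Gp σ K) (fun b => (deg b : ℤ)) j} = N := by
  refine le_antisymm (Submodule.span_le.2 fun x hx => hx.1) fun x hx => ?_
  let J : ℕ := 1 + ∑ b, ((x b).totalDegree + deg b)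
  have : x = ∑ j ∈ Finset.range J, cmpF (fun b => (deg b : ℤ)) j x := by
    ext b mm
    rw [Finsupp.finsetSum_apply, coeff_sum]
    simp only [cmpF_apply, coeff_cmp]
    by_cases h0 : coeff mm (x b) = 0
    · simp [h0]
    · have h1 : mm.degree ≤ (x b).totalDegree := le_totalDegree (mem_support_iff.2 h0)
      have h2 : (x b).totalDegree + deg b ≤ ∑ b, ((x b).totalDegree + deg b) :=
        Finset.single_le_sum (f := fun b => (x b).totalDegree + deg b) (fun _ _ => Nat.zero_le _)
          (Finset.mem_univ b)
      rw [Finset.sum_eq_single (mm.degree + deg b)]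
      · rw [if_pos (by push_cast; ring)]
      · intro j _ hj
        rw [if_neg (by omega)]
      · intro hj
        exact absurd (Finset.mem_range.2 (by omega)) hj
  rw [this]
  exact Submodule.sum_mem _ fun j _ => Submodule.subset_span ⟨hN x hx j, j, cmpF_mem _ _ _⟩

/-- A stage of the construction of a minimal resolution -/
structure Stage (K : Type v) [Field K] (σ : Type u) where
  m : ℕ
  deg : Fin m → ℕ
  N : Submodule (MvPolynomial σ K) (Fin m →₀ MvPolynomial σ K)
  hN : ∀ x ∈ N, ∀ j, cmpF (fun b => (deg b : ℤ)) j x ∈ N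
  hmin : ∀ x ∈ N, ∀ b, coeff 0 (x b) = 0

theorem stage_step [Finite σ] (A : Stage K σ) : ∃ (A' : Stage K σ)
    (D : (Fin A'.m →₀ MvPolynomial σ K) →ₗ[MvPolynomial σ K] (Fin A.m →₀ MvPolynomial σ K)),
    LinearMap.range D = A.N ∧ LinearMap.ker D = A'.N ∧
    ∀ b, D (Finsupp.single b 1) ∈ frGr (Gp σ K) (fun b => (A.deg b : ℤ)) (A'.deg b) := by
  classical
  let F := Fin A.m →₀ MvPolynomial σ K
  let Pm : ℕ → Prop := fun t => ∃ v : Fin t → F, (∀ b, v b ∈ A.N ∧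
    ∃ j : ℕ, v b ∈ frGr (Gp σ K) (fun b => (A.deg b : ℤ)) j) ∧
    Submodule.span (MvPolynomial σ K) (Set.range v) = A.N
  have hex : ∃ t, Pm t := by
    have hfg : (Submodule.span (MvPolynomial σ K) {x | x ∈ A.N ∧ ∃ j : ℕ, x ∈ frGr (Gp σ K)
        (fun b => (A.deg b : ℤ)) j}).FG := IsNoetherian.noetherian _
    rw [Submodule.fg_span_iff_fg_span_finset_subset] at hfg
    obtain ⟨s, hs, hs'⟩ := hfg
    rw [mem_span_homog A.deg A.N A.hN] at hs'
    refine ⟨s.card, fun b => (s.equivFin.symm b : F), fun b => hs (s.equivFin.symm b).2, ?_⟩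
    rw [hs']
    congr 1
    ext x
    constructor
    · rintro ⟨b, rfl⟩; exact (s.equivFin.symm b).2
    · intro hx; exact ⟨s.equivFin ⟨x, hx⟩, by simp⟩
  obtain ⟨v, hv, hspan⟩ := Nat.find_spec hex
  have hmin := fun t => Nat.find_min (m := t) hex
  generalize Nat.find hex = t0 at v hv hspan hmin
  choose hvN dg hdg using hv
  let D := Finsupp.linearCombination (MvPolynomial σ K) v
  have hD : ∀ b, D (Finsupp.single b 1) ∈ frGr (Gp σ K) (fun b => (A.deg b : ℤ)) (dg b) := by
    intro b
    have : D (Finsupp.single b 1) = v b := by simp [D]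
    rw [this]; exact hdg b
  have hker : ∀ x ∈ LinearMap.ker D, ∀ j, cmpF (fun b => (dg b : ℤ)) j x ∈ LinearMap.ker D := by
    intro x hx j
    rw [LinearMap.mem_ker] at hx ⊢
    rw [← cmpF_map (deg := fun b => (dg b : ℤ)) D hD, hx, cmpF_zero]
  refine ⟨⟨t0, dg, LinearMap.ker D, hker, ?_⟩, D, ?_, rfl, hD⟩
  · intro x hx b
    by_contra hc
    have h1 := hker x hx (dg b)
    set x' := cmpF (fun b => (dg b : ℤ)) (dg b) x with hx'
    have hb : x' b = C (coeff 0 (x b)) := by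
      rw [hx', cmpF_apply, sub_self]
      exact cmp_zero_eq _
    set c := coeff 0 (x b) with hcdef
    cases t0 with
    | zero => exact b.elim0
    | succ t =>
    refine hmin t (Nat.lt_succ_self t) ⟨fun i => v (b.succAbove i), fun i => ⟨hvN _, _, hdg _⟩, ?_⟩
    refine le_antisymm (Submodule.span_le.2 ?_) ?_
    · rintro _ ⟨i, rfl⟩; exact hvN _
    rw [← hspan, Submodule.span_le]
    have hmem : ∀ i : Fin (t + 1), i ≠ b → v i ∈ Submodule.span (MvPolynomial σ K)
        (Set.range fun i => v (b.succAbove i)) := by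
      intro i hi
      obtain ⟨i', rfl⟩ := Fin.exists_succAbove_eq hi
      exact Submodule.subset_span ⟨i', rfl⟩
    rintro _ ⟨i, rfl⟩
    by_cases hi : i = b
    · subst hi
      have h2 : ∑ i, x' i • v i = 0 := by
        have := LinearMap.mem_ker.1 h1
        rwa [Finsupp.linearCombination_apply, Finsupp.sum_fintype _ _ (by simp)] at this
      rw [Fin.sum_univ_succAbove _ i, hb] at h2
      have h3 : v i = -(C c⁻¹ : MvPolynomial σ K) • ∑ l, x' (i.succAbove l) • v (i.succAbove l) := by
        rw [neg_smul, ← smul_neg, eq_comm, ← eq_neg_iff_add_eq_zero.2 h2, smul_smul, ← C_mul,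
          inv_mul_cancel₀ hc, C_1, one_smul]
      rw [SetLike.mem_coe, h3]
      exact Submodule.smul_mem _ _ (Submodule.sum_mem _ fun l _ => Submodule.smul_mem _ _
        (Submodule.subset_span ⟨l, rfl⟩))
    · exact hmem i hi
  · exact (Finsupp.range_linearCombination _).trans hspan

theorem exists_res [Finite σ] {I : Ideal (MvPolynomial σ K)} (hI : HI I) (h1 : I ≠ ⊤) :
    Nonempty (MinGradedFreeRes K σ I) := by
  classical
  choose nx D hr hk hh using stage_step (K := K) (σ := σ)
  let ε : (Fin 1 →₀ MvPolynomial σ K) →ₗ[MvPolynomial σ K] MvPolynomial σ K := Finsupp.lapply 0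
  let s0 : Stage K σ :=
    { m := 1
      deg := fun _ => 0
      N := Submodule.comap ε I
      hN := by
        intro x hx j
        show cmpF (fun _ : Fin 1 => ((0 : ℕ) : ℤ)) j x 0 ∈ I
        rw [cmpF_apply]
        exact hI _ hx _
      hmin := by
        intro x hx b
        have hx' : x 0 ∈ I := hx
        rw [Subsingleton.elim b 0]
        by_contra hc
        have := hI _ hx' 0
        rw [cmp_zero_eq] at this
        exact h1 (Ideal.eq_top_of_isUnit_mem _ this ((isUnit_iff_ne_zero.2 hc).map C)) }
  let st : ℕ → Stage K σ := fun i => Nat.rec s0 (fun _ A => nx A) i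
  refine ⟨{ B := fun i => Fin (st i).m
            finB := fun i => inferInstance
            deg := fun i => (st i).deg
            d := fun i => D (st i)
            ε := ε
            ε_homog := ?_
            surj := ?_
            exact0 := hr s0
            exact := ?_
            homog := ?_
            minimal := ?_ }⟩
  · intro b
    have : b = (0 : Fin 1) := Subsingleton.elim (α := Fin 1) _ _
    subst this
    show (Finsupp.single (0 : Fin 1) (1 : MvPolynomial σ K) 0).IsHomogeneous 0
    rw [Finsupp.single_eq_same]
    exact isHomogeneous_one σ K
  · intro s
    exact ⟨Finsupp.single (0 : Fin 1) s, by simp [ε]⟩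
  · intro i
    exact (hr (st (i + 1))).trans (hk (st i)).symm
  · intro i b c m hm
    have := hh (st i) b c m (mem_support_iff.1 hm)
    rw [mdeg_eq]
    have h2 : (m.degree : ℤ) = ((st (i + 1)).deg b : ℤ) - ((st i).deg c : ℤ) := this
    omega
  · intro i b c
    exact (st i).hmin _ (by rw [← hr (st i)]; exact ⟨_, rfl⟩) c

end link
end RegLk

set_option linter.unusedSectionVars false
set_option linter.unusedVariables false
namespace RegLk
open MvPolynomial
section lower
universe u v w
variable {σ : Type u} {K : Type v} [Field K]

/-- semilinear extension of a map on basis elements -/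
noncomputable def slc {S : Type*} [CommRing S] {T : Type*} [CommRing T] (π : S →+* T) {ι : Type} {E : Type*}
    [AddCommGroup E] [Module T E] (val : ι → E) : (ι →₀ S) →ₛₗ[π] E where
  toFun x := x.sum fun b p => π p • val b
  map_add' x y := by
    classical
    exact Finsupp.sum_add_index' (by simp) (by intros; rw [map_add, add_smul])
  map_smul' p x := by
    rw [Finsupp.sum_smul_index (by simp), Finsupp.smul_sum]
    simp only [map_mul, mul_smul]

theorem slc_single {S : Type*} [CommRing S] {T : Type*} [CommRing T] (π : S →+* T) {ι : Type} {E : Type*}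
    [AddCommGroup E] [Module T E] (val : ι → E) (b : ι) (p : S) :
    slc π val (Finsupp.single b p) = π p • val b := by
  show (Finsupp.single b p).sum (fun b p => π p • val b) = _
  rw [Finsupp.sum_single_index (by simp)]

theorem slc_ext {S : Type*} [CommRing S] {T : Type*} [CommRing T] {π : S →+* T} {ι : Type} {E : Type*}
    [AddCommGroup E] [Module T E] (α β : (ι →₀ S) →ₛₗ[π] E)
    (h : ∀ b, α (Finsupp.single b 1) = β (Finsupp.single b 1)) (x : ι →₀ S) : α x = β x := by
  induction x using Finsupp.induction_linear with
  | zero => rw [map_zero, map_zero]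
  | add f g hf hg => rw [map_add, map_add, hf, hg]
  | single b p =>
    have : Finsupp.single b p = p • Finsupp.single b (1 : S) := by simp
    rw [this, LinearMap.map_smulₛₗ, LinearMap.map_smulₛₗ, h]

theorem LB {I : Ideal (MvPolynomial σ K)} (hI : HI I) (F : MinGradedFreeRes K σ I)
    {T : Type w} [CommRing T] (π : MvPolynomial σ K →+* T) (mT : Ideal T)
    (hπ : ∀ p : MvPolynomial σ K, coeff 0 p = 0 → π p ∈ mT)
    {E1 E2 : Type w} [AddCommGroup E1] [Module T E1] [AddCommGroup E2] [Module T E2]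
    (κ1 : E1 →ₗ[T] T) (κ2 : E2 →ₗ[T] E1) (κ3 : T →ₗ[T] E2)
    (ex1 : ∀ x, κ1 x = 0 → ∃ y, κ2 y = x) (ex2 : ∀ x, κ2 x = 0 → ∃ y, κ3 y = x)
    (inj3 : ∀ t, κ3 t = 0 → t = 0) (hJ : ∀ p ∈ I, ∃ x, κ1 x = π p)
    (f : Fin 3 → MvPolynomial σ K) (hf : ∀ j, f j ∈ I)
    (A : Fin 3 → Fin 3 → MvPolynomial σ K) (hA : ∀ i, ∑ j, A i j * f j = 0)
    (v : Fin 3 → MvPolynomial σ K) (hv : ∀ j, ∑ i, v i * A i j = 0)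
    (a c : Fin 3 → ℤ) (e : ℤ) (hfa : ∀ j, f j ∈ Gp σ K (a j))
    (hAc : ∀ i j, A i j ∈ Gp σ K (c i - a j)) (hve : ∀ i, v i ∈ Gp σ K (e - c i))
    (hce : ∀ i, e - c i ≠ 0)
    (θ1 : Fin 3 → E1) (hθ1 : ∀ j, κ1 (θ1 j) = π (f j))
    (θ2 : Fin 3 → E2) (hθ2 : ∀ i, κ2 (θ2 i) = ∑ j, π (A i j) • θ1 j)
    (θ3 : T) (hθ3 : κ3 θ3 = ∑ i, π (v i) • θ2 i) (hunit : θ3 ∉ mT) :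
    ∃ b : F.B 3, (F.deg 3 b : ℤ) = e := by
  by_contra hno
  push Not at hno
  have hε : ∀ b : F.B 0, F.ε (Finsupp.single b 1) ∈ Gp σ K (F.deg 0 b) :=
    fun b => mem_Gp_nat.2 (F.ε_homog b)
  have dd : ∀ i x, F.d i (F.d (i + 1) x) = 0 := by
    intro i x
    have : F.d (i + 1) x ∈ LinearMap.ker (F.d i) := by rw [← F.exact i]; exact ⟨x, rfl⟩
    exact this
  -- lifting into F
  obtain ⟨t0, ht0, ht0'⟩ : ∃ t0 ∈ frGr (Gp σ K) (fun b => (F.deg 0 b : ℤ)) 0, F.ε t0 - 1 ∈ I := by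
    obtain ⟨t, ht⟩ := F.surj 1
    refine ⟨cmpF _ 0 t, cmpF_mem _ _ _, ?_⟩
    have := hI _ ht 0
    rwa [map_sub, cmp_map F.ε hε, cmp_self (show (1 : MvPolynomial σ K) ∈ Gp σ K 0 from SetLike.one_mem_graded _)] at this
  have liftF : ∀ i (j : ℤ) (y : F.B i →₀ MvPolynomial σ K),
      y ∈ frGr (Gp σ K) (fun b => (F.deg i b : ℤ)) j → y ∈ LinearMap.range (F.d i) →
      ∃ x ∈ frGr (Gp σ K) (fun b => (F.deg (i + 1) b : ℤ)) j, F.d i x = y := by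
    rintro i j y hy ⟨x, rfl⟩
    refine ⟨cmpF _ j x, cmpF_mem _ _ _, ?_⟩
    rw [← cmpF_map (F.d i) (d_homog F i), cmpF_self hy]
  have hu : ∀ j, ∃ u ∈ frGr (Gp σ K) (fun b => (F.deg 1 b : ℤ)) (a j), F.d 0 u = f j • t0 := by
    intro j
    refine liftF 0 (a j) _ ?_ ?_
    · have := frGr_GS (G := Gp σ K) (fun b => (F.deg 0 b : ℤ)) _ _ _ _ (hfa j) ht0
      rwa [add_zero] at this
    · rw [F.exact0]
      show F.ε (f j • t0) ∈ I
      rw [map_smul, smul_eq_mul]; exact Ideal.mul_mem_right _ _ (hf j)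
  choose uu hu hud using hu
  have hw : ∀ i, ∃ w ∈ frGr (Gp σ K) (fun b => (F.deg 2 b : ℤ)) (c i),
      F.d 1 w = ∑ j, A i j • uu j := by
    intro i
    refine liftF 1 (c i) _ (sum_mem fun j _ => ?_) ?_
    · have := frGr_GS (G := Gp σ K) (fun b => (F.deg 1 b : ℤ)) _ _ _ _ (hAc i j) (hu j)
      rwa [sub_add_cancel] at this
    · rw [F.exact 0, LinearMap.mem_ker, map_sum]
      simp only [map_smul, hud, smul_smul]
      rw [← Finset.sum_smul, hA, zero_smul]
  choose ww hw hwd using hw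
  obtain ⟨s, hs, hsd⟩ : ∃ s ∈ frGr (Gp σ K) (fun b => (F.deg 3 b : ℤ)) e,
      F.d 2 s = ∑ i, v i • ww i := by
    refine liftF 2 e _ (sum_mem fun i _ => ?_) ?_
    · have := frGr_GS (G := Gp σ K) (fun b => (F.deg 2 b : ℤ)) _ _ _ _ (hve i) (hw i)
      rwa [sub_add_cancel] at this
    · rw [F.exact 1, LinearMap.mem_ker, map_sum]
      simp only [map_smul, hwd, Finset.smul_sum, smul_smul]
      rw [Finset.sum_comm]
      simp only [← Finset.sum_smul, hv, zero_smul, Finset.sum_const_zero]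
  -- the comparison with the complex over T
  let ψ0 : (F.B 0 →₀ MvPolynomial σ K) →ₛₗ[π] T := slc π fun b => π (F.ε (Finsupp.single b 1))
  have hψ0 : ∀ x, ψ0 x = π (F.ε x) := by
    intro x
    induction x using Finsupp.induction_linear with
    | zero => simp
    | add f g hf hg => rw [map_add, map_add, map_add, hf, hg]
    | single b p =>
      have : Finsupp.single b p = p • Finsupp.single b (1 : MvPolynomial σ K) := by simp
      rw [slc_single, this, map_smul, smul_eq_mul, smul_eq_mul, map_mul]
  have hpsid0 : ∀ x, ∃ y, κ1 y = ψ0 (F.d 0 x) := by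
    intro x
    rw [hψ0]
    apply hJ
    have : F.d 0 x ∈ Submodule.comap F.ε I := by rw [← F.exact0]; exact ⟨x, rfl⟩
    exact this
  choose val1 hval1 using fun b => hpsid0 (Finsupp.single b 1)
  let ψ1 : (F.B 1 →₀ MvPolynomial σ K) →ₛₗ[π] E1 := slc π val1
  have hψ1 : ∀ x, κ1 (ψ1 x) = ψ0 (F.d 0 x) := by
    intro x
    refine slc_ext (κ1.comp ψ1) (ψ0.comp (F.d 0)) (fun b => ?_) x
    show κ1 (slc π val1 (Finsupp.single b 1)) = ψ0 (F.d 0 (Finsupp.single b 1))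
    rw [slc_single, map_one, one_smul, hval1]
  have hpsid1 : ∀ x, ∃ y, κ2 y = ψ1 (F.d 1 x) := by
    intro x; apply ex1; rw [hψ1, dd, map_zero]
  choose val2 hval2 using fun b => hpsid1 (Finsupp.single b 1)
  let ψ2 : (F.B 2 →₀ MvPolynomial σ K) →ₛₗ[π] E2 := slc π val2
  have hψ2 : ∀ x, κ2 (ψ2 x) = ψ1 (F.d 1 x) := by
    intro x
    refine slc_ext (κ2.comp ψ2) (ψ1.comp (F.d 1)) (fun b => ?_) x
    show κ2 (slc π val2 (Finsupp.single b 1)) = ψ1 (F.d 1 (Finsupp.single b 1))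
    rw [slc_single, map_one, one_smul, hval2]
  have hpsid2 : ∀ x, ∃ y, κ3 y = ψ2 (F.d 2 x) := by
    intro x; apply ex2; rw [hψ2, dd, map_zero]
  choose val3 hval3 using fun b => hpsid2 (Finsupp.single b 1)
  let ψ3 : (F.B 3 →₀ MvPolynomial σ K) →ₛₗ[π] T := slc π val3
  have hψ3 : ∀ x, κ3 (ψ3 x) = ψ2 (F.d 2 x) := by
    intro x
    refine slc_ext (κ3.comp ψ3) (ψ2.comp (F.d 2)) (fun b => ?_) x
    show κ3 (slc π val3 (Finsupp.single b 1)) = ψ2 (F.d 2 (Finsupp.single b 1))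
    rw [slc_single, map_one, one_smul, hval3]
  -- homotopies
  obtain ⟨h0, hh0⟩ := hJ _ ht0'
  have hh0' : ψ0 t0 = 1 + κ1 h0 := by rw [hh0, hψ0, map_sub, map_one]; ring
  have : ∀ j, ∃ y, κ2 y = ψ1 (uu j) - θ1 j - π (f j) • h0 := by
    intro j
    apply ex1
    have this : ψ0 (f j • t0) = π (f j) * (1 + κ1 h0) := by
      rw [LinearMap.map_smulₛₗ, hh0', smul_eq_mul]
    rw [map_sub, map_sub, hψ1, hud, this, hθ1, LinearMap.map_smul, smul_eq_mul]
    ring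
  choose h1 hh1 using this
  have hh1' : ∀ j, ψ1 (uu j) = θ1 j + π (f j) • h0 + κ2 (h1 j) := by
    intro j; rw [hh1]; abel
  have : ∀ i, ∃ y, κ3 y = ψ2 (ww i) - θ2 i - ∑ j, π (A i j) • h1 j := by
    intro i
    apply ex2
    rw [map_sub, map_sub, hψ2, hwd, hθ2, map_sum, map_sum]
    simp only [LinearMap.map_smulₛₗ, hh1', smul_add, Finset.sum_add_distrib, smul_smul,
      RingHom.id_apply]
    have : ∑ j, (π (A i j) * π (f j)) • h0 = 0 := by
      simp only [← map_mul]
      rw [← Finset.sum_smul, ← map_sum, hA, map_zero, zero_smul]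
    rw [this]; abel
  choose h2 hh2 using this
  have hh2' : ∀ i, ψ2 (ww i) = θ2 i + ∑ j, π (A i j) • h1 j + κ3 (h2 i) := by
    intro i; rw [hh2]; abel
  have fin : ψ3 s - θ3 - ∑ i, π (v i) • h2 i = 0 := by
    apply inj3
    rw [map_sub, map_sub, hψ3, hsd, hθ3, map_sum, map_sum]
    simp only [LinearMap.map_smulₛₗ, hh2', smul_add, Finset.sum_add_distrib, smul_smul,
      RingHom.id_apply, Finset.smul_sum]
    have : ∑ i, ∑ j, (π (v i) * π (A i j)) • h1 j = 0 := by
      rw [Finset.sum_comm]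
      simp only [← map_mul, ← Finset.sum_smul, ← map_sum, hv, map_zero, zero_smul,
        Finset.sum_const_zero]
    rw [this]; abel
  apply hunit
  have hθ : θ3 = ψ3 s - ∑ i, π (v i) • h2 i := by
    rw [sub_sub, sub_eq_zero] at fin
    rw [fin]; ring
  rw [hθ]
  refine sub_mem ?_ (sum_mem fun i _ => ?_)
  · show (s.sum fun b p => π p • val3 b) ∈ mT
    refine sum_mem fun b _ => ?_
    refine Ideal.mul_mem_right _ _ (hπ _ (coeff_zero_of_mem (hs b) ?_))
    have := hno b
    intro h
    exact this (by linarith)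
  · exact Ideal.mul_mem_right _ _ (hπ _ (coeff_zero_of_mem (hve i) (hce i)))

end lower
end RegLk

set_option linter.unusedSectionVars false
set_option linter.unusedVariables false
set_option linter.unusedSimpArgs false
namespace RegLk
open MvPolynomial
section koszul
universe u v w
variable {T : Type w} [CommRing T]

def kos1 (g1 g2 g3 : T) : (T × T × T) →ₗ[T] T where
  toFun x := g1 * x.1 + g2 * x.2.1 + g3 * x.2.2
  map_add' x y := by simp only [Prod.fst_add, Prod.snd_add]; ring
  map_smul' r x := by simp only [Prod.smul_fst, Prod.smul_snd, smul_eq_mul, RingHom.id_apply]; ring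

def kos2 (g1 g2 g3 : T) : (T × T × T) →ₗ[T] (T × T × T) where
  toFun y := (g2 * y.2.2 - g3 * y.2.1, g3 * y.1 - g1 * y.2.2, g1 * y.2.1 - g2 * y.1)
  map_add' x y := by ext <;> simp only [Prod.fst_add, Prod.snd_add] <;> ring
  map_smul' r x := by
    ext <;> simp only [Prod.smul_fst, Prod.smul_snd, smul_eq_mul, RingHom.id_apply] <;> ring

def kos3 (g1 g2 g3 : T) : T →ₗ[T] (T × T × T) where
  toFun t := (g1 * t, g2 * t, g3 * t)
  map_add' x y := by ext <;> simp only [Prod.fst_add, Prod.snd_add] <;> ring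
  map_smul' r x := by
    ext <;> simp only [Prod.smul_fst, Prod.smul_snd, smul_eq_mul, RingHom.id_apply] <;> ring

theorem kos_ex1 {g1 g2 g3 : T} (r1 : ∀ x, g1 * x = 0 → x = 0)
    (r2 : ∀ x y, g2 * x = g1 * y → ∃ c, x = g1 * c)
    (r3 : ∀ x a b, g3 * x = g1 * a + g2 * b → ∃ a b, x = g1 * a + g2 * b)
    (x : T × T × T) (hx : kos1 g1 g2 g3 x = 0) : ∃ y, kos2 g1 g2 g3 y = x := by
  obtain ⟨x1, x2, x3⟩ := x
  have hx : g1 * x1 + g2 * x2 + g3 * x3 = 0 := hx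
  obtain ⟨a, b, hab⟩ := r3 x3 (-x1) (-x2) (by linear_combination hx)
  obtain ⟨c, hc⟩ := r2 (x2 + g3 * b) (-(x1 + g3 * a)) (by
    linear_combination hx - g3 * hab)
  have h1 : x1 + g3 * a + g2 * c = 0 := r1 _ (by
    linear_combination hx - g3 * hab - g2 * hc)
  refine ⟨(-b, a, -c), ?_⟩
  show (_, _, _) = _
  ext
  · show g2 * (-c) - g3 * a = x1
    linear_combination -h1
  · show g3 * (-b) - g1 * (-c) = x2
    linear_combination -hc
  · show g1 * a - g2 * (-b) = x3
    linear_combination -hab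

theorem kos_ex2 {g1 g2 g3 : T} (r1 : ∀ x, g1 * x = 0 → x = 0)
    (r2 : ∀ x y, g2 * x = g1 * y → ∃ c, x = g1 * c)
    (y : T × T × T) (hy : kos2 g1 g2 g3 y = 0) : ∃ t, kos3 g1 g2 g3 t = y := by
  obtain ⟨y1, y2, y3⟩ := y
  have hy : (g2 * y3 - g3 * y2, g3 * y1 - g1 * y3, g1 * y2 - g2 * y1) = 0 := hy
  simp only [Prod.mk_eq_zero] at hy
  obtain ⟨e1, e2, e3⟩ := hy
  obtain ⟨t, ht⟩ := r2 y1 y2 (by linear_combination -e3)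
  refine ⟨t, ?_⟩
  show (g1 * t, g2 * t, g3 * t) = _
  have h2 : y2 - g2 * t = 0 := r1 _ (by linear_combination e3 + g2 * ht)
  have h3 : y3 - g3 * t = 0 := r1 _ (by linear_combination -e2 + g3 * ht)
  ext
  · exact ht.symm
  · show g2 * t = y2
    linear_combination -h2
  · show g3 * t = y3
    linear_combination -h3

theorem kos_inj3 {g1 g2 g3 : T} (r1 : ∀ x, g1 * x = 0 → x = 0)
    (t : T) (ht : kos3 g1 g2 g3 t = 0) : t = 0 := by
  have ht : (g1 * t, g2 * t, g3 * t) = 0 := ht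
  simp only [Prod.mk_eq_zero] at ht
  exact r1 _ ht.1

/-- the polynomial ring in three variables used for the lower bound -/
abbrev TT (K : Type v) [Field K] := Polynomial (Polynomial (Polynomial K))

variable (K : Type v) [Field K]
noncomputable def pp : TT K := Polynomial.C Polynomial.X
noncomputable def qq : TT K := Polynomial.C (Polynomial.C Polynomial.X)
noncomputable def aa : TT K := Polynomial.X
noncomputable def chi : TT K →+* K :=
  (Polynomial.constantCoeff.comp Polynomial.constantCoeff).comp Polynomial.constantCoeff

theorem chi_pp : chi K (pp K) = 0 := by simp [chi, pp]
theorem chi_qq : chi K (qq K) = 0 := by simp [chi, qq]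
theorem chi_aa : chi K (aa K) = 0 := by simp [chi, aa]

theorem rr1 (s : ℕ) (x : TT K) (h : pp K ^ s * x = 0) : x = 0 := by
  rcases mul_eq_zero.1 h with h | h
  · exact absurd (pow_eq_zero_iff_of_pos_or h) (by simp [pp])
  · exact h
where
  pow_eq_zero_iff_of_pos_or (h : pp K ^ s = 0) : pp K = 0 := by
    by_contra hne
    exact pow_ne_zero s hne h

theorem rr2 (s t : ℕ) (x y : TT K) (h : qq K ^ t * x = pp K ^ s * y) : ∃ c, x = pp K ^ s * c := by
  have hp : Prime (pp K) := Polynomial.prime_C_iff.2 Polynomial.prime_X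
  have hq : ¬ pp K ∣ qq K ^ t := by
    intro hd
    have := hp.dvd_of_dvd_pow hd
    unfold pp qq at this
    rw [Polynomial.C_dvd_iff_dvd_coeff] at this
    have := this 0
    rw [Polynomial.coeff_C_zero, Polynomial.X_dvd_iff, Polynomial.coeff_C_zero] at this
    exact Polynomial.X_ne_zero this
  obtain ⟨c, hc⟩ := hp.pow_dvd_of_dvd_mul_left s hq ⟨y, h⟩
  exact ⟨c, hc⟩

theorem rr3 (s t : ℕ) (c : Polynomial (Polynomial K)) (x a b : TT K)
    (h : (aa K ^ 2 - Polynomial.C c) * x = pp K ^ s * a + qq K ^ t * b) :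
    ∃ a b, x = pp K ^ s * a + qq K ^ t * b := by
  let J : Ideal (Polynomial (Polynomial K)) :=
    Ideal.span {Polynomial.X ^ s, Polynomial.C Polynomial.X ^ t}
  have hJ : ∀ y : TT K, y ∈ J.map (Polynomial.C) ↔ ∃ a b, y = pp K ^ s * a + qq K ^ t * b := by
    intro y
    rw [Ideal.map_span, Set.image_pair, Ideal.mem_span_pair]
    constructor
    · rintro ⟨a, b, rfl⟩; exact ⟨a, b, by simp only [pp, qq, map_pow]; ring⟩
    · rintro ⟨a, b, rfl⟩; exact ⟨a, b, by simp only [pp, qq, map_pow]; ring⟩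
  rw [← hJ]
  have h1 := (hJ _).2 ⟨a, b, h⟩
  rw [Ideal.mem_map_C_iff] at h1 ⊢
  have key : ∀ y : TT K, (∀ n, y.coeff n ∈ J) ↔ y.map (Ideal.Quotient.mk J) = 0 := by
    intro y
    rw [Polynomial.ext_iff]
    simp only [Polynomial.coeff_map, Polynomial.coeff_zero, Ideal.Quotient.eq_zero_iff_mem]
  rw [key] at h1 ⊢
  rw [Polynomial.map_mul] at h1
  have hm : ((aa K ^ 2 - Polynomial.C c).map (Ideal.Quotient.mk J)).Monic :=
    (Polynomial.monic_X_pow_sub_C c (by norm_num)).map _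
  exact hm.mul_right_eq_zero_iff.1 h1

variable {K} {σ : Type u} [Algebra K T]

theorem chi_aeval (ch : T →+* K) (hch : ∀ r, ch (algebraMap K T r) = r) (wt : σ → T) (hw : ∀ v, ch (wt v) = 0) (p : MvPolynomial σ K)
    (hp : coeff 0 p = 0) : aeval wt p ∈ RingHom.ker ch := by
  rw [RingHom.mem_ker]
  have : ch.comp (aeval wt : MvPolynomial σ K →ₐ[K] T).toRingHom = MvPolynomial.constantCoeff := by
    apply MvPolynomial.ringHom_ext
    · intro r; simpa using hch r
    · intro i; simpa using hw i
  have := DFunLike.congr_fun this p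
  rw [MvPolynomial.constantCoeff_eq, hp] at this
  exact this

/-- lower bound, binomial case -/
theorem LBI {I : Ideal (MvPolynomial σ K)} (hI : HI I) (F : MinGradedFreeRes K σ I)
    (ch : T →+* K) (hch : ∀ r, ch (algebraMap K T r) = r) (p q a : T) (wt : σ → T) (hw : ∀ v, ch (wt v) = 0) (xk xl yk yl z : σ)
    (w1 : wt xk = a) (w2 : wt xl = p) (w3 : wt yk = q) (w4 : wt yl = a)
    (w5 : wt z = p + q)
    (r1 : ∀ x, p ^ 2 * x = 0 → x = 0)
    (r2 : ∀ x y, q ^ 2 * x = p ^ 2 * y → ∃ c, x = p ^ 2 * c)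
    (r3 : ∀ x u v, (a ^ 2 - p * q) * x = p ^ 2 * u + q ^ 2 * v → ∃ u v, x = p ^ 2 * u + q ^ 2 * v)
    (h1 : X xl * X z - X xl * X yk ∈ I) (h2 : X yk * X z - X xl * X yk ∈ I)
    (h3 : X xk * X yl - X xl * X yk ∈ I)
    (hJ : ∀ P ∈ I, ∃ u v w, aeval wt P = p ^ 2 * u + q ^ 2 * v + (a ^ 2 - p * q) * w) :
    ∃ b : F.B 3, F.deg 3 b = 6 := by
  let f : Fin 3 → MvPolynomial σ K :=
    ![X xl * X z - X xl * X yk, X yk * X z - X xl * X yk, X xk * X yl - X xl * X yk]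
  have x2 : ∀ u v : σ, (X u * X v : MvPolynomial σ K) ∈ Gp σ K 2 := fun u v =>
    SetLike.mul_mem_graded (X_mem_Gp u) (X_mem_Gp v)
  have hf2 : ∀ j, f j ∈ Gp σ K 2 := by
    intro j; fin_cases j <;> exact sub_mem (x2 _ _) (x2 _ _)
  have fz : ∀ j, aeval wt (f j) = (![p ^ 2, q ^ 2, a ^ 2 - p * q] : Fin 3 → T) j := by
    intro j
    fin_cases j <;> simp [f, w1, w2, w3, w4, w5] <;> ring
  obtain ⟨b, hb⟩ := LB hI F (aeval wt : MvPolynomial σ K →ₐ[K] T).toRingHom (RingHom.ker ch)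
    (chi_aeval ch hch wt hw) (kos1 (p ^ 2) (q ^ 2) (a ^ 2 - p * q))
    (kos2 (p ^ 2) (q ^ 2) (a ^ 2 - p * q))
    (kos3 (p ^ 2) (q ^ 2) (a ^ 2 - p * q))
    (kos_ex1 r1 r2 r3) (kos_ex2 r1 r2) (kos_inj3 r1)
    (by
      intro p hp
      obtain ⟨a, b, c, h⟩ := hJ p hp
      exact ⟨(a, b, c), h.symm⟩)
    f (by intro j; fin_cases j; exacts [h1, h2, h3])
    ![![0, f 2, - f 1], ![- f 2, 0, f 0], ![f 1, - f 0, 0]]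
    (by intro i; fin_cases i <;> simp [Fin.sum_univ_three] <;> ring)
    f (by intro j; fin_cases j <;> simp [Fin.sum_univ_three] <;> ring)
    (fun _ => 2) (fun _ => 4) 6 hf2
    (by
      intro i j
      have e : (4 - 2 : ℤ) = 2 := by norm_num
      rw [e]
      fin_cases i <;> fin_cases j <;> simp [hf2])
    (by intro i; exact hf2 i) (by intro i; norm_num)
    ![(1, 0, 0), (0, 1, 0), (0, 0, 1)]
    (by
      intro j
      refine Eq.trans ?_ (fz j).symm
      fin_cases j <;> simp [kos1])
    ![(1, 0, 0), (0, 1, 0), (0, 0, 1)]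
    (by
      intro i
      have : ∀ p, (aeval wt : MvPolynomial σ K →ₐ[K] T).toRingHom p = aeval wt p := fun _ => rfl
      fin_cases i <;> simp [Fin.sum_univ_three, kos2, this, fz])
    1
    (by
      have : ∀ p, (aeval wt : MvPolynomial σ K →ₐ[K] T).toRingHom p = aeval wt p := fun _ => rfl
      simp [Fin.sum_univ_three, kos3, this, fz])
    (by rw [RingHom.mem_ker, map_one]; exact one_ne_zero)
  exact ⟨b, by exact_mod_cast hb⟩

/-- lower bound, monomial case -/
theorem LBM {I : Ideal (MvPolynomial σ K)} (hI : HI I) (F : MinGradedFreeRes K σ I)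
    (ch : T →+* K) (hch : ∀ r, ch (algebraMap K T r) = r) (p q a : T) (wt : σ → T) (hw : ∀ v, ch (wt v) = 0) (xk xl yk yl z : σ)
    (w1 : wt xk = a) (w2 : wt xl = p) (w3 : wt yk = q) (w4 : wt yl = a)
    (w5 : wt z = p + q)
    (r1 : ∀ x, p ^ 1 * x = 0 → x = 0)
    (r2 : ∀ x y, q ^ 3 * x = p ^ 1 * y → ∃ c, x = p ^ 1 * c)
    (r3 : ∀ x u v, a ^ 2 * x = p ^ 1 * u + q ^ 3 * v → ∃ u v, x = p ^ 1 * u + q ^ 3 * v)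
    (h1 : X xk * X yl ∈ I) (h2 : X xl * X yk ∈ I) (h3 : X yk * X yk * X z ∈ I)
    (hJ : ∀ P ∈ I, ∃ u v w, aeval wt P = p ^ 1 * u + q ^ 3 * v + (a ^ 2) * w) :
    ∃ b : F.B 3, F.deg 3 b = 6 := by
  let f : Fin 3 → MvPolynomial σ K := ![X xk * X yl, X xl * X yk, X yk * X yk * X z]
  have x1 : ∀ u : σ, (X u : MvPolynomial σ K) ∈ Gp σ K 1 := X_mem_Gp
  have x2 : ∀ u v : σ, (X u * X v : MvPolynomial σ K) ∈ Gp σ K 2 := fun u v =>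
    SetLike.mul_mem_graded (X_mem_Gp u) (X_mem_Gp v)
  have x3 : ∀ u v w : σ, (X u * X v * X w : MvPolynomial σ K) ∈ Gp σ K 3 := fun u v w =>
    SetLike.mul_mem_graded (x2 u v) (X_mem_Gp w)
  have this : ∀ p, (aeval wt : MvPolynomial σ K →ₐ[K] T).toRingHom p = aeval wt p := fun _ => rfl
  obtain ⟨b, hb⟩ := LB hI F (aeval wt : MvPolynomial σ K →ₐ[K] T).toRingHom (RingHom.ker ch)
    (chi_aeval ch hch wt hw) (kos1 (p ^ 1) (q ^ 3) (a ^ 2))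
    (kos2 (p ^ 1) (q ^ 3) (a ^ 2))
    (kos3 (p ^ 1) (q ^ 3) (a ^ 2))
    (kos_ex1 r1 r2 r3) (kos_ex2 r1 r2) (kos_inj3 r1)
    (by
      intro p hp
      obtain ⟨a, b, c, h⟩ := hJ p hp
      exact ⟨(a, b, c), h.symm⟩)
    f (by intro j; fin_cases j; exacts [h1, h2, h3])
    ![![0, X yk * X z, - X xl], ![X xl * X yk, - (X xk * X yl), 0],
      ![X yk * X yk * X z, 0, - (X xk * X yl)]]
    (by intro i; fin_cases i <;> simp [Fin.sum_univ_three, f] <;> ring)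
    ![X xk * X yl, X yk * X z, - X xl]
    (by intro j; fin_cases j <;> simp [Fin.sum_univ_three] <;> ring)
    ![2, 2, 3] ![4, 4, 5] 6
    (by intro j; fin_cases j; exacts [x2 _ _, x2 _ _, x3 _ _ _])
    (by
      intro i j
      fin_cases i <;> fin_cases j <;> norm_num [x1, x2, x3])
    (by intro i; fin_cases i <;> norm_num [x1, x2, x3]) (by intro i; fin_cases i <;> norm_num)
    ![(0, 0, 1), (q, 0, 0), (q ^ 2, 1, 0)]
    (by
      intro j
      fin_cases j <;> simp [kos1, this, f, w1, w2, w3, w4, w5] <;> ring)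
    ![(0, 0, 1), (0, q, 0), (-1, q ^ 2, 0)]
    (by
      intro i
      fin_cases i <;> simp [Fin.sum_univ_three, kos2, this, w1, w2, w3, w4, w5] <;>
        (repeat' apply And.intro) <;> ring)
    1
    (by
      simp [Fin.sum_univ_three, kos3, this, w1, w2, w3, w4, w5]
      try (constructor <;> ring))
    (by rw [RingHom.mem_ker, map_one]; exact one_ne_zero)
  exact ⟨b, by exact_mod_cast hb⟩

theorem chi_alg (r : K) : chi K (algebraMap K (TT K) r) = r := by
  simp [chi, Polynomial.algebraMap_apply]

theorem hcpq : pp K * qq K = Polynomial.C (Polynomial.X * Polynomial.C Polynomial.X) := by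
    rw [map_mul]; rfl
theorem hr3 : ∀ x a b : TT K, (aa K ^ 2 - pp K * qq K) * x = pp K ^ 2 * a + qq K ^ 2 * b →
    ∃ a b, x = pp K ^ 2 * a + qq K ^ 2 * b := by
  rw [hcpq]
  exact rr3 K 2 2 (Polynomial.X * Polynomial.C Polynomial.X)

theorem LBI' {I : Ideal (MvPolynomial σ K)} (hI : HI I) (F : MinGradedFreeRes K σ I)
    (wt : σ → TT K) (hw : ∀ v, chi K (wt v) = 0) (xk xl yk yl z : σ)
    (w1 : wt xk = aa K) (w2 : wt xl = pp K) (w3 : wt yk = qq K) (w4 : wt yl = aa K)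
    (w5 : wt z = pp K + qq K)
    (h1 : X xl * X z - X xl * X yk ∈ I) (h2 : X yk * X z - X xl * X yk ∈ I)
    (h3 : X xk * X yl - X xl * X yk ∈ I)
    (hJ : ∀ P ∈ I, ∃ u v w, aeval wt P =
      pp K ^ 2 * u + qq K ^ 2 * v + (aa K ^ 2 - pp K * qq K) * w) :
    ∃ b : F.B 3, F.deg 3 b = 6 := by
  have A := @LBI (TT K) _ K _ σ _ I hI F (chi K) chi_alg (pp K) (qq K) (aa K) wt hw xk xl yk yl z w1 w2 w3 w4 
  have A := A w5
  have A := A (rr1 K 2)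
  have A := A (rr2 K 2 2)
  have A := A hr3
  have A := A h1 h2 h3
  exact A hJ

theorem hr3' : ∀ x a b : TT K, aa K ^ 2 * x = pp K ^ 1 * a + qq K ^ 3 * b →
    ∃ a b, x = pp K ^ 1 * a + qq K ^ 3 * b := by
  intro x a b h
  refine rr3 K 1 3 0 x a b ?_
  have h0 : (Polynomial.C 0 : TT K) = 0 := Polynomial.C_0
  rw [← h, h0]
  ring

theorem LBM' {I : Ideal (MvPolynomial σ K)} (hI : HI I) (F : MinGradedFreeRes K σ I)
    (wt : σ → TT K) (hw : ∀ v, chi K (wt v) = 0) (xk xl yk yl z : σ)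
    (w1 : wt xk = aa K) (w2 : wt xl = pp K) (w3 : wt yk = qq K) (w4 : wt yl = aa K)
    (w5 : wt z = pp K + qq K)
    (h1 : X xk * X yl ∈ I) (h2 : X xl * X yk ∈ I) (h3 : X yk * X yk * X z ∈ I)
    (hJ : ∀ P ∈ I, ∃ u v w, aeval wt P = pp K ^ 1 * u + qq K ^ 3 * v + aa K ^ 2 * w) :
    ∃ b : F.B 3, F.deg 3 b = 6 := by
  have A := @LBM (TT K) _ K _ σ _ I hI F (chi K) chi_alg (pp K) (qq K) (aa K) wt hw xk xl yk yl z
    w1 w2 w3 w4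
  have A := A w5
  have A := A (rr1 K 1)
  have A := A (rr2 K 1 3)
  have A := A hr3'
  have A := A h1 h2 h3
  exact A hJ

end koszul
end RegLk

set_option linter.unusedSectionVars false
set_option linter.unusedVariables false
set_option linter.unusedSimpArgs false
namespace RegLk
open MvPolynomial
section mono
universe u v
variable {σ : Type u} {K : Type v} [Field K]

/-- monomial ideal attached to a set of exponents -/
noncomputable def MI (K : Type v) [Field K] (U : (σ →₀ ℕ) → Prop) : Ideal (MvPolynomial σ K) :=
  Ideal.span ((fun m => monomial m (1 : K)) '' {m | U m})

def Up (U : (σ →₀ ℕ) → Prop) : Prop := ∀ m m', m ≤ m' → U m → U m'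

theorem mem_MI {U : (σ →₀ ℕ) → Prop} (hU : Up U) {p : MvPolynomial σ K} :
    p ∈ MI K U ↔ ∀ m ∈ p.support, U m := by
  rw [MI, mem_ideal_span_monomial_image]
  constructor
  · intro h m hm
    obtain ⟨s, hs, hle⟩ := h m hm
    exact hU s m hle hs
  · intro h m hm
    exact ⟨m, h m hm, le_rfl⟩

theorem MI_congr {U U' : (σ →₀ ℕ) → Prop} (h : ∀ m, U m ↔ U' m) : MI K U = MI K U' := by
  have : U = U' := funext fun m => propext (h m)
  rw [this]

theorem HI_MI (U : (σ →₀ ℕ) → Prop) : HI (MI K U) := by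
  apply HI_span
  rintro p ⟨m, _, rfl⟩
  exact ⟨_, monomial_mem_Gp m 1⟩

theorem Up_colon {U : (σ →₀ ℕ) → Prop} (hU : Up U) (v : σ) :
    Up fun m => U (m + Finsupp.single v 1) :=
  fun m m' h hm => hU _ _ (by gcongr) hm

theorem Up_sum {U : (σ →₀ ℕ) → Prop} (hU : Up U) (v : σ) :
    Up fun m => U m ∨ 1 ≤ m v :=
  fun m m' h hm => hm.imp (hU _ _ h) fun h1 => h1.trans (h v)

theorem MI_colon {U : (σ →₀ ℕ) → Prop} (hU : Up U) (v : σ) (s : MvPolynomial σ K) :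
    s ∈ MI K (fun m => U (m + Finsupp.single v 1)) ↔ X v * s ∈ MI K U := by
  classical
  rw [mem_MI hU, mem_MI (Up_colon hU v), mul_comm, support_mul_X]
  simp

theorem MI_sum {U : (σ →₀ ℕ) → Prop} (hU : Up U) (v : σ) :
    MI K (fun m => U m ∨ 1 ≤ m v) = MI K U ⊔ Ideal.span {X v} := by
  apply le_antisymm
  · rw [MI, Ideal.span_le]
    rintro _ ⟨m, hm, rfl⟩
    rcases hm with hm | hm
    · exact Ideal.mem_sup_left (Ideal.subset_span ⟨m, hm, rfl⟩)
    · refine Ideal.mem_sup_right ?_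
      rw [Ideal.mem_span_singleton]
      refine ⟨monomial (m - Finsupp.single v 1) 1, ?_⟩
      rw [X, monomial_mul, one_mul, add_tsub_cancel_of_le]
      rwa [Finsupp.single_le_iff]
  · refine sup_le ?_ ?_
    · exact Ideal.span_mono (Set.image_mono fun m hm => Or.inl hm)
    · rw [Ideal.span_le, Set.singleton_subset_iff]
      exact Ideal.subset_span ⟨Finsupp.single v 1, Or.inr (by simp), rfl⟩

theorem R1M {U : (σ →₀ ℕ) → Prop} (hU : Up U) (v : σ) {r : ℤ}
    (h1 : Rc (MI K fun m => U (m + Finsupp.single v 1)) (r - 1))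
    (h2 : Rc (MI K fun m => U m ∨ 1 ≤ m v) r) : Rc (MI K U) r :=
  R1 (X v) 1 (X_mem_Gp v) (HI_MI U) (MI_colon hU v) (MI_sum hU v) h1 h2

/-- variable ideals -/
def VU (S : Set σ) (m : σ →₀ ℕ) : Prop := ∃ v ∈ S, 1 ≤ m v

theorem VU_up (S : Set σ) : Up (VU S) := fun m m' h ⟨v, hv, h1⟩ => ⟨v, hv, h1.trans (h v)⟩

theorem Rc_VU [Finite σ] (S : Set σ) : Rc (MI K (VU S)) 0 := by
  classical
  induction S, S.toFinite using Set.Finite.induction_on with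
  | empty =>
    have : MI K (VU (∅ : Set σ)) = ⊥ := by simp [MI, VU]
    rw [this]; exact Rc_bot
  | @insert v S hv hS ih =>
    refine R2 (X v) 1 (X_mem_Gp v) (HI_MI (VU S)) (J := MI K (VU S)) ?_ ?_ ih (by simpa using ih)
    · intro s
      rw [← MI_colon (VU_up S) v, MI_congr]
      intro m
      unfold VU
      refine exists_congr fun w => and_congr_right fun hw => ?_
      have : v ≠ w := by rintro rfl; exact hv hw
      simp [this]
    · rw [← MI_sum (VU_up S) v]
      apply MI_congr
      intro m
      unfold VU
      simp only [Set.mem_insert_iff, exists_eq_or_imp]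
      exact or_comm

/-- Ferrers type ideals -/
def FE {n : ℕ} (xs ys : Fin n → σ) (S : Set σ) (E : Fin n → Fin n → Prop) (m : σ →₀ ℕ) : Prop :=
  VU S m ∨ ∃ i j, E i j ∧ 1 ≤ m (xs i) ∧ 1 ≤ m (ys j)

theorem FE_up {n : ℕ} (xs ys : Fin n → σ) (S : Set σ) (E : Fin n → Fin n → Prop) :
    Up (FE xs ys S E) := by
  intro m m' h hm
  rcases hm with hm | ⟨i, j, h1, h2, h3⟩
  · exact Or.inl (VU_up S _ _ h hm)
  · exact Or.inr ⟨i, j, h1, h2.trans (h _), h3.trans (h _)⟩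

theorem Rc_FE [Finite σ] {n : ℕ} (xs ys : Fin n → σ) (hd : ∀ i j, xs i ≠ ys j)
    (hinj : Function.Injective xs) (E : Fin n → Fin n → Prop)
    (hE : ∀ i i', (∀ j, E i j → E i' j) ∨ (∀ j, E i' j → E i j)) (N : ℕ) :
    ∀ S : Set σ, Nat.card {i // xs i ∉ S} = N → Rc (MI K (FE xs ys S E)) 1 := by
  classical
  induction N with
  | zero =>
    intro S hS
    have hall : ∀ i, xs i ∈ S := by
      intro i
      by_contra hi
      have : IsEmpty {i // xs i ∉ S} := by
        rcases Nat.card_eq_zero.1 hS with h | h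
        · exact h
        · exact absurd (inferInstance : Finite {i // xs i ∉ S}) (by rwa [not_finite_iff_infinite])
      exact this.false ⟨i, hi⟩
    refine Rc_mono zero_le_one ?_
    have : MI K (FE xs ys S E) = MI K (VU S) := by
      apply MI_congr
      intro m
      constructor
      · rintro (h | ⟨i, j, h1, h2, h3⟩)
        · exact h
        · exact ⟨xs i, hall i, h2⟩
      · exact Or.inl
    rw [this]
    exact Rc_VU S
  | succ N ih =>
    intro S hS
    have hne : (Finset.univ.filter fun i => xs i ∉ S).Nonempty := by
      have : 0 < Nat.card {i // xs i ∉ S} := by omega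
      obtain ⟨⟨i, hi⟩⟩ := (Nat.card_pos_iff.1 this).1
      exact ⟨i, by simpa using hi⟩
    obtain ⟨i0, hi0, hmax⟩ := Finset.exists_max_image _
      (fun i => (Finset.univ.filter fun j => E i j).card) hne
    simp only [Finset.mem_filter, Finset.mem_univ, true_and] at hi0 hmax
    have hN : ∀ i, xs i ∉ S → ∀ j, E i j → E i0 j := by
      intro i hi
      rcases hE i i0 with h | h
      · exact h
      · have hsub : (Finset.univ.filter fun j => E i0 j) ⊆ (Finset.univ.filter fun j => E i j) := by
          intro j hj; simp only [Finset.mem_filter, Finset.mem_univ, true_and] at hj ⊢; exact h j hj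
        have := Finset.eq_of_subset_of_card_le hsub (hmax i hi)
        intro j hj
        have hj' : j ∈ (Finset.univ.filter fun j => E i0 j) := by rw [this]; simpa using hj
        simpa using hj'
    refine R1M (FE_up _ _ _ _) (xs i0) ?_ ?_
    · have : MI K (fun m => FE xs ys S E (m + Finsupp.single (xs i0) 1)) =
          MI K (VU (S ∪ ys '' {j | E i0 j})) := by
        apply MI_congr
        intro m
        constructor
        · rintro (⟨v, hv, h⟩ | ⟨i, j, h1, h2, h3⟩)
          · have : xs i0 ≠ v := by rintro rfl; exact hi0 hv
            exact ⟨v, Or.inl hv, by simpa [this] using h⟩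
          · by_cases hi : xs i ∈ S
            · have : xs i0 ≠ xs i := by intro h; rw [← h] at hi; exact hi0 hi
              exact ⟨xs i, Or.inl hi, by simpa [this] using h2⟩
            · exact ⟨ys j, Or.inr ⟨j, hN i hi j h1, rfl⟩, by simpa [hd] using h3⟩
        · rintro ⟨v, hv | ⟨j, hj, rfl⟩, h⟩
          · refine Or.inl ⟨v, hv, ?_⟩
            simp only [Finsupp.add_apply]; omega
          · refine Or.inr ⟨i0, j, hj, by simp, ?_⟩
            simp only [Finsupp.add_apply]; omega
      rw [this]
      exact Rc_mono (by norm_num) (Rc_VU _)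
    · have : MI K (fun m => FE xs ys S E m ∨ 1 ≤ m (xs i0)) =
          MI K (FE xs ys (insert (xs i0) S) E) := by
        apply MI_congr
        intro m
        unfold FE VU
        simp only [Set.mem_insert_iff, exists_eq_or_imp]
        exact or_comm.trans or_assoc.symm
      rw [this]
      apply ih
      have e1 : Nat.card {i // xs i ∉ S} = (Finset.univ.filter fun i => xs i ∉ S).card := by
        rw [Nat.card_eq_fintype_card, Fintype.card_subtype]
      have e2 : Nat.card {i // xs i ∉ insert (xs i0) S} =
          ((Finset.univ.filter fun i => xs i ∉ S).erase i0).card := by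
        rw [Nat.card_eq_fintype_card, Fintype.card_subtype]
        congr 1
        ext i
        simp [hinj.eq_iff]
      rw [e2, Finset.card_erase_of_mem (by simpa using hi0), ← e1, hS]
      rfl

theorem Rc_FE' [Finite σ] {n : ℕ} (xs ys : Fin n → σ) (hd : ∀ i j, xs i ≠ ys j)
    (hinj : Function.Injective xs) (E : Fin n → Fin n → Prop)
    (hE : ∀ i i', (∀ j, E i j → E i' j) ∨ (∀ j, E i' j → E i j)) (S : Set σ)
    {U : (σ →₀ ℕ) → Prop} (hU : ∀ m, U m ↔ FE xs ys S E m) {r : ℤ} (hr : 1 ≤ r) :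
    Rc (MI K U) r := by
  rw [MI_congr hU]
  exact Rc_mono hr (Rc_FE xs ys hd hinj E hE _ S rfl)

end mono
end RegLk

set_option linter.unusedSectionVars false
set_option linter.unusedVariables false
set_option linter.unusedSimpArgs false
namespace RegLk
open MvPolynomial
section monoM
universe u v
variable {σ : Type u} {K : Type v} [Field K] {n : ℕ}

/-- the combinatorial description of the monomial ideal -/
def core (κ l : Fin n) (A B : Fin n → Prop) (D Z : Prop) : Prop :=
  (∃ i j : Fin n, i < j ∧ A j ∧ B i) ∨ (∃ i, i < κ ∧ A i ∧ B l) ∨ (∃ j, l ≤ j ∧ A κ ∧ B j) ∨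
  (∃ i j, i < κ ∧ l < j ∧ A i ∧ A l ∧ B j) ∨ (∃ i j, i < κ ∧ l < j ∧ A i ∧ B κ ∧ B j) ∨
  (∃ i, i < κ ∧ B i ∧ B κ ∧ Z) ∨ (D ∧ Z) ∨ (A l ∧ Z)

def Fc (Sx Sy : Fin n → Prop) (Sz : Prop) (E : Fin n → Fin n → Prop)
    (A B : Fin n → Prop) (Z : Prop) : Prop :=
  (∃ i, Sx i ∧ A i) ∨ (∃ i, Sy i ∧ B i) ∨ (Sz ∧ Z) ∨ (∃ i j, E i j ∧ A i ∧ B j)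

theorem core_iff (κ l : Fin n) (A B : Fin n → Prop) (D Z : Prop) : core κ l A B D Z ↔
  (∃ j, A j ∧ ∃ i, B i ∧ i < j) ∨ (∃ i, A i ∧ i < κ ∧ B l) ∨ (∃ j, B j ∧ l ≤ j ∧ A κ) ∨
  (∃ i, A i ∧ i < κ ∧ A l ∧ ∃ j, B j ∧ l < j) ∨ (∃ i, A i ∧ i < κ ∧ B κ ∧ ∃ j, B j ∧ l < j) ∨
  (∃ i, B i ∧ i < κ ∧ B κ ∧ Z) ∨ (D ∧ Z) ∨ (A l ∧ Z) := by
  unfold core; grind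

theorem Fc_iff (Sx Sy : Fin n → Prop) (Sz : Prop) (E : Fin n → Fin n → Prop)
    (A B : Fin n → Prop) (Z : Prop) : Fc Sx Sy Sz E A B Z ↔
  (∃ i, A i ∧ Sx i) ∨ (∃ i, B i ∧ Sy i) ∨ (Sz ∧ Z) ∨ (∃ i, A i ∧ ∃ j, B j ∧ E i j) := by
  unfold Fc; grind

variable {κ l : Fin n} (hl : (κ : ℕ) + 1 = l) {A B : Fin n → Prop} {D Z : Prop} (hD : D → B κ)
include hl hD

theorem leaf1 : core κ l A (fun i => κ = i ∨ B i) (B κ) True ↔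
    Fc (fun i => κ < i) (fun i => i ≤ κ) False (fun i j => i ≤ κ ∧ κ < j) A B Z := by
  simp only [core_iff, Fc_iff, Fin.lt_def, Fin.le_def, Fin.ext_iff]; grind

theorem leaf2 : (core κ l (fun i => κ = i ∨ A i) B D True ∨ B κ) ↔
    Fc (fun i => i = l) (fun i => True) False (fun i j => False) A B Z := by
  simp only [core_iff, Fc_iff, Fin.lt_def, Fin.le_def, Fin.ext_iff]; grind

theorem leaf3 : (core κ l A (fun i => l = i ∨ B i) D True ∨ B κ) ∨ A κ ↔
    Fc (fun i => True) (fun i => i = κ) False (fun i j => False) A B Z := by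
  simp only [core_iff, Fc_iff, Fin.lt_def, Fin.le_def, Fin.ext_iff]; grind

theorem leaf4 : ((core κ l A B D True ∨ B κ) ∨ A κ) ∨ B l ↔
    Fc (fun i => i = κ ∨ i = l) (fun i => i = κ ∨ i = l) False (fun i j => j < i) A B Z := by
  simp only [core_iff, Fc_iff, Fin.lt_def, Fin.le_def, Fin.ext_iff]; grind

theorem leaf5 : core κ l (fun i => κ = i ∨ A i) B D Z ∨ Z ↔
    Fc (fun i => False) (fun i => i ≠ κ) True (fun i j => j = κ ∧ κ < i) A B Z := by
  simp only [core_iff, Fc_iff, Fin.lt_def, Fin.le_def, Fin.ext_iff]; grind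

theorem leaf6 : (core κ l A (fun i => κ = i ∨ B i) (B κ) Z ∨ Z) ∨ A κ ↔
    Fc (fun i => κ ≤ i) (fun i => False) True (fun i j => i < κ ∧ (j < i ∨ l ≤ j)) A B Z := by
  simp only [core_iff, Fc_iff, Fin.lt_def, Fin.le_def, Fin.ext_iff]; grind

theorem leaf7 : ((core κ l (fun i => l = i ∨ A i) B D Z ∨ Z) ∨ A κ) ∨ B κ ↔
    Fc (fun i => κ = i) (fun i => i ≤ κ) True
      (fun i j => (i < κ ∧ l ≤ j) ∨ (l ≤ j ∧ j < i)) A B Z := by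
  simp only [core_iff, Fc_iff, Fin.lt_def, Fin.le_def, Fin.ext_iff]; grind

theorem leaf8 : (((core κ l A (fun i => l = i ∨ B i) D Z ∨ Z) ∨ A κ) ∨ B κ) ∨ A l ↔
    Fc (fun i => True) (fun i => i = κ) True (fun i j => False) A B Z := by
  simp only [core_iff, Fc_iff, Fin.lt_def, Fin.le_def, Fin.ext_iff]; grind

theorem leaf9 : ((((core κ l A B D Z ∨ Z) ∨ A κ) ∨ B κ) ∨ A l) ∨ B l ↔
    Fc (fun i => i = κ ∨ i = l) (fun i => i = κ ∨ i = l) True (fun i j => j < i) A B Z := by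
  simp only [core_iff, Fc_iff, Fin.lt_def, Fin.le_def, Fin.ext_iff]; grind

end monoM
end RegLk

set_option linter.unusedSectionVars false
set_option linter.unusedVariables false
set_option linter.unusedSimpArgs false
namespace RegLk
open MvPolynomial
section monoO
universe u v
variable {σ : Type u} {K : Type v} [Field K] {n : ℕ}

def coreU (xs ys : Fin n → σ) (z : σ) (κ l : Fin n) (m : σ →₀ ℕ) : Prop :=
  core κ l (fun i => 1 ≤ m (xs i)) (fun i => 1 ≤ m (ys i)) (2 ≤ m (ys κ)) (1 ≤ m z)

theorem core_mono {κ l : Fin n} {A B A' B' : Fin n → Prop} {D Z D' Z' : Prop}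
    (hA : ∀ i, A i → A' i) (hB : ∀ i, B i → B' i) (hD : D → D') (hZ : Z → Z')
    (h : core κ l A B D Z) : core κ l A' B' D' Z' := by
  rcases h with ⟨i, j, h⟩ | ⟨i, h⟩ | ⟨i, h⟩ | ⟨i, j, h⟩ | ⟨i, j, h⟩ | ⟨i, h⟩ | h | h
  · exact Or.inl ⟨i, j, h.1, hA _ h.2.1, hB _ h.2.2⟩
  · exact Or.inr <| Or.inl ⟨i, h.1, hA _ h.2.1, hB _ h.2.2⟩
  · exact Or.inr <| Or.inr <| Or.inl ⟨i, h.1, hA _ h.2.1, hB _ h.2.2⟩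
  · exact Or.inr <| Or.inr <| Or.inr <| Or.inl
      ⟨i, j, h.1, h.2.1, hA _ h.2.2.1, hA _ h.2.2.2.1, hB _ h.2.2.2.2⟩
  · exact Or.inr <| Or.inr <| Or.inr <| Or.inr <| Or.inl
      ⟨i, j, h.1, h.2.1, hA _ h.2.2.1, hB _ h.2.2.2.1, hB _ h.2.2.2.2⟩
  · exact Or.inr <| Or.inr <| Or.inr <| Or.inr <| Or.inr <| Or.inl
      ⟨i, h.1, hB _ h.2.1, hB _ h.2.2.1, hZ h.2.2.2⟩
  · exact Or.inr <| Or.inr <| Or.inr <| Or.inr <| Or.inr <| Or.inr <| Or.inl ⟨hD h.1, hZ h.2⟩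
  · exact Or.inr <| Or.inr <| Or.inr <| Or.inr <| Or.inr <| Or.inr <| Or.inr ⟨hA _ h.1, hZ h.2⟩

theorem coreU_up (xs ys : Fin n → σ) (z : σ) (κ l : Fin n) : Up (coreU xs ys z κ l) := by
  intro m m' h
  exact core_mono (fun i => fun h1 => h1.trans (h _)) (fun i => fun h1 => h1.trans (h _))
    (fun h1 => h1.trans (h _)) (fun h1 => h1.trans (h _))

theorem leafRc [Finite σ] (xs ys : Fin n → σ) (z : σ) (hd : ∀ i j, xs i ≠ ys j)
    (hinj : Function.Injective xs) (Sx Sy : Fin n → Prop) (Sz : Prop) (E : Fin n → Fin n → Prop)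
    (hE : ∀ i i', (∀ j, E i j → E i' j) ∨ (∀ j, E i' j → E i j))
    {U : (σ →₀ ℕ) → Prop}
    (hU : ∀ m, U m ↔ Fc Sx Sy Sz E (fun i => 1 ≤ m (xs i)) (fun i => 1 ≤ m (ys i)) (1 ≤ m z))
    {r : ℤ} (hr : 1 ≤ r) : Rc (MI K U) r := by
  refine Rc_FE' xs ys hd hinj E hE
    {v | (∃ i, Sx i ∧ v = xs i) ∨ (∃ i, Sy i ∧ v = ys i) ∨ (Sz ∧ v = z)} (fun m => ?_) hr
  rw [hU m]
  unfold Fc FE VU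
  constructor
  · rintro (⟨i, h1, h2⟩ | ⟨i, h1, h2⟩ | ⟨h1, h2⟩ | h)
    · exact Or.inl ⟨xs i, Or.inl ⟨i, h1, rfl⟩, h2⟩
    · exact Or.inl ⟨ys i, Or.inr (Or.inl ⟨i, h1, rfl⟩), h2⟩
    · exact Or.inl ⟨z, Or.inr (Or.inr ⟨h1, rfl⟩), h2⟩
    · exact Or.inr h
  · rintro (⟨v, (⟨i, h1, rfl⟩ | ⟨i, h1, rfl⟩ | ⟨h1, rfl⟩), h2⟩ | h)
    · exact Or.inl ⟨i, h1, h2⟩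
    · exact Or.inr (Or.inl ⟨i, h1, h2⟩)
    · exact Or.inr (Or.inr (Or.inl ⟨h1, h2⟩))
    · exact Or.inr (Or.inr (Or.inr h))

theorem Rc_coreU [Finite σ] (xs ys : Fin n → σ) (z : σ) (hd : ∀ i j, xs i ≠ ys j)
    (hinj : Function.Injective xs) (hinj' : Function.Injective ys)
    (hxz : ∀ i, xs i ≠ z) (hyz : ∀ i, ys i ≠ z)
    {κ l : Fin n} (hl : (κ : ℕ) + 1 = l) : Rc (MI K (coreU xs ys z κ l)) 3 := by
  classical
  have hlk : l ≠ κ := by intro h; rw [h] at hl; omega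
  have hd' : ∀ i j, ys i ≠ xs j := fun i j h => hd j i h.symm
  have hxz' : ∀ i, z ≠ xs i := fun i h => hxz i h.symm
  have hyz' : ∀ i, z ≠ ys i := fun i h => hyz i h.symm
  have cz : ∀ m : σ →₀ ℕ, coreU xs ys z κ l (m + Finsupp.single z 1) ↔
      core κ l (fun i => 1 ≤ m (xs i)) (fun i => 1 ≤ m (ys i)) (2 ≤ m (ys κ)) True := by
    intro m
    simp [coreU, hxz, hyz, hxz', hyz']
  have axk : ∀ (a i : Fin n) (m : σ →₀ ℕ), (1 ≤ (m + Finsupp.single (xs a) 1 : σ →₀ ℕ) (xs i)) =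
      (a = i ∨ 1 ≤ m (xs i)) := by
    intro a i m
    rw [Finsupp.add_apply, Finsupp.single_apply, eq_iff_iff, hinj.eq_iff]
    split_ifs with h <;> simp [h]
  have ayk : ∀ (a i : Fin n) (m : σ →₀ ℕ), (1 ≤ (m + Finsupp.single (ys a) 1 : σ →₀ ℕ) (ys i)) =
      (a = i ∨ 1 ≤ m (ys i)) := by
    intro a i m
    rw [Finsupp.add_apply, Finsupp.single_apply, eq_iff_iff, hinj'.eq_iff]
    split_ifs with h <;> simp [h]
  have axy : ∀ (a i : Fin n) (m : σ →₀ ℕ), (m + Finsupp.single (xs a) 1 : σ →₀ ℕ) (ys i) = m (ys i) := by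
    intro a i m; simp [hd]
  have ayx : ∀ (a i : Fin n) (m : σ →₀ ℕ), (m + Finsupp.single (ys a) 1 : σ →₀ ℕ) (xs i) = m (xs i) := by
    intro a i m; simp [hd']
  have axz : ∀ (a : Fin n) (m : σ →₀ ℕ), (m + Finsupp.single (xs a) 1 : σ →₀ ℕ) z = m z := by
    intro a m; simp [hxz, hxz']
  have ayz : ∀ (a : Fin n) (m : σ →₀ ℕ), (m + Finsupp.single (ys a) 1 : σ →₀ ℕ) z = m z := by
    intro a m; simp [hyz, hyz']
  have D1 : ∀ m : σ →₀ ℕ, (2 ≤ (m + Finsupp.single (ys κ) 1 : σ →₀ ℕ) (ys κ)) = (1 ≤ m (ys κ)) := by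
    intro m; simp
  have D2 : ∀ m : σ →₀ ℕ, (2 ≤ (m + Finsupp.single (ys l) 1 : σ →₀ ℕ) (ys κ)) = (2 ≤ m (ys κ)) := by
    intro m; simp [hinj'.eq_iff, hlk]
  have hD : ∀ m : σ →₀ ℕ, 2 ≤ m (ys κ) → 1 ≤ m (ys κ) := fun m h => by omega
  have hlk' : κ ≠ l := hlk.symm
  have U0 := coreU_up xs ys z κ l
  refine R1M U0 z ?_ ?_
  · rw [MI_congr cz]
    have U1 := Up_colon U0 z
    rw [show (fun m => coreU xs ys z κ l (m + Finsupp.single z 1)) = _ from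
      funext fun m => propext (cz m)] at U1
    refine R1M U1 (ys κ) ?_ (R1M (Up_sum U1 _) (xs κ) ?_
      (R1M (Up_sum (Up_sum U1 _) _) (ys l) ?_ ?_))
    · refine leafRc xs ys z hd hinj (fun i => κ < i) (fun i => i ≤ κ) False
        (fun i j => i ≤ κ ∧ κ < j) (by grind) (fun m => ?_) (by norm_num)
      simp only [axk, ayk, axy, ayx, axz, ayz, D1, D2]
      exact leaf1 hl (hD m)
    · refine leafRc xs ys z hd hinj (fun i => i = l) (fun i => True) False (fun i j => False)
        (by grind) (fun m => ?_) (by norm_num)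
      simp only [axk, ayk, axy, ayx, axz, ayz, D1, D2]
      exact leaf2 hl (hD m)
    · refine leafRc xs ys z hd hinj (fun i => True) (fun i => i = κ) False (fun i j => False)
        (by grind) (fun m => ?_) (by norm_num)
      simp only [axk, ayk, axy, ayx, axz, ayz, D1, D2]
      simp only [hlk, false_or]
      exact leaf3 hl (hD m)
    · refine leafRc xs ys z hd hinj (fun i => i = κ ∨ i = l) (fun i => i = κ ∨ i = l) False
        (fun i j => j < i)
        (by intro i i'; rcases le_total i i' with h | h
            · exact Or.inl fun j hj => hj.trans_le h
            · exact Or.inr fun j hj => hj.trans_le h) (fun m => ?_) (by norm_num)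
      exact leaf4 hl (hD m)
  · have U1 := Up_sum U0 z
    refine R1M U1 (xs κ) ?_ (R1M (Up_sum U1 _) (ys κ) ?_
      (R1M (Up_sum (Up_sum U1 _) _) (xs l) ?_
        (R1M (Up_sum (Up_sum (Up_sum U1 _) _) _) (ys l) ?_ ?_)))
    · refine leafRc xs ys z hd hinj (fun i => False) (fun i => i ≠ κ) True
        (fun i j => j = κ ∧ κ < i) (by grind) (fun m => ?_) (by norm_num)
      simp only [coreU, axk, ayk, axy, ayx, axz, ayz, D1, D2]
      exact leaf5 hl (hD m)
    · refine leafRc xs ys z hd hinj (fun i => κ ≤ i) (fun i => False) True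
        (fun i j => i < κ ∧ (j < i ∨ l ≤ j)) (by grind) (fun m => ?_) (by norm_num)
      simp only [coreU, axk, ayk, axy, ayx, axz, ayz, D1, D2]
      exact leaf6 hl (hD m)
    · refine leafRc xs ys z hd hinj (fun i => κ = i) (fun i => i ≤ κ) True
        (fun i j => (i < κ ∧ l ≤ j) ∨ (l ≤ j ∧ j < i)) (by grind) (fun m => ?_) (by norm_num)
      simp only [coreU, axk, ayk, axy, ayx, axz, ayz, D1, D2]
      simp only [hlk, false_or]
      exact leaf7 hl (hD m)
    · refine leafRc xs ys z hd hinj (fun i => True) (fun i => i = κ) True (fun i j => False)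
        (by grind) (fun m => ?_) (by norm_num)
      simp only [coreU, axk, ayk, axy, ayx, axz, ayz, D1, D2]
      simp only [hlk, false_or]
      exact leaf8 hl (hD m)
    · refine leafRc xs ys z hd hinj (fun i => i = κ ∨ i = l) (fun i => i = κ ∨ i = l) True
        (fun i j => j < i)
        (by intro i i'; rcases le_total i i' with h | h
            · exact Or.inl fun j hj => hj.trans_le h
            · exact Or.inr fun j hj => hj.trans_le h) (fun m => ?_) (by norm_num)
      exact leaf9 hl (hD m)

end monoO
end RegLk

set_option linter.unusedSectionVars false
set_option linter.unusedVariables false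
set_option linter.unusedSimpArgs false
namespace RegLk
open MvPolynomial
section monoQ
universe u v
variable {σ : Type u} {K : Type v} [Field K] {n : ℕ}

theorem XX_eq (a b : σ) : (X a * X b : MvPolynomial σ K) =
    monomial (Finsupp.single a 1 + Finsupp.single b 1) 1 := by
  simp [X, monomial_mul]

theorem XXX_eq (a b c : σ) : (X a * X b * X c : MvPolynomial σ K) =
    monomial (Finsupp.single a 1 + Finsupp.single b 1 + Finsupp.single c 1) 1 := by
  simp [X, monomial_mul]

theorem mono_mem_of_le {J : Ideal (MvPolynomial σ K)} {e m : σ →₀ ℕ} (h : e ≤ m)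
    (he : monomial e (1 : K) ∈ J) : monomial m (1 : K) ∈ J := by
  have : monomial m (1 : K) = monomial (m - e) 1 * monomial e 1 := by
    rw [monomial_mul, one_mul, tsub_add_cancel_of_le h]
  rw [this]
  exact J.mul_mem_left _ he

theorem le2 {m : σ →₀ ℕ} {a b : σ} (hab : a ≠ b) (ha : 1 ≤ m a) (hb : 1 ≤ m b) :
    Finsupp.single a 1 + Finsupp.single b 1 ≤ m := by
  classical
  intro v
  simp only [Finsupp.add_apply, Finsupp.single_apply]
  split_ifs <;> grind

theorem le3 {m : σ →₀ ℕ} {a b c : σ} (hab : a ≠ b) (hac : a ≠ c) (hbc : b ≠ c)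
    (ha : 1 ≤ m a) (hb : 1 ≤ m b) (hc : 1 ≤ m c) :
    Finsupp.single a 1 + Finsupp.single b 1 + Finsupp.single c 1 ≤ m := by
  classical
  intro v
  simp only [Finsupp.add_apply, Finsupp.single_apply]
  split_ifs <;> grind

theorem le3' {m : σ →₀ ℕ} {a c : σ} (hac : a ≠ c)
    (ha : 2 ≤ m a) (hc : 1 ≤ m c) :
    Finsupp.single a 1 + Finsupp.single a 1 + Finsupp.single c 1 ≤ m := by
  classical
  intro v
  simp only [Finsupp.add_apply, Finsupp.single_apply]
  split_ifs <;> grind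

theorem span_eq_MI (xs ys : Fin n → σ) (z : σ) (hd : ∀ i j, xs i ≠ ys j)
    (hinj : Function.Injective xs) (hinj' : Function.Injective ys)
    (hxz : ∀ i, xs i ≠ z) (hyz : ∀ i, ys i ≠ z) (k : ℕ)
    (κ l : Fin n) (hκ : (κ : ℕ) + 1 = k) (hl : (l : ℕ) = k) :
    Ideal.span
        ({f | ∃ i j : Fin n, i < j ∧ f = (X (xs j) * X (ys i) : MvPolynomial σ K)} ∪
          {f | ∃ i : Fin n, (i : ℕ) + 1 < k ∧ f = X (xs i) * X (ys l)} ∪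
          {f | ∃ j : Fin n, k ≤ (j : ℕ) ∧ f = X (xs κ) * X (ys j)} ∪
          {f | ∃ i j : Fin n, (i : ℕ) + 1 < k ∧ k < (j : ℕ) ∧
            f = X (xs i) * X (xs l) * X (ys j)} ∪
          {f | ∃ i j : Fin n, (i : ℕ) + 1 < k ∧ k < (j : ℕ) ∧
            f = X (xs i) * X (ys κ) * X (ys j)} ∪
          {f | ∃ i : Fin n, (i : ℕ) < k ∧ f = X (ys i) * X (ys κ) * X z} ∪
          {X (xs l) * X z}) = MI K (coreU xs ys z κ l) := by
  apply le_antisymm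
  · rw [Ideal.span_le]
    have key : ∀ e, coreU xs ys z κ l e → monomial e (1 : K) ∈ MI K (coreU xs ys z κ l) :=
      fun e he => Ideal.subset_span ⟨e, he, rfl⟩
    rintro f ((((((⟨i, j, h, rfl⟩ | ⟨i, h, rfl⟩) | ⟨j, h, rfl⟩) | ⟨i, j, h, h', rfl⟩) |
      ⟨i, j, h, h', rfl⟩) | ⟨i, h, rfl⟩) | h)
    · rw [SetLike.mem_coe, XX_eq]
      exact key _ (Or.inl ⟨i, j, h, by simp, by simp⟩)
    · rw [SetLike.mem_coe, XX_eq]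
      exact key _ (Or.inr <| Or.inl ⟨i, by rw [Fin.lt_def]; omega, by simp, by simp⟩)
    · rw [SetLike.mem_coe, XX_eq]
      exact key _ (Or.inr <| Or.inr <| Or.inl ⟨j, by rw [Fin.le_def]; omega, by simp, by simp⟩)
    · rw [SetLike.mem_coe, XXX_eq]
      exact key _ (Or.inr <| Or.inr <| Or.inr <| Or.inl
        ⟨i, j, by rw [Fin.lt_def]; omega, by rw [Fin.lt_def]; omega, by simp; omega,
          by simp; omega, by simp⟩)
    · rw [SetLike.mem_coe, XXX_eq]
      exact key _ (Or.inr <| Or.inr <| Or.inr <| Or.inr <| Or.inl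
        ⟨i, j, by rw [Fin.lt_def]; omega, by rw [Fin.lt_def]; omega, by simp; omega,
          by simp; omega, by simp⟩)
    · rw [SetLike.mem_coe, XXX_eq]
      by_cases hi : i = κ
      · subst hi
        exact key _ (Or.inr <| Or.inr <| Or.inr <| Or.inr <| Or.inr <| Or.inr <| Or.inl
          ⟨by simp, by simp⟩)
      · have : (i : ℕ) ≠ κ := fun h => hi (Fin.ext h)
        exact key _ (Or.inr <| Or.inr <| Or.inr <| Or.inr <| Or.inr <| Or.inl
          ⟨i, by rw [Fin.lt_def]; omega, by simp; omega, by simp; omega, by simp⟩)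
    · rw [Set.mem_singleton_iff] at h
      subst h
      rw [SetLike.mem_coe, XX_eq]
      exact key _ (Or.inr <| Or.inr <| Or.inr <| Or.inr <| Or.inr <| Or.inr <| Or.inr
          ⟨by simp, by simp⟩)
  · rw [MI, Ideal.span_le]
    rintro _ ⟨m, hm, rfl⟩
    rw [SetLike.mem_coe]
    have hxi : ∀ i j : Fin n, i ≠ j → xs i ≠ xs j := fun i j h h' => h (hinj h')
    have hyi : ∀ i j : Fin n, i ≠ j → ys i ≠ ys j := fun i j h h' => h (hinj' h')
    rcases hm with ⟨i, j, h, h1, h2⟩ | ⟨i, h, h1, h2⟩ | ⟨j, h, h1, h2⟩ | ⟨i, j, h, h', h1, h2, h3⟩ |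
      ⟨i, j, h, h', h1, h2, h3⟩ | ⟨i, h, h1, h2, h3⟩ | ⟨h1, h2⟩ | ⟨h1, h2⟩
    · refine mono_mem_of_le (le2 (hd _ _) h1 h2) (Ideal.subset_span ?_)
      rw [← XX_eq]
      exact Or.inl <| Or.inl <| Or.inl <| Or.inl <| Or.inl <| Or.inl ⟨i, j, h, rfl⟩
    · refine mono_mem_of_le (le2 (hd _ _) h1 h2) (Ideal.subset_span ?_)
      rw [← XX_eq]
      rw [Fin.lt_def] at h
      exact Or.inl <| Or.inl <| Or.inl <| Or.inl <| Or.inl <| Or.inr ⟨i, by omega, rfl⟩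
    · refine mono_mem_of_le (le2 (hd _ _) h1 h2) (Ideal.subset_span ?_)
      rw [← XX_eq]
      rw [Fin.le_def] at h
      exact Or.inl <| Or.inl <| Or.inl <| Or.inl <| Or.inr ⟨j, by omega, rfl⟩
    · rw [Fin.lt_def] at h h'
      refine mono_mem_of_le (le3 (hxi _ _ ?_) (hd _ _) (hd _ _) h1 h2 h3) (Ideal.subset_span ?_)
      · intro h''; rw [Fin.ext_iff] at h''; omega
      rw [← XXX_eq]
      exact Or.inl <| Or.inl <| Or.inl <| Or.inr ⟨i, j, by omega, by omega, rfl⟩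
    · rw [Fin.lt_def] at h h'
      refine mono_mem_of_le (le3 (hd _ _) (hd _ _) (hyi _ _ ?_) h1 h2 h3) (Ideal.subset_span ?_)
      · intro h''; rw [Fin.ext_iff] at h''; omega
      rw [← XXX_eq]
      exact Or.inl <| Or.inl <| Or.inr ⟨i, j, by omega, by omega, rfl⟩
    · rw [Fin.lt_def] at h
      refine mono_mem_of_le (le3 (hyi _ _ ?_) (hyz _) (hyz _) h1 h2 h3) (Ideal.subset_span ?_)
      · intro h''; rw [Fin.ext_iff] at h''; omega
      rw [← XXX_eq]
      exact Or.inl <| Or.inr ⟨i, by omega, rfl⟩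
    · refine mono_mem_of_le (le3' (hyz _) h1 h2) (Ideal.subset_span ?_)
      rw [← XXX_eq]
      exact Or.inl <| Or.inr ⟨κ, by omega, rfl⟩
    · refine mono_mem_of_le (le2 (hxz _) h1 h2) (Ideal.subset_span ?_)
      rw [← XX_eq]
      exact Or.inr rfl

end monoQ
end RegLk

set_option linter.unusedSectionVars false
set_option linter.unusedVariables false
set_option linter.unusedSimpArgs false
namespace RegLk
open MvPolynomial
section toric
universe u v
variable {σ : Type u} {K : Type v} [Field K] {n : ℕ}

/-- determinantal ideal plus variables -/
noncomputable def Jd (K : Type v) [Field K] (xs ys : Fin n → σ) (U : Set σ) :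
    Ideal (MvPolynomial σ K) :=
  Ideal.span ({f | ∃ i j : Fin n, f = X (xs j) * X (ys i) - X (xs i) * X (ys j)} ∪ X '' U)

/-- weights for the toric parametrization -/
structure Wt (xs ys : Fin n → σ) (z : σ) (w : σ → (Fin n ⊕ Fin 3 →₀ ℕ)) : Prop where
  x : ∀ j, w (xs j) = Finsupp.single (Sum.inl j) 1 + Finsupp.single (Sum.inr 0) 1
  y : ∀ j, w (ys j) = Finsupp.single (Sum.inl j) 1 + Finsupp.single (Sum.inr 1) 1
  z : w z = Finsupp.single (Sum.inr 2) 1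

theorem exists_Wt (xs ys : Fin n → σ) (z : σ) (hd : ∀ i j, xs i ≠ ys j)
    (hinj : Function.Injective xs) (hinj' : Function.Injective ys)
    (hxz : ∀ i, xs i ≠ z) (hyz : ∀ i, ys i ≠ z) : ∃ w, Wt xs ys z w := by
  refine ⟨Function.extend xs (fun j => Finsupp.single (Sum.inl j) 1 + Finsupp.single (Sum.inr 0) 1)
    (Function.extend ys (fun j => Finsupp.single (Sum.inl j) 1 + Finsupp.single (Sum.inr 1) 1)
      (fun _ => Finsupp.single (Sum.inr 2) 1)), ?_, ?_, ?_⟩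
  · intro j; rw [hinj.extend_apply]
  · intro j
    rw [Function.extend_apply' _ _ _ (by rintro ⟨i, hi⟩; exact hd _ _ hi), hinj'.extend_apply]
  · rw [Function.extend_apply' _ _ _ (by rintro ⟨i, hi⟩; exact hxz _ hi),
      Function.extend_apply' _ _ _ (by rintro ⟨i, hi⟩; exact hyz _ hi)]

noncomputable def psi (w : σ → (Fin n ⊕ Fin 3 →₀ ℕ)) : (σ →₀ ℕ) →ₗ[ℕ] (Fin n ⊕ Fin 3 →₀ ℕ) :=
  Finsupp.linearCombination ℕ w

theorem psi_ne {w : σ → (Fin n ⊕ Fin 3 →₀ ℕ)} {m : σ →₀ ℕ} {t : Fin n ⊕ Fin 3}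
    (h : psi w m t ≠ 0) : ∃ v, 1 ≤ m v ∧ w v t ≠ 0 := by
  by_contra hc
  push Not at hc
  apply h
  rw [psi, Finsupp.linearCombination_apply, Finsupp.sum, Finsupp.finsetSum_apply]
  apply Finset.sum_eq_zero
  intro v hv
  have : 1 ≤ m v := Nat.one_le_iff_ne_zero.2 (Finsupp.mem_support_iff.1 hv)
  simp [hc v this]

theorem psi_single (w : σ → (Fin n ⊕ Fin 3 →₀ ℕ)) (v : σ) : psi w (Finsupp.single v 1) = w v := by
  simp [psi]

theorem ex_sub {m : σ →₀ ℕ} {v : σ} (h : 1 ≤ m v) : ∃ m1, m = Finsupp.single v 1 + m1 := by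
  classical
  refine ⟨m - Finsupp.single v 1, ?_⟩
  rw [add_tsub_cancel_of_le]
  simpa using h

theorem X_mul_mono (v : σ) (m : σ →₀ ℕ) :
    (X v : MvPolynomial σ K) * monomial m 1 = monomial (Finsupp.single v 1 + m) 1 := by
  rw [X, monomial_mul, one_mul]

theorem mono_cong (xs ys : Fin n → σ) (z : σ) (hd : ∀ i j, xs i ≠ ys j)
    (hall : ∀ w : σ, (∃ i, w = xs i) ∨ (∃ i, w = ys i) ∨ w = z)
    {w : σ → (Fin n ⊕ Fin 3 →₀ ℕ)} (hw : Wt xs ys z w) (J : Ideal (MvPolynomial σ K))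
    (hJ : ∀ i j : Fin n, X (xs j) * X (ys i) - X (xs i) * X (ys j) ∈ J) (d : ℕ) :
    ∀ m m' : σ →₀ ℕ, m.degree = d → psi w m = psi w m' →
      monomial m (1 : K) - monomial m' 1 ∈ J := by
  have cx : ∀ v j, w v (Sum.inl j) ≠ 0 → v = xs j ∨ v = ys j := by
    intro v j h
    rcases hall v with ⟨i, rfl⟩ | ⟨i, rfl⟩ | rfl
    · rw [hw.x] at h
      left; by_contra hc
      have : i ≠ j := fun h => hc (by rw [h])
      simp [this] at h
    · rw [hw.y] at h
      right; by_contra hc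
      have : i ≠ j := fun h => hc (by rw [h])
      simp [this] at h
    · rw [hw.z] at h; simp at h
  have c0 : ∀ v, w v (Sum.inr 0) ≠ 0 → ∃ i, v = xs i := by
    intro v h
    rcases hall v with ⟨i, rfl⟩ | ⟨i, rfl⟩ | rfl
    · exact ⟨i, rfl⟩
    · rw [hw.y] at h; simp at h
    · rw [hw.z] at h; simp at h
  have c1 : ∀ v, w v (Sum.inr 1) ≠ 0 → ∃ i, v = ys i := by
    intro v h
    rcases hall v with ⟨i, rfl⟩ | ⟨i, rfl⟩ | rfl
    · rw [hw.x] at h; simp at h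
    · exact ⟨i, rfl⟩
    · rw [hw.z] at h; simp at h
  have c2 : ∀ v, w v (Sum.inr 2) ≠ 0 → v = z := by
    intro v h
    rcases hall v with ⟨i, rfl⟩ | ⟨i, rfl⟩ | rfl
    · rw [hw.x] at h; simp at h
    · rw [hw.y] at h; simp at h
    · rfl
  induction d with
  | zero =>
    intro m m' hm h
    have hm0 : m = 0 := by simpa [Finsupp.degree_eq_zero_iff] using hm
    subst hm0
    have : m' = 0 := by
      ext v
      by_contra hv
      obtain ⟨m1, rfl⟩ := ex_sub (Nat.one_le_iff_ne_zero.2 hv)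
      rw [map_zero, map_add, psi_single] at h
      have h2 : w v = 0 := by
        ext t
        have := DFunLike.congr_fun h t
        simp only [Finsupp.add_apply, Finsupp.coe_zero, Pi.zero_apply] at this ⊢
        omega
      rcases hall v with ⟨i, rfl⟩ | ⟨i, rfl⟩ | rfl
      · rw [hw.x] at h2; simpa using DFunLike.congr_fun h2 (Sum.inr 0)
      · rw [hw.y] at h2; simpa using DFunLike.congr_fun h2 (Sum.inr 1)
      · rw [hw.z] at h2; simpa using DFunLike.congr_fun h2 (Sum.inr 2)
    rw [this, sub_self]; exact J.zero_mem
  | succ d ih =>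
    intro m m' hm h
    have hne : m ≠ 0 := by rintro rfl; simp at hm
    obtain ⟨v, hv⟩ := Finsupp.ne_iff.1 hne
    obtain ⟨m1, rfl⟩ := ex_sub (Nat.one_le_iff_ne_zero.2 hv)
    have hd1 : m1.degree = d := by
      rw [map_add, Finsupp.degree_single] at hm; omega
    -- key: common variable
    have key : ∀ m'', psi w (Finsupp.single v 1 + m1) = psi w m'' → 1 ≤ m'' v →
        monomial (Finsupp.single v 1 + m1) (1 : K) - monomial m'' 1 ∈ J := by
      intro m'' h'' hv''
      obtain ⟨m2, rfl⟩ := ex_sub hv''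
      rw [map_add, map_add] at h''
      have := ih m1 m2 hd1 (add_left_cancel h'')
      rw [← X_mul_mono, ← X_mul_mono, ← mul_sub]
      exact J.mul_mem_left _ this
    by_cases hv' : 1 ≤ m' v
    · exact key m' h hv'
    have hpsi : ∀ t, w v t ≠ 0 → psi w m' t ≠ 0 := by
      intro t ht
      rw [← h, map_add, psi_single, Finsupp.add_apply]; omega
    rcases hall v with ⟨j, rfl⟩ | ⟨j, rfl⟩ | rfl
    · obtain ⟨u1, hu1, hu2⟩ := psi_ne (hpsi (Sum.inl j) (by rw [hw.x]; simp))
      obtain ⟨u3, hu3, hu4⟩ := psi_ne (hpsi (Sum.inr 0) (by rw [hw.x]; simp))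
      obtain ⟨i, rfl⟩ := c0 _ hu4
      rcases cx _ _ hu2 with rfl | rfl
      · exact absurd hu1 hv'
      obtain ⟨m2, rfl⟩ := ex_sub hu1
      have hu5 : 1 ≤ m2 (xs i) := by
        rw [Finsupp.add_apply, Finsupp.single_eq_of_ne (by exact hd _ _)] at hu3
        omega
      obtain ⟨m3, rfl⟩ := ex_sub hu5
      have hk := key (Finsupp.single (xs j) 1 + (Finsupp.single (ys i) 1 + m3)) (by
        rw [h]; simp only [map_add, psi_single, hw.x, hw.y]; abel) (by simp)
      have h3 := J.mul_mem_right (monomial m3 1) (hJ i j)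
      have h4 := J.add_mem hk h3
      convert h4 using 1
      simp only [← X_mul_mono]; ring
    · obtain ⟨u1, hu1, hu2⟩ := psi_ne (hpsi (Sum.inl j) (by rw [hw.y]; simp))
      obtain ⟨u3, hu3, hu4⟩ := psi_ne (hpsi (Sum.inr 1) (by rw [hw.y]; simp))
      obtain ⟨i, rfl⟩ := c1 _ hu4
      rcases cx _ _ hu2 with rfl | rfl
      swap
      · exact absurd hu1 hv'
      obtain ⟨m2, rfl⟩ := ex_sub hu1
      have hu5 : 1 ≤ m2 (ys i) := by
        rw [Finsupp.add_apply, Finsupp.single_eq_of_ne (by exact (hd _ _).symm)] at hu3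
        omega
      obtain ⟨m3, rfl⟩ := ex_sub hu5
      have hk := key (Finsupp.single (ys j) 1 + (Finsupp.single (xs i) 1 + m3)) (by
        rw [h]; simp only [map_add, psi_single, hw.x, hw.y]; abel) (by simp)
      have h3 := J.mul_mem_right (monomial m3 1) (hJ j i)
      have h4 := J.add_mem hk h3
      convert h4 using 1
      simp only [← X_mul_mono]; ring
    · obtain ⟨u1, hu1, hu2⟩ := psi_ne (hpsi (Sum.inr 2) (by rw [hw.z]; simp))
      rw [c2 _ hu2] at hu1
      exact absurd hu1 hv'

open Classical in
/-- the toric parametrization with dead variables -/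
noncomputable def theta (K : Type v) [Field K] (w : σ → (Fin n ⊕ Fin 3 →₀ ℕ)) (U : Set σ) :
    MvPolynomial σ K →ₐ[K] MvPolynomial (Fin n ⊕ Fin 3) K :=
  aeval fun v => if v ∈ U then 0 else monomial (w v) 1

theorem theta_X_dead {w : σ → (Fin n ⊕ Fin 3 →₀ ℕ)} {U : Set σ} {v : σ} (h : v ∈ U) :
    theta K w U (X v) = 0 := by simp [theta, h]

theorem theta_X {w : σ → (Fin n ⊕ Fin 3 →₀ ℕ)} {U : Set σ} {v : σ} (h : v ∉ U) :
    theta K w U (X v) = monomial (w v) 1 := by simp [theta, h]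

theorem theta_mono {w : σ → (Fin n ⊕ Fin 3 →₀ ℕ)} {U : Set σ} (m : σ →₀ ℕ)
    (h : ∀ v, 1 ≤ m v → v ∉ U) : theta K w U (monomial m 1) = monomial (psi w m) 1 := by
  classical
  rw [theta, aeval_monomial, map_one, one_mul, psi, Finsupp.linearCombination_apply,
    Finsupp.prod, Finsupp.sum, monomial_sum_one]
  refine Finset.prod_congr rfl fun a ha => ?_
  rw [if_neg (h a (Nat.one_le_iff_ne_zero.2 (Finsupp.mem_support_iff.1 ha))), monomial_pow, one_pow]

/-- kernel of the toric map -/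
theorem theta_ker (xs ys : Fin n → σ) (z : σ) (hd : ∀ i j, xs i ≠ ys j)
    (hall : ∀ w : σ, (∃ i, w = xs i) ∨ (∃ i, w = ys i) ∨ w = z)
    {w : σ → (Fin n ⊕ Fin 3 →₀ ℕ)} (hw : Wt xs ys z w) (U : Set σ)
    (s : MvPolynomial σ K) (hs : theta K w U s = 0) : s ∈ Jd K xs ys U := by
  classical
  have hJ : ∀ i j : Fin n, X (xs j) * X (ys i) - X (xs i) * X (ys j) ∈ Jd K xs ys U :=
    fun i j => Ideal.subset_span (Or.inl ⟨i, j, rfl⟩)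
  let Q := MvPolynomial σ K ⧸ Jd K xs ys U
  let c : (Fin n ⊕ Fin 3 →₀ ℕ) → Q := fun e =>
    if h : ∃ m : σ →₀ ℕ, psi w m = e then Ideal.Quotient.mk _ (monomial h.choose 1) else 0
  let ρ : MvPolynomial (Fin n ⊕ Fin 3) K →ₗ[K] Q := (basisMonomials (Fin n ⊕ Fin 3) K).constr K c
  have hρ : ∀ e, ρ (monomial e 1) = c e := by
    intro e
    have := (basisMonomials (Fin n ⊕ Fin 3) K).constr_basis K c e
    simpa using this
  have hcomp : ρ ∘ₗ (theta K w U).toLinearMap =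
      (Ideal.Quotient.mkₐ K (Jd K xs ys U)).toLinearMap := by
    refine (basisMonomials σ K).ext fun m => ?_
    simp only [coe_basisMonomials, LinearMap.comp_apply, AlgHom.toLinearMap_apply,
      Ideal.Quotient.mkₐ_eq_mk]
    by_cases h : ∀ v, 1 ≤ m v → v ∉ U
    · rw [theta_mono m h, hρ]
      have hex : ∃ m' : σ →₀ ℕ, psi w m' = psi w m := ⟨m, rfl⟩
      show (if h : ∃ m' : σ →₀ ℕ, psi w m' = psi w m then
        Ideal.Quotient.mk _ (monomial h.choose 1) else 0) = _
      rw [dif_pos hex]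
      exact Ideal.Quotient.eq.2 (mono_cong xs ys z hd hall hw _ hJ _ _ _ rfl hex.choose_spec)
    · push Not at h
      obtain ⟨v, hv, hvU⟩ := h
      obtain ⟨m1, rfl⟩ := ex_sub hv
      rw [← X_mul_mono, map_mul, theta_X_dead hvU, zero_mul, map_zero]
      symm
      exact Ideal.Quotient.eq_zero_iff_mem.2
        (Ideal.mul_mem_right _ _ (Ideal.subset_span (Or.inr ⟨v, hvU, rfl⟩)))
  have := LinearMap.congr_fun hcomp s
  simp only [LinearMap.comp_apply, AlgHom.toLinearMap_apply, hs, map_zero] at this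
  exact Ideal.Quotient.eq_zero_iff_mem.1 this.symm

/-- the ideal lies in the kernel when columns are dead or full -/
theorem theta_zero (xs ys : Fin n → σ) (z : σ)
    {w : σ → (Fin n ⊕ Fin 3 →₀ ℕ)} (hw : Wt xs ys z w) (U : Set σ)
    (hU : ∀ i, xs i ∈ U ↔ ys i ∈ U)
    (s : MvPolynomial σ K) (hs : s ∈ Jd K xs ys U) : theta K w U s = 0 := by
  have : Jd K xs ys U ≤ RingHom.ker (theta K w U) := by
    rw [Jd, Ideal.span_le]
    rintro f (⟨i, j, rfl⟩ | ⟨v, hv, rfl⟩)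
    · rw [SetLike.mem_coe, RingHom.mem_ker, map_sub, map_mul, map_mul]
      by_cases hi : xs i ∈ U
      · rw [theta_X_dead hi, theta_X_dead ((hU i).1 hi)]; simp
      by_cases hj : xs j ∈ U
      · rw [theta_X_dead hj, theta_X_dead ((hU j).1 hj)]; simp
      rw [theta_X hi, theta_X hj, theta_X (fun h => hi ((hU i).2 h)),
        theta_X (fun h => hj ((hU j).2 h)), monomial_mul, monomial_mul, sub_eq_zero]
      congr 1
      rw [hw.x, hw.y, hw.x, hw.y, add_add_add_comm, add_add_add_comm (Finsupp.single (Sum.inl i) 1),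
        add_comm (Finsupp.single (Sum.inl j) 1) (Finsupp.single (Sum.inl i) 1)]
    · exact theta_X_dead hv
  exact this hs

end toric
end RegLk

set_option linter.unusedSectionVars false
set_option linter.unusedVariables false
set_option linter.unusedSimpArgs false
namespace RegLk
open MvPolynomial
section detV
universe u v
variable {σ : Type u} {K : Type v} [Field K] {n : ℕ}

theorem XS_eq (S : Set σ) : Ideal.span (X '' S : Set (MvPolynomial σ K)) = MI K (VU S) := by
  ext p
  rw [mem_ideal_span_X_image, mem_MI (VU_up S)]
  simp only [VU, Nat.one_le_iff_ne_zero]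

theorem XS_colon {S : Set σ} {v : σ} (hv : v ∉ S) {s : MvPolynomial σ K}
    (h : X v * s ∈ Ideal.span (X '' S : Set (MvPolynomial σ K))) :
    s ∈ Ideal.span (X '' S : Set (MvPolynomial σ K)) := by
  rw [XS_eq] at h ⊢
  rw [← MI_colon (VU_up S) v] at h
  rw [MI_congr (U' := fun m => VU S (m + Finsupp.single v 1))]
  · exact h
  intro m
  unfold VU
  refine exists_congr fun w => and_congr_right fun hw => ?_
  have : v ≠ w := by rintro rfl; exact hv hw
  simp [this]

theorem HI_XS (S : Set σ) : HI (Ideal.span (X '' S : Set (MvPolynomial σ K))) := by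
  rw [XS_eq]; exact HI_MI _

theorem HI_Jd (xs ys : Fin n → σ) (U : Set σ) : HI (Jd K xs ys U) := by
  apply HI_span
  rintro p (⟨i, j, rfl⟩ | ⟨v, _, rfl⟩)
  · exact ⟨1 + 1, AddSubgroup.sub_mem _ (SetLike.mul_mem_graded (X_mem_Gp _) (X_mem_Gp _))
      (SetLike.mul_mem_graded (X_mem_Gp _) (X_mem_Gp _))⟩
  · exact ⟨1, X_mem_Gp _⟩

theorem Jd_union (xs ys : Fin n → σ) (U V : Set σ) :
    Jd K xs ys (U ∪ V) = Jd K xs ys U ⊔ Ideal.span (X '' V) := by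
  rw [Jd, Jd, ← Ideal.span_union, Set.image_union, Set.union_assoc]

theorem Jd_insert (xs ys : Fin n → σ) (U : Set σ) (v : σ) :
    Jd K xs ys (insert v U) = Jd K xs ys U ⊔ Ideal.span {X v} := by
  rw [Set.insert_eq, Set.union_comm, Jd_union, Set.image_singleton]

theorem minor_mem (xs ys : Fin n → σ) (U : Set σ) (i j : Fin n) :
    X (xs j) * X (ys i) - X (xs i) * X (ys j) ∈ Jd K xs ys U :=
  Ideal.subset_span (Or.inl ⟨i, j, rfl⟩)

theorem var_mem (xs ys : Fin n → σ) (U : Set σ) {v : σ} (h : v ∈ U) :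
    X v ∈ Jd K xs ys U := Ideal.subset_span (Or.inr ⟨v, h, rfl⟩)

theorem Jd_le_XS (xs ys : Fin n → σ) (U S : Set σ) (hS : U ⊆ S)
    (h : ∀ i j, (xs j ∈ S ∨ ys i ∈ S)) :
    Jd K xs ys U ≤ Ideal.span (X '' S) := by
  have hX : ∀ v, v ∈ S → (X v : MvPolynomial σ K) ∈ Ideal.span (X '' S) :=
    fun v hv => Ideal.subset_span ⟨v, hv, rfl⟩
  have hm : ∀ i j, X (xs j) * X (ys i) ∈ Ideal.span (X '' S : Set (MvPolynomial σ K)) := by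
    intro i j
    rcases h i j with h | h
    · exact Ideal.mul_mem_right _ _ (hX _ h)
    · exact Ideal.mul_mem_left _ _ (hX _ h)
  rw [Jd, Ideal.span_le]
  rintro p (⟨i, j, rfl⟩ | ⟨v, hv, rfl⟩)
  · exact Ideal.sub_mem _ (hm _ _) (hm _ _)
  · exact hX _ (hS hv)

theorem Rc_Jd [Finite σ] (xs ys : Fin n → σ) (z : σ) (hd : ∀ i j, xs i ≠ ys j)
    (hinj : Function.Injective xs) (hinj' : Function.Injective ys)
    (hxz : ∀ i, xs i ≠ z) (hyz : ∀ i, ys i ≠ z)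
    (hall : ∀ w : σ, (∃ i, w = xs i) ∨ (∃ i, w = ys i) ∨ w = z) (N : ℕ) :
    ∀ U : Set σ, Uᶜ.ncard = N → Rc (Jd K xs ys U) 1 := by
  obtain ⟨w, hw⟩ := exists_Wt xs ys z hd hinj hinj' hxz hyz
  induction N using Nat.strong_induction_on with
  | _ N ih =>
  intro U hN
  have hins : ∀ v, v ∉ U → Rc (Jd K xs ys (insert v U)) 1 := by
    intro v hv
    refine ih _ ?_ _ rfl
    rw [← hN]
    refine Set.ncard_lt_ncard ?_ (Set.toFinite _)
    exact compl_lt_compl_iff_lt.2 (Set.ssubset_insert hv)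
  by_cases h1 : ∃ i, ys i ∈ U ∧ xs i ∉ U
  · obtain ⟨i, hy, hx⟩ := h1
    refine R1 (X (xs i)) 1 (X_mem_Gp _) (HI_Jd _ _ _)
      (J := Ideal.span (X '' (U ∪ Set.range ys))) ?_ (Jd_insert xs ys U (xs i)) ?_ (hins _ hx)
    · intro s
      constructor
      · intro hs
        induction hs using Submodule.span_induction with
        | mem p hp =>
          obtain ⟨v, hv | ⟨j, rfl⟩, rfl⟩ := hp
          · exact Ideal.mul_mem_left _ _ (var_mem xs ys U hv)
          · have := Ideal.sub_mem _ (Ideal.mul_mem_left _ (X (xs j)) (var_mem xs ys U hy (K := K)))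
              (minor_mem xs ys U i j (K := K))
            simpa using this
        | zero => simp
        | add a b _ _ ha hb => rw [mul_add]; exact Ideal.add_mem _ ha hb
        | smul c a _ ha => rw [smul_eq_mul, mul_left_comm]; exact Ideal.mul_mem_left _ _ ha
      · intro hs
        refine XS_colon (v := xs i) ?_ (Jd_le_XS xs ys U _ Set.subset_union_left ?_ hs)
        · rintro (h | ⟨j, hj⟩)
          · exact hx h
          · exact hd _ _ hj.symm
        · intro i j; exact Or.inr (Or.inr ⟨i, rfl⟩)
    · rw [XS_eq]; exact Rc_VU _
  by_cases h2 : ∃ i, xs i ∈ U ∧ ys i ∉ U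
  · obtain ⟨i, hx, hy⟩ := h2
    refine R1 (X (ys i)) 1 (X_mem_Gp _) (HI_Jd _ _ _)
      (J := Ideal.span (X '' (U ∪ Set.range xs))) ?_ (Jd_insert xs ys U (ys i)) ?_ (hins _ hy)
    · intro s
      constructor
      · intro hs
        induction hs using Submodule.span_induction with
        | mem p hp =>
          obtain ⟨v, hv | ⟨j, rfl⟩, rfl⟩ := hp
          · exact Ideal.mul_mem_left _ _ (var_mem xs ys U hv)
          · have := Ideal.add_mem _ (Ideal.mul_mem_right (X (ys j)) _ (var_mem xs ys U hx (K := K)))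
              (minor_mem xs ys U i j (K := K))
            convert this using 1
            ring
        | zero => simp
        | add a b _ _ ha hb => rw [mul_add]; exact Ideal.add_mem _ ha hb
        | smul c a _ ha => rw [smul_eq_mul, mul_left_comm]; exact Ideal.mul_mem_left _ _ ha
      · intro hs
        refine XS_colon (v := ys i) ?_ (Jd_le_XS xs ys U _ Set.subset_union_left ?_ hs)
        · rintro (h | ⟨j, hj⟩)
          · exact hy h
          · exact hd _ _ hj
        · intro i j; exact Or.inl (Or.inr ⟨j, rfl⟩)
    · rw [XS_eq]; exact Rc_VU _
  have hU : ∀ i, xs i ∈ U ↔ ys i ∈ U := by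
    intro i
    push Not at h1 h2
    exact ⟨h2 i, h1 i⟩
  by_cases h3 : ∃ i, ys i ∉ U
  · obtain ⟨i, hi⟩ := h3
    refine R3 (X (ys i)) (X_ne_zero _) (X_mem_Gp _) (HI_Jd _ _ _) ?_ (Jd_insert xs ys U (ys i))
      (hins _ hi)
    intro s hs
    have h := theta_zero xs ys z hw U hU _ hs
    rw [map_mul, theta_X hi] at h
    refine theta_ker xs ys z hd hall hw U s ((mul_eq_zero.1 h).resolve_left ?_)
    simp
  · push Not at h3
    have : Jd K xs ys U = Ideal.span (X '' U) := by
      apply le_antisymm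
      · exact Jd_le_XS _ _ _ _ le_rfl fun i j => Or.inr (h3 i)
      · exact Ideal.span_mono Set.subset_union_right
    rw [this, XS_eq]
    exact Rc_mono (by norm_num) (Rc_VU _)

theorem div_mul_X {z v : σ} (hv : v ≠ z) (c : MvPolynomial σ K) :
    (c * X v).divMonomial (Finsupp.single z 1) = c.divMonomial (Finsupp.single z 1) * X v := by
  classical
  ext m
  rw [coeff_divMonomial, coeff_mul_X', coeff_mul_X', coeff_divMonomial]
  have : v ∈ (Finsupp.single z 1 + m).support ↔ v ∈ m.support := by
    simp [hv]
  rw [if_congr this rfl rfl]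
  split_ifs with h
  · congr 1
    rw [add_tsub_assoc_of_le]
    simpa [Nat.one_le_iff_ne_zero] using h
  · rfl

/-- `z` is a nonzerodivisor modulo `Jd` -/
theorem Jd_z (xs ys : Fin n → σ) (z : σ) (hxz : ∀ i, xs i ≠ z) (hyz : ∀ i, ys i ≠ z)
    (U : Set σ) (hU : z ∉ U) {s : MvPolynomial σ K} (h : s * X z ∈ Jd K xs ys U) :
    s ∈ Jd K xs ys U := by
  have key : ∀ p ∈ Jd K xs ys U, p.divMonomial (Finsupp.single z 1) ∈ Jd K xs ys U := by
    intro p hp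
    rw [Jd] at hp
    induction hp using Submodule.closure_induction with
    | zero => simp
    | add a b _ _ ha hb => rw [add_divMonomial]; exact Ideal.add_mem _ ha hb
    | smul_mem c g hg =>
      rcases hg with ⟨i, j, rfl⟩ | ⟨v, hv, rfl⟩
      · have : c • (X (xs j) * X (ys i) - X (xs i) * X (ys j) : MvPolynomial σ K) =
          c * X (xs j) * X (ys i) + (-c) * X (xs i) * X (ys j) := by
            rw [smul_eq_mul]; ring
        rw [this, add_divMonomial, div_mul_X (hyz _), div_mul_X (hxz _), div_mul_X (hyz _),
          div_mul_X (hxz _)]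
        have e : (-c).divMonomial (Finsupp.single z 1) = - c.divMonomial (Finsupp.single z 1) := by
          ext m; simp [coeff_divMonomial]
        rw [e]
        convert Ideal.mul_mem_left _ (c.divMonomial (Finsupp.single z 1))
          (minor_mem xs ys U i j (K := K)) using 1
        ring
      · rw [smul_eq_mul, div_mul_X (by rintro rfl; exact hU hv)]
        exact Ideal.mul_mem_left _ _ (var_mem _ _ _ hv)
  have := key _ h
  rwa [mul_X_divMonomial] at this

end detV
end RegLk

set_option linter.unusedSectionVars false
set_option linter.unusedVariables false
set_option linter.unusedSimpArgs false
namespace RegLk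
open MvPolynomial
section binW
universe u v
variable {σ : Type u} {K : Type v} [Field K] {n : ℕ}

open Classical in
/-- the substitution `z ↦ y` followed by the toric map -/
noncomputable def tau (K : Type v) [Field K] (z y : σ) : MvPolynomial σ K →ₐ[K] MvPolynomial σ K :=
  aeval fun v => if v = z then X y else X v

theorem tau_z (z y : σ) : tau K z y (X z) = X y := by simp [tau]

theorem tau_X {z y v : σ} (h : v ≠ z) : tau K z y (X v) = X v := by simp [tau, h]

theorem sub_tau (z y : σ) (s : MvPolynomial σ K) : s - tau K z y s ∈ Ideal.span {X z - X y} := by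
  have : (Ideal.Quotient.mkₐ K (Ideal.span {X z - X y})).comp (tau K z y) =
      Ideal.Quotient.mkₐ K (Ideal.span {(X z - X y : MvPolynomial σ K)}) := by
    apply algHom_ext
    intro v
    by_cases h : v = z
    · rw [h, AlgHom.comp_apply, tau_z]
      have hm : (X y - X z : MvPolynomial σ K) ∈
          Ideal.span {(X z - X y : MvPolynomial σ K)} :=
        Ideal.mem_span_singleton.2 ⟨-1, by ring⟩
      exact Ideal.Quotient.eq.2 hm
    · rw [AlgHom.comp_apply, tau_X h]
  have h := DFunLike.congr_fun this s
  exact Ideal.Quotient.eq.1 h.symm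

theorem HI_mulsp {P : Ideal (MvPolynomial σ K)} (hP : HI P) {h : MvPolynomial σ K} {d : ℤ}
    (hh : h ∈ Gp σ K d) : HI (P * Ideal.span {h}) := by
  intro p hp j
  obtain ⟨b, hb, hbp⟩ := Ideal.mem_mul_span_singleton.1 hp
  have e : cmp j p = cmp (j - d) b * h := by
    rw [← hbp, mul_comm b h, cmp_mul hh, mul_comm]
  rw [e]
  exact Ideal.mul_mem_mul (hP b hb (j - d)) (Ideal.mem_span_singleton_self h)

section
variable (xs ys : Fin n → σ) (z : σ) (hd : ∀ i j, xs i ≠ ys j)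
    (hinj : Function.Injective xs) (hinj' : Function.Injective ys)
    (hxz : ∀ i, xs i ≠ z) (hyz : ∀ i, ys i ≠ z)
    (hall : ∀ w : σ, (∃ i, w = xs i) ∨ (∃ i, w = ys i) ∨ w = z)
    (κ l : Fin n) (hkl : κ ≠ l)

include hd hinj hinj' hxz hyz hall in
theorem I2_iff {w : σ → (Fin n ⊕ Fin 3 →₀ ℕ)} (hw : Wt xs ys z w) (s : MvPolynomial σ K) :
    s ∈ Jd K xs ys ∅ ↔ theta K w ∅ s = 0 :=
  ⟨theta_zero xs ys z hw ∅ (by simp) s, theta_ker xs ys z hd hall hw ∅ s⟩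

include hd hinj hinj' hxz hyz hall in
theorem I2f_iff {w : σ → (Fin n ⊕ Fin 3 →₀ ℕ)} (hw : Wt xs ys z w) (s : MvPolynomial σ K) :
    s ∈ Jd K xs ys ∅ ⊔ Ideal.span {X z - X (ys κ)} ↔
      theta K w ∅ (tau K z (ys κ) s) = 0 := by
  constructor
  · intro hs
    have : Jd K xs ys ∅ ⊔ Ideal.span {X z - X (ys κ)} ≤
        RingHom.ker ((theta K w ∅).comp (tau K z (ys κ))) := by
      refine sup_le ?_ ?_
      · rw [Jd, Ideal.span_le]
        rintro f (⟨i, j, rfl⟩ | ⟨v, hv, rfl⟩)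
        · rw [SetLike.mem_coe, RingHom.mem_ker, AlgHom.comp_apply, map_sub, map_mul, map_mul,
            tau_X (hxz _), tau_X (hyz _), tau_X (hxz _), tau_X (hyz _)]
          exact (I2_iff xs ys z hd hinj hinj' hxz hyz hall hw _).1 (minor_mem _ _ _ _ _)
        · exact absurd hv (Set.notMem_empty _)
      · rw [Ideal.span_singleton_le_iff_mem, RingHom.mem_ker, AlgHom.comp_apply, map_sub, tau_z,
          tau_X (hyz _), sub_self, map_zero]
    exact this hs
  · intro h
    have h1 := (I2_iff xs ys z hd hinj hinj' hxz hyz hall hw _).2 h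
    have h2 := sub_tau z (ys κ) s
    have := Ideal.add_mem (Jd K xs ys ∅ ⊔ Ideal.span {X z - X (ys κ)}) (Ideal.mem_sup_left h1)
      (Ideal.mem_sup_right h2)
    simpa using this

include hd hinj hinj' hxz hyz hall in
theorem I2_nzd (s f : MvPolynomial σ K) (hf : f ∉ Jd K xs ys ∅)
    (h : f * s ∈ Jd K xs ys ∅) : s ∈ Jd K xs ys ∅ := by
  obtain ⟨w, hw⟩ := exists_Wt xs ys z hd hinj hinj' hxz hyz
  rw [I2_iff xs ys z hd hinj hinj' hxz hyz hall hw] at *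
  rw [map_mul] at h
  exact (mul_eq_zero.1 h).resolve_left hf

include hd hinj hinj' hxz hyz hall in
theorem I2f_nzd (s g : MvPolynomial σ K) (hg : tau K z (ys κ) g ∉ Jd K xs ys ∅)
    (h : g * s ∈ Jd K xs ys ∅ ⊔ Ideal.span {X z - X (ys κ)}) :
    s ∈ Jd K xs ys ∅ ⊔ Ideal.span {X z - X (ys κ)} := by
  obtain ⟨w, hw⟩ := exists_Wt xs ys z hd hinj hinj' hxz hyz
  rw [I2f_iff xs ys z hd hinj hinj' hxz hyz hall κ hw] at *
  rw [I2_iff xs ys z hd hinj hinj' hxz hyz hall hw] at hg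
  rw [map_mul, map_mul] at h
  exact (mul_eq_zero.1 h).resolve_left hg

include hd hinj hinj' hxz hyz hall in
theorem linear_notMem {w : σ → (Fin n ⊕ Fin 3 →₀ ℕ)} (hw : Wt xs ys z w) {a b : σ}
    (hab : w a ≠ w b) : (X a - X b : MvPolynomial σ K) ∉ Jd K xs ys ∅ := by
  intro h
  rw [I2_iff xs ys z hd hinj hinj' hxz hyz hall hw, map_sub, theta_X (Set.notMem_empty _),
    theta_X (Set.notMem_empty _), sub_eq_zero] at h
  exact hab (monomial_left_injective (one_ne_zero (α := K)) h)

/-- the ideal -/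
noncomputable def Ib (K : Type v) [Field K] : Ideal (MvPolynomial σ K) :=
  Jd K xs ys ∅ ⊔ Ideal.span (X '' (xs '' {j | κ < j})) * Ideal.span {X z - X (ys κ)} ⊔
    Ideal.span (X '' (ys '' {j | j ≤ κ})) * Ideal.span {X z - X (xs l)}

end
end binW
end RegLk

set_option linter.unusedSectionVars false
set_option linter.unusedVariables false
set_option linter.unusedSimpArgs false
namespace RegLk
open MvPolynomial
section absY
universe u v
variable {R : Type u} [CommRing R] (I2 P1 P2 : Ideal R) (f g h : R)

theorem mem3 {A B C : Ideal R} {s : R} : s ∈ A ⊔ B ⊔ C ↔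
    ∃ a ∈ A, ∃ b ∈ B, ∃ c ∈ C, a + b + c = s := by
  constructor
  · intro hs
    obtain ⟨x, hx, c, hc, rfl⟩ := Submodule.mem_sup.1 hs
    obtain ⟨a, ha, b, hb, rfl⟩ := Submodule.mem_sup.1 hx
    exact ⟨a, ha, b, hb, c, hc, rfl⟩
  · rintro ⟨a, ha, b, hb, c, hc, rfl⟩
    exact Ideal.add_mem _ (Ideal.mem_sup_left (Ideal.add_mem _ (Ideal.mem_sup_left ha)
      (Ideal.mem_sup_right hb))) (Ideal.mem_sup_right hc)

theorem mem_ms {P : Ideal R} {x y : R} : x ∈ P * Ideal.span {y} ↔ ∃ b ∈ P, b * y = x :=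
  Ideal.mem_mul_span_singleton

theorem mem_s1 {x y : R} : x ∈ Ideal.span {y} ↔ ∃ b, b * y = x := Ideal.mem_span_singleton'

theorem colonA (hg : g = f + h) (h1 : ∀ s, f * s ∈ I2 → s ∈ I2)
    (h2 : ∀ s, h * s ∈ I2 ⊔ Ideal.span {f} → s ∈ I2 ⊔ Ideal.span {f})
    (h3 : ∀ s, f * s ∈ I2 ⊔ P2 → s ∈ I2 ⊔ P2) (s : R) :
    s ∈ I2 ⊔ P1 ⊔ P2 * Ideal.span {g} ↔
      f * s ∈ I2 ⊔ P1 * Ideal.span {f} ⊔ P2 * Ideal.span {g} := by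
  constructor
  · intro hs
    obtain ⟨a, ha, b, hb, c, hc, rfl⟩ := mem3.1 hs
    exact mem3.2 ⟨f * a, I2.mul_mem_left _ ha, b * f, mem_ms.2 ⟨b, hb, rfl⟩, f * c,
      Ideal.mul_mem_left _ _ hc, by ring⟩
  · intro hs
    obtain ⟨i, hi, a', ha', b', hb', e⟩ := mem3.1 hs
    obtain ⟨a, ha, rfl⟩ := mem_ms.1 ha'
    obtain ⟨b, hb, rfl⟩ := mem_ms.1 hb'
    have hb2 : b ∈ I2 ⊔ Ideal.span {f} := by
      apply h2
      refine Submodule.mem_sup.2 ⟨-i, I2.neg_mem hi, (s - a - b) * f, mem_s1.2 ⟨_, rfl⟩, ?_⟩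
      subst hg
      linear_combination -e
    obtain ⟨i', hi', cf, hcf, e2⟩ := Submodule.mem_sup.1 hb2
    obtain ⟨c, rfl⟩ := mem_s1.1 hcf
    have hc : c ∈ I2 ⊔ P2 := by
      apply h3
      refine Submodule.mem_sup.2 ⟨-i', I2.neg_mem hi', b, hb, ?_⟩
      linear_combination -e2
    obtain ⟨i'', hi'', p, hp, rfl⟩ := Submodule.mem_sup.1 hc
    have hs1 : s - a - (i'' + p) * g ∈ I2 := by
      apply h1
      have : f * (s - a - (i'' + p) * g) = i + i' * g := by
        linear_combination -e - g * e2
      rw [this]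
      exact I2.add_mem hi (I2.mul_mem_right _ hi')
    exact mem3.2 ⟨s - a - (i'' + p) * g + i'' * g, I2.add_mem hs1 (I2.mul_mem_right _ hi''), a, ha,
      p * g, mem_ms.2 ⟨p, hp, rfl⟩, by ring⟩

theorem sumA (hg : g = f + h) : I2 ⊔ Ideal.span {f} ⊔ P2 * Ideal.span {h} =
    I2 ⊔ P1 * Ideal.span {f} ⊔ P2 * Ideal.span {g} ⊔ Ideal.span {f} := by
  apply le_antisymm
  · intro s hs
    obtain ⟨a, ha, b, hb, c, hc, rfl⟩ := mem3.1 hs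
    obtain ⟨p, hp, rfl⟩ := mem_ms.1 hc
    obtain ⟨q, rfl⟩ := mem_s1.1 hb
    exact mem3.2 ⟨a, Ideal.mem_sup_left ha, p * g, mem_ms.2 ⟨p, hp, rfl⟩,
      (q - p) * f, mem_s1.2 ⟨_, rfl⟩, by subst hg; ring⟩
  · refine sup_le (sup_le (sup_le (le_sup_left.trans le_sup_left) ?_) ?_)
      (le_sup_right.trans le_sup_left)
    · exact (Ideal.mul_le_right).trans (le_sup_right.trans le_sup_left)
    · intro s hs
      obtain ⟨p, hp, rfl⟩ := mem_ms.1 hs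
      exact mem3.2 ⟨0, I2.zero_mem, p * f, mem_s1.2 ⟨_, rfl⟩, p * h, mem_ms.2 ⟨p, hp, rfl⟩,
        by subst hg; ring⟩

/-- used twice -/
theorem colonC (A : Ideal R) (h4 : ∀ s, g * s ∈ A → s ∈ A) (s : R) :
    s ∈ A ⊔ P2 ↔ g * s ∈ A ⊔ P2 * Ideal.span {g} := by
  constructor
  · intro hs
    obtain ⟨a, ha, p, hp, rfl⟩ := Submodule.mem_sup.1 hs
    exact Submodule.mem_sup.2 ⟨g * a, A.mul_mem_left _ ha, p * g, mem_ms.2 ⟨p, hp, rfl⟩, by ring⟩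
  · intro hs
    obtain ⟨a, ha, b, hb, e⟩ := Submodule.mem_sup.1 hs
    obtain ⟨p, hp, rfl⟩ := mem_ms.1 hb
    have : s - p ∈ A := by
      apply h4
      have : g * (s - p) = a := by linear_combination -e
      rwa [this]
    exact Submodule.mem_sup.2 ⟨s - p, this, p, hp, by ring⟩

theorem sumC (A : Ideal R) : A ⊔ Ideal.span {g} = A ⊔ P2 * Ideal.span {g} ⊔ Ideal.span {g} := by
  rw [sup_assoc, sup_eq_right.2 (Ideal.mul_le_right (I := P2) (J := Ideal.span {g}))]

end absY

section binY
universe u v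
variable {σ : Type u} {K : Type v} [Field K] {n : ℕ}

/-- adding a nonzerodivisor -/
theorem R2n {I : Ideal (MvPolynomial σ K)} (f : MvPolynomial σ K) {r : ℤ}
    (hf : f ∈ Gp σ K 1) (hI : HI I) (hJ : ∀ s, f * s ∈ I → s ∈ I) (h1 : Rc I r) :
    Rc (I ⊔ Ideal.span {f}) r :=
  R2 f 1 hf hI (J := I) (fun s => ⟨fun h => I.mul_mem_left _ h, hJ s⟩) rfl h1
    (by simpa using h1)

theorem Rc_Ib [Finite σ] (xs ys : Fin n → σ) (z : σ) (hd : ∀ i j, xs i ≠ ys j)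
    (hinj : Function.Injective xs) (hinj' : Function.Injective ys)
    (hxz : ∀ i, xs i ≠ z) (hyz : ∀ i, ys i ≠ z)
    (hall : ∀ w : σ, (∃ i, w = xs i) ∨ (∃ i, w = ys i) ∨ w = z)
    (κ l : Fin n) (hkl : κ < l) :
    HI (Ib xs ys z κ l K) ∧ Rc (Ib xs ys z κ l K) 3 := by
  obtain ⟨w, hw⟩ := exists_Wt xs ys z hd hinj hinj' hxz hyz
  have hJ : ∀ U, Rc (Jd K xs ys U) 1 := fun U =>
    Rc_Jd xs ys z hd hinj hinj' hxz hyz hall _ U rfl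
  have hH := fun U => HI_Jd (K := K) xs ys U
  have gf : ∀ a b : σ, (X a - X b : MvPolynomial σ K) ∈ Gp σ K 1 := fun a b =>
    AddSubgroup.sub_mem _ (X_mem_Gp _) (X_mem_Gp _)
  set U1 : Set σ := xs '' {j | κ < j} with hU1
  set U2 : Set σ := ys '' {j | j ≤ κ} with hU2
  have z1 : z ∉ U1 := by rintro ⟨j, _, h⟩; exact hxz _ h
  have z2 : z ∉ U2 := by rintro ⟨j, _, h⟩; exact hyz _ h
  have e1 : Jd K xs ys ∅ ⊔ Ideal.span (X '' U1) = Jd K xs ys U1 := by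
    rw [← Jd_union, Set.empty_union]
  have e2 : Jd K xs ys ∅ ⊔ Ideal.span (X '' U2) = Jd K xs ys U2 := by
    rw [← Jd_union, Set.empty_union]
  have hg : (X z - X (xs l) : MvPolynomial σ K) = (X z - X (ys κ)) + (X (ys κ) - X (xs l)) := by
    ring
  have hzU : ∀ (U : Set σ) (v : σ), z ∉ U → v ∈ U → ∀ s : MvPolynomial σ K,
      (X z - X v) * s ∈ Jd K xs ys U → s ∈ Jd K xs ys U := by
    intro U v hz hv s hs
    refine Jd_z xs ys z hxz hyz U hz ?_
    have := Ideal.add_mem _ hs (Ideal.mul_mem_left _ s (var_mem xs ys U hv))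
    convert this using 1; ring
  have wf : w z ≠ w (ys κ) := by
    rw [hw.z, hw.y]; intro h
    simpa using DFunLike.congr_fun h (Sum.inr 1)
  have wh : w (ys κ) ≠ w (xs l) := by
    rw [hw.x, hw.y]; intro h
    simpa using DFunLike.congr_fun h (Sum.inr 1)
  have n1 : ∀ s, (X z - X (ys κ)) * s ∈ Jd K xs ys ∅ → s ∈ Jd K xs ys ∅ := fun s =>
    I2_nzd xs ys z hd hinj hinj' hxz hyz hall s _
      (linear_notMem xs ys z hd hinj hinj' hxz hyz hall hw wf)
  have n2 : ∀ s, (X (ys κ) - X (xs l)) * s ∈ Jd K xs ys ∅ ⊔ Ideal.span {X z - X (ys κ)} →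
      s ∈ Jd K xs ys ∅ ⊔ Ideal.span {X z - X (ys κ)} := fun s =>
    I2f_nzd xs ys z hd hinj hinj' hxz hyz hall κ s _ (by
      rw [map_sub, tau_X (hyz _), tau_X (hxz _)]
      exact linear_notMem xs ys z hd hinj hinj' hxz hyz hall hw wh)
  have n3 : ∀ s, (X z - X (ys κ)) * s ∈ Jd K xs ys ∅ ⊔ Ideal.span (X '' U2) →
      s ∈ Jd K xs ys ∅ ⊔ Ideal.span (X '' U2) := by
    rw [e2]; exact hzU U2 _ z2 ⟨κ, le_refl κ, rfl⟩
  have n4 : ∀ s, (X z - X (xs l)) * s ∈ Jd K xs ys ∅ ⊔ Ideal.span (X '' U1) →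
      s ∈ Jd K xs ys ∅ ⊔ Ideal.span (X '' U1) := by
    rw [e1]; exact hzU U1 _ z1 ⟨l, hkl, rfl⟩
  have HIb : HI (Ib xs ys z κ l K) :=
    HI_sup (HI_sup (hH _) (HI_mulsp (HI_XS _) (gf _ _))) (HI_mulsp (HI_XS _) (gf _ _))
  refine ⟨HIb, ?_⟩
  refine R1 (X z - X (ys κ)) 1 (gf _ _) HIb
    (colonA _ _ _ _ _ _ hg n1 n2 n3) (sumA _ _ _ _ _ _ hg) ?_ ?_
  · refine R1 (X z - X (xs l)) 1 (gf _ _)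
      (HI_sup (HI_sup (hH _) (HI_XS _)) (HI_mulsp (HI_XS _) (gf _ _)))
      (colonC _ _ _ n4) (sumC _ _ _) ?_ ?_
    · rw [e1, ← Jd_union]
      exact hJ _
    · refine R2n _ (gf _ _) (HI_sup (hH _) (HI_XS _)) n4 ?_
      rw [e1]; exact Rc_mono (by norm_num) (hJ _)
  · refine R1 (X (ys κ) - X (xs l)) 1 (gf _ _)
      (HI_sup (HI_sup (hH _) (HI_single (gf _ _))) (HI_mulsp (HI_XS _) (gf _ _)))
      (colonC _ _ _ n2) (sumC _ _ _) ?_ ?_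
    · rw [sup_right_comm]
      refine R2n _ (gf _ _) (HI_sup (hH _) (HI_XS _)) n3 ?_
      rw [e2]; exact Rc_mono (by norm_num) (hJ _)
    · refine R2n _ (gf _ _) (HI_sup (hH _) (HI_single (gf _ _))) n2 ?_
      exact R2n _ (gf _ _) (hH _) n1 (Rc_mono (by norm_num) (hJ _))

end binY
end RegLk

set_option linter.unusedSectionVars false
set_option linter.unusedVariables false
set_option linter.unusedSimpArgs false
namespace RegLk
open MvPolynomial
section finZ
universe u v t
variable {σ : Type u} {K : Type v} [Field K] {n : ℕ}

/-- data of the weights used for the lower bound -/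
structure W5 {T : Type t} [CommRing T] (xs ys : Fin n → σ) (z : σ) (κ l : Fin n) (p q a : T)
    (wt : σ → T) : Prop where
  xk : wt (xs κ) = a
  xl : wt (xs l) = p
  yk : wt (ys κ) = q
  yl : wt (ys l) = a
  z : wt z = p + q
  x0 : ∀ i, i ≠ κ → i ≠ l → wt (xs i) = 0
  y0 : ∀ i, i ≠ κ → i ≠ l → wt (ys i) = 0

open Classical in
theorem exists_W5 {T : Type t} [CommRing T] (xs ys : Fin n → σ) (z : σ)
    (hd : ∀ i j, xs i ≠ ys j)
    (hinj : Function.Injective xs) (hinj' : Function.Injective ys)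
    (hxz : ∀ i, xs i ≠ z) (hyz : ∀ i, ys i ≠ z) (κ l : Fin n) (hkl : κ < l) (p q a : T) :
    ∃ wt, W5 xs ys z κ l p q a wt := by
  have hne := hkl.ne
  have hne' := hkl.ne'
  let wt : σ → T := Function.extend xs (fun j => if j = κ then a else if j = l then p else 0)
    (Function.extend ys (fun j => if j = κ then q else if j = l then a else 0)
      (fun _ => p + q))
  have hx : ∀ j, wt (xs j) = if j = κ then a else if j = l then p else 0 := fun j =>
    hinj.extend_apply _ _ _
  have hy : ∀ j, wt (ys j) = if j = κ then q else if j = l then a else 0 := by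
    intro j
    show Function.extend xs _ _ (ys j) = _
    rw [Function.extend_apply' _ _ _ (by rintro ⟨i, hi⟩; exact hd _ _ hi), hinj'.extend_apply]
  have hz : wt z = p + q := by
    show Function.extend xs _ _ z = _
    rw [Function.extend_apply' _ _ _ (by rintro ⟨i, hi⟩; exact hxz _ hi),
      Function.extend_apply' _ _ _ (by rintro ⟨i, hi⟩; exact hyz _ hi)]
  refine ⟨wt, ?_, ?_, ?_, ?_, hz, ?_, ?_⟩
  · rw [hx, if_pos rfl]
  · rw [hx, if_neg hne', if_pos rfl]
  · rw [hy, if_pos rfl]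
  · rw [hy, if_neg hne', if_pos rfl]
  · intro i h1 h2; rw [hx, if_neg h1, if_neg h2]
  · intro i h1 h2; rw [hy, if_neg h1, if_neg h2]

theorem span3 {T : Type t} [CommRing T] {a b c x : T} (h : x ∈ Ideal.span {a, b, c}) :
    ∃ u v w, x = a * u + b * v + c * w := by
  obtain ⟨u, y, hy, rfl⟩ := Ideal.mem_span_insert.1 h
  obtain ⟨v, y', hy', rfl⟩ := Ideal.mem_span_insert.1 hy
  obtain ⟨w, rfl⟩ := Ideal.mem_span_singleton'.1 hy'
  exact ⟨u, v, w, by ring⟩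

theorem span3' {T : Type t} [CommRing T] {a b c x : T} (u v w : T)
    (h : x = a * u + b * v + c * w) : x ∈ Ideal.span {a, b, c} := by
  rw [h]
  refine Ideal.add_mem _ (Ideal.add_mem _ ?_ ?_) ?_
  · exact Ideal.mul_mem_right _ _ (Ideal.subset_span (by simp))
  · exact Ideal.mul_mem_right _ _ (Ideal.subset_span (by simp))
  · exact Ideal.mul_mem_right _ _ (Ideal.subset_span (by simp))

theorem hJ_I {T : Type t} [CommRing T] [Algebra K T] {xs ys : Fin n → σ} {z : σ}
    {κ l : Fin n} (hkl : κ < l) {p q a : T} {wt : σ → T} (hw : W5 xs ys z κ l p q a wt) :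
    ∀ P ∈ Ib xs ys z κ l K, ∃ u v w, aeval wt P =
      p ^ 2 * u + q ^ 2 * v + (a ^ 2 - p * q) * w := by
  have main : Ib xs ys z κ l K ≤
      (Ideal.span {p ^ 2, q ^ 2, a ^ 2 - p * q}).comap (aeval wt : MvPolynomial σ K →ₐ[K] T) := by
    have hne := hkl.ne
    have hne' := hkl.ne'
    unfold Ib
    refine sup_le (sup_le ?_ ?_) ?_
    · rw [Jd, Ideal.span_le]
      rintro f (⟨i, j, rfl⟩ | ⟨v, hv, rfl⟩)
      · rw [SetLike.mem_coe, Ideal.mem_comap]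
        simp only [map_sub, map_mul, aeval_X]
        by_cases hi : i = κ
        · by_cases hj : j = l
          · subst hi hj
            rw [hw.xk, hw.xl, hw.yk, hw.yl]
            exact span3' 0 0 (-1) (by ring)
          · by_cases hj' : j = κ
            · rw [hi, hj', sub_self]; exact Ideal.zero_mem _
            · rw [hw.x0 j hj' hj, hw.y0 j hj' hj]; simp
        · by_cases hi' : i = l
          · by_cases hj : j = κ
            · subst hi' hj
              rw [hw.xk, hw.xl, hw.yk, hw.yl]
              exact span3' 0 0 1 (by ring)
            · by_cases hj' : j = l
              · rw [hi', hj', sub_self]; exact Ideal.zero_mem _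
              · rw [hw.x0 j hj hj', hw.y0 j hj hj']; simp
          · rw [hw.x0 i hi hi', hw.y0 i hi hi']; simp
      · exact absurd hv (Set.notMem_empty _)
    · rw [Ideal.span_mul_span', Ideal.span_le]
      rintro _ ⟨_, ⟨v, ⟨j, hj, rfl⟩, rfl⟩, _, rfl, rfl⟩
      rw [SetLike.mem_coe, Ideal.mem_comap]
      simp only [map_sub, map_mul, aeval_X]
      have hj' : j ≠ κ := fun h => (h ▸ hj : κ < κ).false
      by_cases h : j = l
      · rw [h, hw.xl, hw.yk, hw.z]
        exact span3' 1 0 0 (by ring)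
      · rw [hw.x0 j hj' h]; simp
    · rw [Ideal.span_mul_span', Ideal.span_le]
      rintro _ ⟨_, ⟨v, ⟨j, hj, rfl⟩, rfl⟩, _, rfl, rfl⟩
      rw [SetLike.mem_coe, Ideal.mem_comap]
      simp only [map_sub, map_mul, aeval_X]
      have hj' : j ≠ l := fun h => absurd (h ▸ hj : l ≤ κ) (not_le.2 hkl)
      by_cases h : j = κ
      · rw [h, hw.xl, hw.yk, hw.z]
        exact span3' 0 1 0 (by ring)
      · rw [hw.y0 j h hj']; simp
  intro P hP
  exact span3 (main hP)

theorem hJ_M {T : Type t} [CommRing T] [Algebra K T] {xs ys : Fin n → σ} {z : σ}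
    {κ l : Fin n} {k : ℕ} (hκ : (κ : ℕ) + 1 = k) (hl : (l : ℕ) = k)
    {p q a : T} {wt : σ → T} (hw : W5 xs ys z κ l p q a wt) :
    ∀ P ∈ Ideal.span
        ({f | ∃ i j : Fin n, i < j ∧ f = (X (xs j) * X (ys i) : MvPolynomial σ K)} ∪
          {f | ∃ i : Fin n, (i : ℕ) + 1 < k ∧ f = X (xs i) * X (ys l)} ∪
          {f | ∃ j : Fin n, k ≤ (j : ℕ) ∧ f = X (xs κ) * X (ys j)} ∪
          {f | ∃ i j : Fin n, (i : ℕ) + 1 < k ∧ k < (j : ℕ) ∧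
            f = X (xs i) * X (xs l) * X (ys j)} ∪
          {f | ∃ i j : Fin n, (i : ℕ) + 1 < k ∧ k < (j : ℕ) ∧
            f = X (xs i) * X (ys κ) * X (ys j)} ∪
          {f | ∃ i : Fin n, (i : ℕ) < k ∧ f = X (ys i) * X (ys κ) * X z} ∪
          {X (xs l) * X z}), ∃ u v w, aeval wt P = p ^ 1 * u + q ^ 3 * v + a ^ 2 * w := by
  have main : Ideal.span
        ({f | ∃ i j : Fin n, i < j ∧ f = (X (xs j) * X (ys i) : MvPolynomial σ K)} ∪
          {f | ∃ i : Fin n, (i : ℕ) + 1 < k ∧ f = X (xs i) * X (ys l)} ∪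
          {f | ∃ j : Fin n, k ≤ (j : ℕ) ∧ f = X (xs κ) * X (ys j)} ∪
          {f | ∃ i j : Fin n, (i : ℕ) + 1 < k ∧ k < (j : ℕ) ∧
            f = X (xs i) * X (xs l) * X (ys j)} ∪
          {f | ∃ i j : Fin n, (i : ℕ) + 1 < k ∧ k < (j : ℕ) ∧
            f = X (xs i) * X (ys κ) * X (ys j)} ∪
          {f | ∃ i : Fin n, (i : ℕ) < k ∧ f = X (ys i) * X (ys κ) * X z} ∪
          {X (xs l) * X z}) ≤
      (Ideal.span {p ^ 1, q ^ 3, a ^ 2}).comap (aeval wt : MvPolynomial σ K →ₐ[K] T) := by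
    have x0 : ∀ i : Fin n, (i : ℕ) ≠ κ → (i : ℕ) ≠ l → wt (xs i) = 0 := fun i h1 h2 =>
      hw.x0 i (fun h => h1 (congrArg _ h)) (fun h => h2 (congrArg _ h))
    have y0 : ∀ i : Fin n, (i : ℕ) ≠ κ → (i : ℕ) ≠ l → wt (ys i) = 0 := fun i h1 h2 =>
      hw.y0 i (fun h => h1 (congrArg _ h)) (fun h => h2 (congrArg _ h))
    rw [Ideal.span_le]
    rintro f ((((((⟨i, j, h, rfl⟩ | ⟨i, h, rfl⟩) | ⟨j, h, rfl⟩) | ⟨i, j, h, h', rfl⟩) |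
      ⟨i, j, h, h', rfl⟩) | ⟨i, h, rfl⟩) | h)
    · rw [SetLike.mem_coe, Ideal.mem_comap]
      simp only [map_sub, map_mul, aeval_X]
      rw [Fin.lt_def] at h
      by_cases hj : (j : ℕ) = κ
      · rw [y0 i (by omega) (by omega)]; simp
      by_cases hj' : j = l
      · rw [hj', hw.xl]; exact span3' (wt (ys i)) 0 0 (by ring)
      · rw [x0 j hj (fun h => hj' (Fin.ext h))]; simp
    · rw [SetLike.mem_coe, Ideal.mem_comap]
      simp only [map_sub, map_mul, aeval_X]
      rw [x0 i (by omega) (by omega)]; simp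
    · rw [SetLike.mem_coe, Ideal.mem_comap]
      simp only [map_sub, map_mul, aeval_X]
      by_cases hj : j = l
      · rw [hj, hw.xk, hw.yl]; exact span3' 0 0 1 (by ring)
      · rw [y0 j (by omega) (fun h => hj (Fin.ext h))]; simp
    · rw [SetLike.mem_coe, Ideal.mem_comap]
      simp only [map_sub, map_mul, aeval_X]
      rw [x0 i (by omega) (by omega)]; simp
    · rw [SetLike.mem_coe, Ideal.mem_comap]
      simp only [map_sub, map_mul, aeval_X]
      rw [x0 i (by omega) (by omega)]; simp
    · rw [SetLike.mem_coe, Ideal.mem_comap]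
      simp only [map_sub, map_mul, aeval_X]
      by_cases hj : i = κ
      · rw [hj, hw.yk, hw.z]; exact span3' (q * q) 1 0 (by ring)
      · rw [y0 i (fun h => hj (Fin.ext h)) (by omega)]; simp
    · rw [Set.mem_singleton_iff] at h
      subst h
      rw [SetLike.mem_coe, Ideal.mem_comap]
      simp only [map_sub, map_mul, aeval_X]
      rw [hw.xl]; exact span3' (wt z) 0 0 (by ring)
  intro P hP
  exact span3 (main hP)

theorem ne_top_of {T : Type t} [CommRing T] [Algebra K T] (χ : T →+* K) {I : Ideal (MvPolynomial σ K)}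
    {wt : σ → T} {a b c : T} (ha : χ a = 0) (hb : χ b = 0) (hc : χ c = 0)
    (h : ∀ P ∈ I, ∃ u v w, aeval wt P = a * u + b * v + c * w) : I ≠ ⊤ := by
  rintro rfl
  obtain ⟨u, v, w, e⟩ := h 1 trivial
  have := congrArg χ e
  simp [ha, hb, hc] at this

theorem chi_W5 {T : Type t} [CommRing T] (χ : T →+* K) {xs ys : Fin n → σ} {z : σ}
    (hall : ∀ w : σ, (∃ i, w = xs i) ∨ (∃ i, w = ys i) ∨ w = z)
    {κ l : Fin n} {p q a : T} {wt : σ → T} (hw : W5 xs ys z κ l p q a wt)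
    (hp : χ p = 0) (hq : χ q = 0) (ha : χ a = 0) (v : σ) : χ (wt v) = 0 := by
  rcases hall v with ⟨i, rfl⟩ | ⟨i, rfl⟩ | rfl
  · by_cases h1 : i = κ
    · rw [h1, hw.xk, ha]
    · by_cases h2 : i = l
      · rw [h2, hw.xl, hp]
      · rw [hw.x0 i h1 h2, map_zero]
  · by_cases h1 : i = κ
    · rw [h1, hw.yk, hq]
    · by_cases h2 : i = l
      · rw [h2, hw.yl, ha]
      · rw [hw.y0 i h1 h2, map_zero]
  · rw [hw.z, map_add, hp, hq, add_zero]

theorem RegEq_of {I : Ideal (MvPolynomial σ K)} [Finite σ] (hI : HI I) (h1 : I ≠ ⊤) (hr : Rc I 3)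
    (hb : ∀ F : MinGradedFreeRes K σ I, ∃ b : F.B 3, F.deg 3 b = 6) : RegEq I 3 := by
  refine ⟨exists_res hI h1, fun F => ⟨fun i b => ?_, 3, hb F⟩⟩
  have := upper hI hr F i b
  omega

/-- the join-meet ideal in closed form -/
theorem jm_eq {L : Type u} [Lattice L] (xs ys : Fin n → L) (z : L) (κ l : Fin n) {k : ℕ}
    (hκ : (κ : ℕ) + 1 = k) (hl : (l : ℕ) = k)
    (hxx : ∀ i j : Fin n, xs i ≤ xs j ↔ i ≤ j)
    (hyy : ∀ i j : Fin n, ys i ≤ ys j ↔ i ≤ j)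
    (hxy : ∀ i j : Fin n, xs i ≤ ys j ↔ i ≤ j)
    (hyx : ∀ i j : Fin n, ¬ ys i ≤ xs j)
    (hxz : ∀ i : Fin n, xs i ≤ z ↔ (i : ℕ) < k)
    (hzx : ∀ i : Fin n, ¬ z ≤ xs i)
    (hzy : ∀ i : Fin n, z ≤ ys i ↔ k ≤ (i : ℕ))
    (hyz : ∀ i : Fin n, ¬ ys i ≤ z)
    (hall : ∀ w : L, (∃ i, w = xs i) ∨ (∃ i, w = ys i) ∨ w = z) :
    joinMeetIdeal K L = Ib xs ys z κ l K := by
  have m1 : ∀ i j : Fin n, i < j → xs j ⊓ ys i = xs i := by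
    intro i j h
    refine le_antisymm ?_ (le_inf ((hxx _ _).2 h.le) ((hxy _ _).2 le_rfl))
    have a1 : xs j ⊓ ys i ≤ xs j := inf_le_left
    have a2 : xs j ⊓ ys i ≤ ys i := inf_le_right
    rcases hall (xs j ⊓ ys i) with ⟨m, e⟩ | ⟨m, e⟩ | e
    · rw [e] at a2 ⊢; exact (hxx _ _).2 ((hxy _ _).1 a2)
    · rw [e] at a1; exact absurd a1 (hyx _ _)
    · rw [e] at a1; exact absurd a1 (hzx _)
  have j1 : ∀ i j : Fin n, i < j → xs j ⊔ ys i = ys j := by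
    intro i j h
    refine le_antisymm (sup_le ((hxy _ _).2 le_rfl) ((hyy _ _).2 h.le)) ?_
    have a1 : xs j ≤ xs j ⊔ ys i := le_sup_left
    have a2 : ys i ≤ xs j ⊔ ys i := le_sup_right
    rcases hall (xs j ⊔ ys i) with ⟨m, e⟩ | ⟨m, e⟩ | e
    · rw [e] at a2; exact absurd a2 (hyx _ _)
    · rw [e] at a1 ⊢; exact (hyy _ _).2 ((hxy _ _).1 a1)
    · rw [e] at a2; exact absurd a2 (hyz _)
  have m2 : ∀ j : Fin n, k ≤ (j : ℕ) → xs j ⊓ z = xs κ := by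
    intro j h
    refine le_antisymm ?_ (le_inf ((hxx _ _).2 (by rw [Fin.le_def]; omega))
      ((hxz _).2 (by omega)))
    have a1 : xs j ⊓ z ≤ xs j := inf_le_left
    have a2 : xs j ⊓ z ≤ z := inf_le_right
    rcases hall (xs j ⊓ z) with ⟨m, e⟩ | ⟨m, e⟩ | e
    · rw [e] at a2 ⊢
      have := (hxz _).1 a2
      exact (hxx _ _).2 (by rw [Fin.le_def]; omega)
    · rw [e] at a1; exact absurd a1 (hyx _ _)
    · rw [e] at a1; exact absurd a1 (hzx _)
  have j2 : ∀ j : Fin n, k ≤ (j : ℕ) → xs j ⊔ z = ys j := by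
    intro j h
    refine le_antisymm (sup_le ((hxy _ _).2 le_rfl) ((hzy _).2 h)) ?_
    have a1 : xs j ≤ xs j ⊔ z := le_sup_left
    have a2 : z ≤ xs j ⊔ z := le_sup_right
    rcases hall (xs j ⊔ z) with ⟨m, e⟩ | ⟨m, e⟩ | e
    · rw [e] at a2; exact absurd a2 (hzx _)
    · rw [e] at a1 ⊢; exact (hyy _ _).2 ((hxy _ _).1 a1)
    · rw [e] at a1; have := (hxz _).1 a1; omega
  have m3 : ∀ i : Fin n, (i : ℕ) < k → ys i ⊓ z = xs i := by
    intro i h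
    refine le_antisymm ?_ (le_inf ((hxy _ _).2 le_rfl) ((hxz _).2 h))
    have a1 : ys i ⊓ z ≤ ys i := inf_le_left
    have a2 : ys i ⊓ z ≤ z := inf_le_right
    rcases hall (ys i ⊓ z) with ⟨m, e⟩ | ⟨m, e⟩ | e
    · rw [e] at a1 ⊢; exact (hxx _ _).2 ((hxy _ _).1 a1)
    · rw [e] at a2; exact absurd a2 (hyz _)
    · rw [e] at a1; have := (hzy _).1 a1; omega
  have j3 : ∀ i : Fin n, (i : ℕ) < k → ys i ⊔ z = ys l := by
    intro i h
    refine le_antisymm (sup_le ((hyy _ _).2 (by rw [Fin.le_def]; omega)) ((hzy _).2 hl.ge)) ?_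
    have a1 : ys i ≤ ys i ⊔ z := le_sup_left
    have a2 : z ≤ ys i ⊔ z := le_sup_right
    rcases hall (ys i ⊔ z) with ⟨m, e⟩ | ⟨m, e⟩ | e
    · rw [e] at a1; exact absurd a1 (hyx _ _)
    · rw [e] at a2 ⊢
      have := (hzy _).1 a2
      exact (hyy _ _).2 (by rw [Fin.le_def]; omega)
    · rw [e] at a1; exact absurd a1 (hyz _)
  have hI2 : ∀ i j : Fin n, X (xs j) * X (ys i) - X (xs i) * X (ys j) ∈ Ib xs ys z κ l K :=
    fun i j => Ideal.mem_sup_left (Ideal.mem_sup_left (minor_mem xs ys ∅ i j))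
  have hP1 : ∀ j : Fin n, κ < j → X (xs j) * (X z - X (ys κ)) ∈ Ib xs ys z κ l K :=
    fun j hj => Ideal.mem_sup_left (Ideal.mem_sup_right (Ideal.mul_mem_mul
      (Ideal.subset_span ⟨_, ⟨j, hj, rfl⟩, rfl⟩) (Ideal.mem_span_singleton_self _)))
  have hP2 : ∀ j : Fin n, j ≤ κ → X (ys j) * (X z - X (xs l)) ∈ Ib xs ys z κ l K :=
    fun j hj => Ideal.mem_sup_right (Ideal.mul_mem_mul
      (Ideal.subset_span ⟨_, ⟨j, hj, rfl⟩, rfl⟩) (Ideal.mem_span_singleton_self _))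
  have gz1 : ∀ j : Fin n, k ≤ (j : ℕ) → (X (xs j) * X z - X (xs κ) * X (ys j)) ∈
      Ib xs ys z κ l K := by
    intro j hj
    have := Ideal.add_mem _ (hP1 j (by rw [Fin.lt_def]; omega)) (hI2 κ j)
    convert this using 1; ring
  have gz2 : ∀ i : Fin n, (i : ℕ) < k → (X (ys i) * X z - X (xs i) * X (ys l)) ∈
      Ib xs ys z κ l K := by
    intro i hi
    have := Ideal.add_mem _ (hP2 i (by rw [Fin.le_def]; omega)) (hI2 i l)
    convert this using 1; ring
  apply le_antisymm
  · rw [joinMeetIdeal, Ideal.span_le]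
    rintro f ⟨a, b, hab, hba, rfl⟩
    rw [SetLike.mem_coe]
    rcases hall a with ⟨i, rfl⟩ | ⟨i, rfl⟩ | rfl <;> rcases hall b with ⟨j, rfl⟩ | ⟨j, rfl⟩ | rfl
    · rw [hxx] at hab hba; exact absurd (le_of_not_ge hab) hba
    · rw [hxy, not_le] at hab
      rw [m1 _ _ hab, j1 _ _ hab]; exact hI2 _ _
    · rw [hxz, not_lt] at hab
      rw [m2 _ hab, j2 _ hab]; exact gz1 _ hab
    · rw [hxy, not_le] at hba
      rw [inf_comm, sup_comm, mul_comm, m1 _ _ hba, j1 _ _ hba]; exact hI2 _ _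
    · rw [hyy] at hab hba; exact absurd (le_of_not_ge hab) hba
    · rw [hzy, not_le] at hba
      rw [m3 _ hba, j3 _ hba]; exact gz2 _ hba
    · rw [hxz, not_lt] at hba
      rw [inf_comm, sup_comm, mul_comm, m2 _ hba, j2 _ hba]; exact gz1 _ hba
    · rw [hzy, not_le] at hab
      rw [inf_comm, sup_comm, mul_comm, m3 _ hab, j3 _ hab]; exact gz2 _ hab
    · exact absurd le_rfl hab
  · have gen : ∀ a b : L, ¬ a ≤ b → ¬ b ≤ a → X a * X b - X (a ⊓ b) * X (a ⊔ b) ∈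
        joinMeetIdeal K L := fun a b h1 h2 => Ideal.subset_span ⟨a, b, h1, h2, rfl⟩
    have g1 : ∀ i j : Fin n, i < j →
        X (xs j) * X (ys i) - X (xs i) * X (ys j) ∈ joinMeetIdeal K L := by
      intro i j h
      have := gen (xs j) (ys i) (by rw [hxy]; exact not_le.2 h) (hyx _ _)
      rwa [m1 _ _ h, j1 _ _ h] at this
    have g2 : ∀ i j : Fin n,
        X (xs j) * X (ys i) - X (xs i) * X (ys j) ∈ joinMeetIdeal K L := by
      intro i j
      rcases lt_trichotomy i j with h | h | h
      · exact g1 _ _ h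
      · rw [h, sub_self]; exact Ideal.zero_mem _
      · rw [← neg_sub]; exact (joinMeetIdeal K L).neg_mem (g1 _ _ h)
    unfold Ib
    refine sup_le (sup_le ?_ ?_) ?_
    · rw [Jd, Ideal.span_le]
      rintro f (⟨i, j, rfl⟩ | ⟨v, hv, rfl⟩)
      · exact g2 _ _
      · exact absurd hv (Set.notMem_empty _)
    · rw [Ideal.span_mul_span', Ideal.span_le]
      rintro _ ⟨_, ⟨v, ⟨j, hj, rfl⟩, rfl⟩, _, rfl, rfl⟩
      have hj1 : k ≤ (j : ℕ) := by
        have : κ < j := hj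
        rw [Fin.lt_def] at this; omega
      have := gen (xs j) z (by rw [hxz]; omega) (hzx _)
      rw [m2 _ hj1, j2 _ hj1] at this
      have := Ideal.sub_mem _ this (g2 κ j)
      rw [SetLike.mem_coe]
      convert this using 1; ring
    · rw [Ideal.span_mul_span', Ideal.span_le]
      rintro _ ⟨_, ⟨v, ⟨j, hj, rfl⟩, rfl⟩, _, rfl, rfl⟩
      have hj1 : (j : ℕ) < k := by
        have : j ≤ κ := hj
        rw [Fin.le_def] at this; omega
      have := gen (ys j) z (hyz _) (by rw [hzy]; omega)
      rw [m3 _ hj1, j3 _ hj1] at this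
      have := Ideal.sub_mem _ this (g2 j l)
      rw [SetLike.mem_coe]
      convert this using 1; ring

theorem final {L : Type u} [Lattice L] [Finite L] (xs ys : Fin n → L) (z : L) (κ l : Fin n) {k : ℕ}
    (hκ : (κ : ℕ) + 1 = k) (hl : (l : ℕ) = k)
    (hxx : ∀ i j : Fin n, xs i ≤ xs j ↔ i ≤ j)
    (hyy : ∀ i j : Fin n, ys i ≤ ys j ↔ i ≤ j)
    (hxy : ∀ i j : Fin n, xs i ≤ ys j ↔ i ≤ j)
    (hyx : ∀ i j : Fin n, ¬ ys i ≤ xs j)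
    (hxz : ∀ i : Fin n, xs i ≤ z ↔ (i : ℕ) < k)
    (hzx : ∀ i : Fin n, ¬ z ≤ xs i)
    (hzy : ∀ i : Fin n, z ≤ ys i ↔ k ≤ (i : ℕ))
    (hyz : ∀ i : Fin n, ¬ ys i ≤ z)
    (hall : ∀ w : L, (∃ i, w = xs i) ∨ (∃ i, w = ys i) ∨ w = z) :
    RegEq (joinMeetIdeal K L) 3 ∧ RegEq (Ideal.span
        ({f | ∃ i j : Fin n, i < j ∧ f = (X (xs j) * X (ys i) : MvPolynomial L K)} ∪
          {f | ∃ i : Fin n, (i : ℕ) + 1 < k ∧ f = X (xs i) * X (ys l)} ∪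
          {f | ∃ j : Fin n, k ≤ (j : ℕ) ∧ f = X (xs κ) * X (ys j)} ∪
          {f | ∃ i j : Fin n, (i : ℕ) + 1 < k ∧ k < (j : ℕ) ∧
            f = X (xs i) * X (xs l) * X (ys j)} ∪
          {f | ∃ i j : Fin n, (i : ℕ) + 1 < k ∧ k < (j : ℕ) ∧
            f = X (xs i) * X (ys κ) * X (ys j)} ∪
          {f | ∃ i : Fin n, (i : ℕ) < k ∧ f = X (ys i) * X (ys κ) * X z} ∪
          {X (xs l) * X z})) 3 := by
  have hkl : κ < l := by rw [Fin.lt_def]; omega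
  have nd : ∀ i j, xs i ≠ ys j := fun i j h => hyx j i h.ge
  have nx : ∀ i, xs i ≠ z := fun i h => hzx i h.ge
  have ny : ∀ i, ys i ≠ z := fun i h => hyz i h.le
  have ix : Function.Injective xs := fun i j h =>
    le_antisymm ((hxx _ _).1 h.le) ((hxx _ _).1 h.ge)
  have iy : Function.Injective ys := fun i j h =>
    le_antisymm ((hyy _ _).1 h.le) ((hyy _ _).1 h.ge)
  obtain ⟨wt, hw⟩ := exists_W5 xs ys z nd ix iy nx ny κ l hkl (pp K) (qq K) (aa K)
  have hchi := chi_W5 (chi K) hall hw (chi_pp K) (chi_qq K) (chi_aa K)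
  constructor
  · rw [jm_eq xs ys z κ l hκ hl hxx hyy hxy hyx hxz hzx hzy hyz hall]
    obtain ⟨h1, h2⟩ := Rc_Ib (K := K) xs ys z nd ix iy nx ny hall κ l hkl
    have hJ := hJ_I (K := K) hkl hw
    refine RegEq_of h1 ?_ h2 ?_
    · refine ne_top_of (chi K) ?_ ?_ ?_ hJ
      · rw [map_pow, chi_pp, zero_pow two_ne_zero]
      · rw [map_pow, chi_qq, zero_pow two_ne_zero]
      · rw [map_sub, map_pow, map_mul, chi_pp, chi_aa, zero_pow two_ne_zero, zero_mul, sub_self]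
    · intro F
      have A := LBI' h1 F wt hchi (xs κ) (xs l) (ys κ) (ys l) z hw.xk hw.xl hw.yk hw.yl hw.z
      have hI2 : ∀ i j : Fin n, X (xs j) * X (ys i) - X (xs i) * X (ys j) ∈ Ib xs ys z κ l K :=
        fun i j => Ideal.mem_sup_left (Ideal.mem_sup_left (minor_mem xs ys ∅ i j))
      refine A ?_ ?_ ?_ hJ
      · rw [← mul_sub]
        exact Ideal.mem_sup_left (Ideal.mem_sup_right (Ideal.mul_mem_mul
          (Ideal.subset_span ⟨_, ⟨l, hkl, rfl⟩, rfl⟩) (Ideal.mem_span_singleton_self _)))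
      · rw [mul_comm (X (xs l)), ← mul_sub]
        exact Ideal.mem_sup_right (Ideal.mul_mem_mul
          (Ideal.subset_span ⟨_, ⟨κ, le_refl κ, rfl⟩, rfl⟩) (Ideal.mem_span_singleton_self _))
      · exact hI2 l κ
  · have hJ := hJ_M (K := K) hκ hl hw
    have e := span_eq_MI (K := K) xs ys z nd ix iy nx ny k κ l hκ hl
    have h1 := HI_MI (K := K) (coreU xs ys z κ l)
    have h2 := Rc_coreU (K := K) xs ys z nd ix iy nx ny (κ := κ) (l := l) (by omega)
    have u1 : X (xs κ) * X (ys l) ∈ MI K (coreU xs ys z κ l) := by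
      rw [← e]; exact Ideal.subset_span
        (Or.inl <| Or.inl <| Or.inl <| Or.inl <| Or.inr ⟨l, by omega, rfl⟩)
    have u2 : X (xs l) * X (ys κ) ∈ MI K (coreU xs ys z κ l) := by
      rw [← e]; exact Ideal.subset_span
        (Or.inl <| Or.inl <| Or.inl <| Or.inl <| Or.inl <| Or.inl ⟨κ, l, hkl, rfl⟩)
    have u3 : X (ys κ) * X (ys κ) * X z ∈ MI K (coreU xs ys z κ l) := by
      rw [← e]; exact Ideal.subset_span (Or.inl <| Or.inr ⟨κ, by omega, rfl⟩)
    rw [e] at hJ ⊢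
    refine RegEq_of h1 ?_ h2 ?_
    · refine ne_top_of (chi K) ?_ ?_ ?_ hJ
      · rw [map_pow, chi_pp, zero_pow one_ne_zero]
      · rw [map_pow, chi_qq, zero_pow three_ne_zero]
      · rw [map_pow, chi_aa, zero_pow two_ne_zero]
    · intro F
      have A := LBM' h1 F wt hchi (xs κ) (xs l) (ys κ) (ys l) z hw.xk hw.xl hw.yk hw.yl hw.z
      exact A u1 u2 u3 hJ

end finZ
end RegLk

/-- The lattice `L_k` of the paper: `2n+1` elements `x_1 < ⋯ < x_n`, `y_1 < ⋯ < y_n`, `z`,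
with `x_i ≤ y_j ↔ i ≤ j`, no `y` below any `x`, and `z` satisfying `x_i ≤ z ↔ i ≤ k`,
`z ≤ y_j ↔ j ≥ k+1`, `z` below no `x` and above no `y` (so
`{x_k, x_{k+1}, y_k, z, y_{k+1}}` is a diamond).  Here `xs i = x_{i+1}`, `ys i = y_{i+1}`.
For its join-meet ideal `I = I_{L_k} ⊆ S = K[x_1,…,x_n,y_1,…,y_n,z]` we have
`reg(S/I) = reg(S/in_<(I)) = 3`, where `in_<(I)` is the initial ideal w.r.t. the
lexicographic order induced by `x_1 > ⋯ > x_n > y_1 > ⋯ > y_n > z`, which is generated by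
the explicit monomials below. -/
theorem reg_three_of_Lk (K : Type*) [Field K] (n k : ℕ) (hn : 2 ≤ n)
    (hk1 : 1 ≤ k) (hk2 : k ≤ n - 1)
    (L : Type*) [Lattice L] [Fintype L] (xs ys : Fin n → L) (z : L)
    (hxx : ∀ i j : Fin n, xs i ≤ xs j ↔ i ≤ j)
    (hyy : ∀ i j : Fin n, ys i ≤ ys j ↔ i ≤ j)
    (hxy : ∀ i j : Fin n, xs i ≤ ys j ↔ i ≤ j)
    (hyx : ∀ i j : Fin n, ¬ ys i ≤ xs j)
    (hxz : ∀ i : Fin n, xs i ≤ z ↔ (i : ℕ) < k)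
    (hzx : ∀ i : Fin n, ¬ z ≤ xs i)
    (hzy : ∀ i : Fin n, z ≤ ys i ↔ k ≤ (i : ℕ))
    (hyz : ∀ i : Fin n, ¬ ys i ≤ z)
    (hall : ∀ w : L, (∃ i, w = xs i) ∨ (∃ i, w = ys i) ∨ w = z) :
    RegEq (joinMeetIdeal K L) 3 ∧
      RegEq (Ideal.span
        ({f | ∃ i j : Fin n, i < j ∧ f = (X (xs j) * X (ys i) : MvPolynomial L K)} ∪
          {f | ∃ i : Fin n, (i : ℕ) + 1 < k ∧ f = X (xs i) * X (ys ⟨k, by omega⟩)} ∪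
          {f | ∃ j : Fin n, k ≤ (j : ℕ) ∧ f = X (xs ⟨k - 1, by omega⟩) * X (ys j)} ∪
          {f | ∃ i j : Fin n, (i : ℕ) + 1 < k ∧ k < (j : ℕ) ∧
            f = X (xs i) * X (xs ⟨k, by omega⟩) * X (ys j)} ∪
          {f | ∃ i j : Fin n, (i : ℕ) + 1 < k ∧ k < (j : ℕ) ∧
            f = X (xs i) * X (ys ⟨k - 1, by omega⟩) * X (ys j)} ∪
          {f | ∃ i : Fin n, (i : ℕ) < k ∧ f = X (ys i) * X (ys ⟨k - 1, by omega⟩) * X z} ∪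
          {X (xs ⟨k, by omega⟩) * X z})) 3 := by
  exact RegLk.final xs ys z ⟨k - 1, by omega⟩ ⟨k, by omega⟩
    (by show k - 1 + 1 = k; omega) rfl hxx hyy hxy hyx hxz hzx hzy hyz hall
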